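/- arXiv:2011.01923 — 4 statements merged into one kernel-verified Lean document; each statement's English description precedes it below -/
import Mathlib

section
/- Let F be a field, R a finite-dimensional F-algebra, and N a finitely generated subgroup of the unit group Rˣ. Then N contains no non-cyclic free subgroup if and only if N satisfies a power central group identity, i.e., there exist m ≥ 1 and a nonidentity element w of the free group on generators x_1,...,x_m such that for every (c_1,...,c_m) ∈ N^m there is a positive integer p (depending on the tuple) with w(c_1,...,c_m)^p ∈ Z(R). -/
/-!
If `N` contained a free group on two generators, it would contain free groups of every rank; taking
one generator `x` more than `w` needs, a power of the word `w` would be central in `N`, and yet it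
would not commute with `x`.

The converse follows Tits. Embed `N` into the matrices over a finitely generated domain `A`, and let
`K` be the algebraic closure of its field of fractions. Some subgroup `H` of finite index has a flag
with strongly irreducible layers in every exterior power of `Kⁿ`. If an element `a` of the
commutator subgroup of `H` has an eigenvalue of infinite order, then this eigenvalue does not have
modulus one for some absolute value on `K`. In a suitable exterior power the powers of `a` or `a⁻¹`
are then asymptotic to a rank-one operator, which survives in one of the layers; that layer has
dimension at least two because commutators act trivially on lines. For a suitable `f`, both
`aᵏ f a⁻ᵏ` and its inverse contract towards the same point of projective space, so conjugates of
this element in general position play ping-pong and generate a free group.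

Hence all eigenvalues on commutators of `H` are roots of unity. In characteristic `p` the
commutators themselves have finite order. In characteristic zero they are unipotent on a congruence
subgroup, so by Kolchin's theorem `N` is virtually solvable. In both cases `N` satisfies a
nontrivial word all of whose values have finite order.
-/

namespace TitsAlternative

open Module Filter Topology Asymptotics Polynomial
open scoped commutatorElement

/-! ### Words in free groups -/

section Words

variable {α G : Type*} [Group G]

theorem mk_cons_eq_mk_singleton_mul (l : α × Bool) (L : List (α × Bool)) :
    FreeGroup.mk (l :: L) = FreeGroup.mk [l] * FreeGroup.mk L := by
  rw [FreeGroup.mul_mk, List.singleton_append]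

/-- Unlike in Mathlib's `FreeGroup.injective_lift_of_ping_pong`, a letter need only play well on the
sets `D l'`, not on the whole complement of its repelling set. -/
theorem lift_injective_of_letter_ping_pong {X : Type*} [MulAction G X] (g : α → G)
    (D : α × Bool → Set X) (x₀ : X) (notMem : ∀ l, x₀ ∉ D l)
    (base : ∀ l, FreeGroup.lift g (FreeGroup.mk [l]) • x₀ ∈ D l)
    (step : ∀ l l' : α × Bool, l' ≠ (l.1, !l.2) → ∀ x ∈ D l',
      FreeGroup.lift g (FreeGroup.mk [l]) • x ∈ D l) :
    Function.Injective (FreeGroup.lift g) := by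
  classical
  have reduced_smul_mem : ∀ (L : List (α × Bool)) (l : α × Bool), FreeGroup.IsReduced (l :: L) →
      FreeGroup.lift g (FreeGroup.mk (l :: L)) • x₀ ∈ D l := by
    intro L
    induction L with
    | nil => exact fun l _ ↦ base l
    | cons l' L ih =>
      intro l hl
      obtain ⟨no_cancel, hl'⟩ := List.isChain_cons_cons.1 hl
      have hne : l' ≠ (l.1, !l.2) := by
        rintro rfl
        simp at no_cancel
      rw [mk_cons_eq_mk_singleton_mul, map_mul, mul_smul]
      exact step l l' hne _ (ih l' hl')
  refine (injective_iff_map_eq_one _).2 fun w hw ↦ by_contra fun hne ↦ ?_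
  obtain ⟨l, L, hL⟩ := List.exists_cons_of_ne_nil (mt FreeGroup.toWord_eq_nil_iff.1 hne)
  have hmem := reduced_smul_mem L l (hL ▸ FreeGroup.isReduced_toWord)
  rw [← hL, FreeGroup.mk_toWord, hw, one_smul] at hmem
  exact notMem l hmem

theorem mk_singleton_pow_succ_mul_mem_startsWith [DecidableEq α] (l : α × Bool) (n : ℕ)
    {x : FreeGroup α} (hx : x ∉ FreeGroup.startsWith (l.1, !l.2)) :
    FreeGroup.mk [l] ^ (n + 1) * x ∈ FreeGroup.startsWith l := by
  induction n with
  | zero => simpa using FreeGroup.startsWith_mk_mul x hx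
  | succ n ih =>
    rw [pow_succ', mul_assoc]
    refine FreeGroup.startsWith_mk_mul _ fun h ↦ ?_
    exact Set.disjoint_left.1 (FreeGroup.startsWith.disjoint_iff_ne.2 (by simp [Prod.ext_iff])) ih h

theorem lift_of_pow_injective {M : ℕ} (hM : 0 < M) :
    Function.Injective (FreeGroup.lift fun i : α ↦ FreeGroup.of i ^ M) := by
  classical
  obtain ⟨n, rfl⟩ := Nat.exists_eq_add_of_le' hM
  have letter_pow (l : α × Bool) :
      FreeGroup.lift (fun i : α ↦ FreeGroup.of i ^ (n + 1)) (FreeGroup.mk [l]) =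
        FreeGroup.mk [l] ^ (n + 1) := by
    obtain ⟨a, _ | _⟩ := l <;> simp [FreeGroup.of, FreeGroup.inv_mk, FreeGroup.invRev]
  refine lift_injective_of_letter_ping_pong _ FreeGroup.startsWith 1
    (fun l h ↦ FreeGroup.startsWith.ne_one _ h rfl) (fun l ↦ ?_) fun l l' hne x hx ↦ ?_
  · rw [letter_pow, smul_eq_mul]
    exact mk_singleton_pow_succ_mul_mem_startsWith l n fun h ↦ FreeGroup.startsWith.ne_one _ h rfl
  · rw [letter_pow, smul_eq_mul]
    refine mk_singleton_pow_succ_mul_mem_startsWith l n fun h ↦ ?_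
    exact Set.disjoint_left.1 (FreeGroup.startsWith.disjoint_iff_ne.2 hne) hx h

theorem map_lift {H : Type*} [Group H] (f : G →* H) (c : α → G) (w : FreeGroup α) :
    f (FreeGroup.lift c w) = FreeGroup.lift (fun i ↦ f (c i)) w := by
  have : f.comp (FreeGroup.lift c) = FreeGroup.lift fun i ↦ f (c i) := by ext i; simp
  exact DFunLike.congr_fun this w

/-- The action of `ℤ` on the free group on `ℤ` by translating the generators. -/
def shiftHom : Multiplicative ℤ →* MulAut (FreeGroup ℤ) where
  toFun n := FreeGroup.freeGroupCongr (Equiv.addLeft n.toAdd)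
  map_one' := MulEquiv.toMonoidHom_injective (by ext; simp)
  map_mul' a b := MulEquiv.toMonoidHom_injective (by ext; simp [add_assoc])

/-- The conjugates `xⁱ y x⁻ⁱ` are free generators, as they are in the semidirect product
`FreeGroup ℤ ⋊ ℤ`, a quotient of the free group on `x` and `y`. -/
theorem exists_freeGroup_int_hom_injective :
    ∃ j : FreeGroup ℤ →* FreeGroup (Fin 2), Function.Injective j := by
  let j : FreeGroup ℤ →* FreeGroup (Fin 2) :=
    FreeGroup.lift fun i ↦ FreeGroup.of 0 ^ i * FreeGroup.of 1 * (FreeGroup.of 0 ^ i)⁻¹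
  let s : FreeGroup (Fin 2) →* FreeGroup ℤ ⋊[shiftHom] Multiplicative ℤ :=
    FreeGroup.lift ![SemidirectProduct.inr (Multiplicative.ofAdd 1),
      SemidirectProduct.inl (FreeGroup.of 0)]
  have s_comp_j : s.comp j = SemidirectProduct.inl := by
    refine FreeGroup.ext_hom _ _ fun i ↦ ?_
    simp only [MonoidHom.coe_comp, Function.comp_apply, j, s, FreeGroup.lift_apply_of, map_mul,
      map_zpow, map_inv, Matrix.cons_val_zero, Matrix.cons_val_one]
    rw [← map_zpow, ← map_inv, ← SemidirectProduct.inl_aut]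
    simp [shiftHom, ← ofAdd_zsmul]
  refine ⟨j, Function.Injective.of_comp (f := s) ?_⟩
  rw [← MonoidHom.coe_comp, s_comp_j]
  exact SemidirectProduct.inl_injective

/-- Let `none` act on `FreeGroup α` by swapping `1` and `v`, and `some a` by translation by `a`:
if the two sides were equal, then evaluating at `1` would give `v ^ 2 = 1`. -/
theorem of_none_mul_map_some_ne {v : FreeGroup α} (hv : v ≠ 1) :
    FreeGroup.of (none : Option α) * FreeGroup.map some v ≠
      FreeGroup.map some v * FreeGroup.of none := by
  classical
  intro h
  let translate : FreeGroup α →* Equiv.Perm (FreeGroup α) := MulAction.toPermHom _ _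
  let θ : FreeGroup (Option α) →* Equiv.Perm (FreeGroup α) :=
    FreeGroup.lift fun o ↦ o.elim (Equiv.swap 1 v) fun a ↦ translate (FreeGroup.of a)
  have θ_none : θ (FreeGroup.of none) = Equiv.swap 1 v := by simp [θ]
  have θ_map_some : θ (FreeGroup.map some v) = translate v := by
    have : θ.comp (FreeGroup.map some) = translate := by ext; simp [θ]
    exact DFunLike.congr_fun this v
  have eval_at_one := DFunLike.congr_fun (congrArg θ h) 1
  rw [map_mul, map_mul, θ_none, θ_map_some] at eval_at_one
  have sq_eq_one : 1 = v * v := by simpa [translate] using eval_at_one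
  exact hv ((pow_eq_one_iff.1 ((pow_two v).trans sq_eq_one.symm)).resolve_right two_ne_zero)

theorem exists_freeGroup_option_hom_injective (m : ℕ) :
    ∃ j : FreeGroup (Option (Fin m)) →* FreeGroup (Fin 2), Function.Injective j := by
  obtain ⟨j, hj⟩ := exists_freeGroup_int_hom_injective
  obtain ⟨e, he⟩ := Function.Embedding.nonempty_of_card_le (α := Option (Fin m)) (β := Fin (m + 1))
    (by simp)
  exact ⟨j.comp (FreeGroup.map fun o ↦ ((e o : ℕ) : ℤ)), hj.comp (FreeGroup.map_injective
    (Nat.cast_injective.comp (Fin.val_injective.comp he)))⟩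

theorem not_exists_freeGroup_hom_injective_of_powerCentral {R : Type*} [Ring R] (N : Subgroup Rˣ)
    {m : ℕ} {w : FreeGroup (Fin m)} (hw : w ≠ 1)
    (powerCentral : ∀ c : Fin m → N, ∃ p : ℕ, 0 < p ∧
      ((FreeGroup.lift (fun i ↦ (c i : Rˣ)) w : Rˣ) : R) ^ p ∈ Subring.center R) :
    ¬ ∃ f : FreeGroup (Fin 2) →* N, Function.Injective f := by
  rintro ⟨f, hf⟩
  obtain ⟨j, hj⟩ := exists_freeGroup_option_hom_injective m
  obtain ⟨p, hp, hc⟩ := powerCentral fun i ↦ f (j (FreeGroup.of (some i)))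
  have lift_eq : FreeGroup.lift (fun i ↦ (f (j (FreeGroup.of (some i))) : Rˣ)) w =
      (f (j (FreeGroup.map some w)) : Rˣ) := by
    rw [FreeGroup.map_eq_lift]
    exact (map_lift (N.subtype.comp (f.comp j)) (FreeGroup.of ∘ some) w).symm
  rw [lift_eq, Subring.mem_center_iff] at hc
  have pow_ne_one : w ^ p ≠ 1 := fun h ↦ hw ((pow_eq_one_iff.1 h).resolve_right hp.ne')
  refine of_none_mul_map_some_ne pow_ne_one (hj (hf (Subtype.ext (Units.ext ?_))))
  simpa using hc (f (j (FreeGroup.of none)) : Rˣ)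

end Words

/-! ### Torsion identities -/

/-- A group satisfies a torsion identity if all values of some nontrivial word have finite order. -/
def HasTorsionIdentity (G : Type*) [Group G] : Prop :=
  ∃ (m : ℕ) (w : FreeGroup (Fin m)), w ≠ 1 ∧ ∀ c : Fin m → G, IsOfFinOrder (FreeGroup.lift c w)

section TorsionIdentities

variable {G : Type*} [Group G]

theorem HasTorsionIdentity.of_finiteIndex {H : Subgroup G} [H.FiniteIndex]
    (hH : HasTorsionIdentity H) : HasTorsionIdentity G := by
  obtain ⟨m, w, hw, hfin⟩ := hH
  set M := H.normalCore.index
  have hM : 0 < M := Nat.pos_of_ne_zero Subgroup.FiniteIndex.index_ne_zero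
  have pow_mem (g : G) : g ^ M ∈ H := H.normalCore_le (Subgroup.pow_index_mem _ g)
  refine ⟨m, FreeGroup.lift (fun i ↦ FreeGroup.of i ^ M) w, ?_, fun c ↦ ?_⟩
  · rwa [Ne, map_eq_one_iff _ (lift_of_pow_injective hM)]
  · have : FreeGroup.lift c (FreeGroup.lift (fun i ↦ FreeGroup.of i ^ M) w) =
        H.subtype (FreeGroup.lift (fun i ↦ ⟨c i ^ M, pow_mem (c i)⟩) w) := by
      simp [map_lift]
    rw [this]
    exact H.subtype.isOfFinOrder (hfin _)

theorem exists_not_isSolvable_freeGroup : ∃ m : ℕ, ¬ Group.IsSolvable (FreeGroup (Fin m)) := by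
  let e := Fintype.equivFin (Equiv.Perm (Fin 5))
  have lift_surjective : Function.Surjective (FreeGroup.lift e.symm) :=
    fun σ ↦ ⟨FreeGroup.of (e σ), by simp⟩
  refine ⟨Fintype.card (Equiv.Perm (Fin 5)), fun h ↦ Equiv.Perm.not_isSolvable_fin_5 ?_⟩
  exact Group.isSolvable_of_surjective lift_surjective

theorem HasTorsionIdentity.of_isSolvable (h : Group.IsSolvable G) : HasTorsionIdentity G := by
  obtain ⟨r, hr⟩ := h
  obtain ⟨m, hm⟩ := exists_not_isSolvable_freeGroup
  have derived_ne_bot : derivedSeries (FreeGroup (Fin m)) r ≠ ⊥ := fun hb ↦ hm ⟨r, hb⟩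
  obtain ⟨⟨w, hwmem⟩, hw⟩ := Subgroup.ne_bot_iff_exists_ne_one.1 derived_ne_bot
  refine ⟨m, w, fun h ↦ hw (Subtype.ext h), fun c ↦ ?_⟩
  have lift_mem : FreeGroup.lift c w ∈ derivedSeries G r :=
    map_derivedSeries_le_derivedSeries _ r (Subgroup.mem_map_of_mem _ hwmem)
  rw [hr, Subgroup.mem_bot] at lift_mem
  rw [lift_mem]
  exact IsOfFinOrder.one

theorem HasTorsionIdentity.of_isOfFinOrder_commutator (h : ∀ x y : G, IsOfFinOrder ⁅x, y⁆) :
    HasTorsionIdentity G := by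
  refine ⟨2, ⁅FreeGroup.of (0 : Fin 2), FreeGroup.of 1⁆, ?_, fun c ↦ ?_⟩
  · rw [commutatorElement_def]
    decide
  · simpa [map_commutatorElement] using h (c 0) (c 1)

end TorsionIdentities

/-! ### Strong irreducibility and general position -/

section Representations

variable {K G V E : Type*} [Field K] [Group G] [AddCommGroup V] [Module K V] [AddCommGroup E]
  [Module K E]

/-- The subspace `U` is mapped into itself by every element of the subgroup `H`. -/
def IsInvariantUnder (ρ : Representation K G V) (H : Subgroup G) (U : Submodule K V) : Prop :=
  ∀ h ∈ H, U ≤ U.comap (ρ h)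

/-- A representation is strongly irreducible if every finite-index subgroup leaves only the trivial
subspaces invariant. The zero representation is allowed. -/
def IsStronglyIrreducible (ρ : Representation K G V) : Prop :=
  ∀ H : Subgroup G, H.FiniteIndex → ∀ U : Submodule K V, IsInvariantUnder ρ H U → U = ⊥ ∨ U = ⊤

theorem apply_injective (ρ : Representation K G V) (g : G) : Function.Injective (ρ g) :=
  Function.LeftInverse.injective (ρ.inv_self_apply g)

theorem apply_ne_zero (ρ : Representation K G V) (g : G) {v : V} (hv : v ≠ 0) : ρ g v ≠ 0 :=
  (map_ne_zero_iff _ (apply_injective ρ g)).2 hv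

theorem comap_apply_ne_top (ρ : Representation K G V) (g : G) {W : Submodule K V} (hW : W ≠ ⊤) :
    W.comap (ρ g) ≠ ⊤ := fun h ↦ hW <| eq_top_iff.2 fun y _ ↦ by
  have : ρ g⁻¹ y ∈ W.comap (ρ g) := h ▸ Submodule.mem_top
  rwa [Submodule.mem_comap, ρ.self_inv_apply] at this

theorem map_apply_map_apply (ρ : Representation K G V) (g h : G) (U : Submodule K V) :
    (U.map (ρ h)).map (ρ g) = U.map (ρ (g * h)) := by
  rw [map_mul, End.mul_eq_comp, Submodule.map_comp]

theorem map_apply_one (ρ : Representation K G V) (U : Submodule K V) : U.map (ρ 1) = U := by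
  rw [map_one, End.one_eq_id, Submodule.map_id]

theorem finrank_map_apply (ρ : Representation K G V) (g : G) (U : Submodule K V) :
    finrank K (U.map (ρ g)) = finrank K U :=
  (LinearEquiv.finrank_eq (Submodule.equivMapOfInjective _ (apply_injective ρ g) U)).symm

theorem exists_finiteIndex_isInvariantUnder (ρ : Representation K G V) {T : Set (Submodule K V)}
    (hfin : T.Finite) (hT : ∀ g : G, ∀ W ∈ T, W.map (ρ g) ∈ T) {W : Submodule K V} (hW : W ∈ T) :
    ∃ H : Subgroup G, H.FiniteIndex ∧ IsInvariantUnder ρ H W := by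
  let _ : MulAction G (Submodule K V) :=
    { smul := fun g U ↦ U.map (ρ g)
      one_smul := map_apply_one ρ
      mul_smul := fun g h U ↦ (map_apply_map_apply ρ g h U).symm }
  have orbit_finite : (MulAction.orbit G W).Finite :=
    hfin.subset (Set.range_subset_iff.2 fun g ↦ hT g W hW)
  refine ⟨MulAction.stabilizer G W, ⟨?_⟩, fun h hh ↦ ?_⟩
  · rw [MulAction.index_stabilizer]
    exact ((Set.ncard_pos orbit_finite).2 (MulAction.nonempty_orbit W)).ne'
  · exact Submodule.map_le_iff_le_comap.1 (MulAction.mem_stabilizer_iff.1 hh).le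

/-- The complexity of a finite set of subspaces: its maximal dimension, then the number of members
of that dimension. A cover of an orbit minimizing it is rigid enough to be permuted by `G`. -/
noncomputable def coverRank (T : Finset (Submodule K V)) : ℕ ×ₗ ℕ :=
  toLex (T.sup fun W ↦ finrank K W,
    {W ∈ (T : Set (Submodule K V)) | finrank K W = T.sup fun W ↦ finrank K W}.ncard)

theorem coverRank_lt_of_refines [FiniteDimensional K V] {T T' : Finset (Submodule K V)}
    (refines : ∀ W' ∈ T', ∃ W ∈ T, W' ≤ W)
    (top_mem : ∀ W ∈ T', finrank K W = T.sup (fun W ↦ finrank K W) → W ∈ T)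
    {W₀ : Submodule K V} (hW₀ : W₀ ∈ T) (hrank : finrank K W₀ = T.sup fun W ↦ finrank K W)
    (hW₀' : W₀ ∉ T') : coverRank T' < coverRank T := by
  have sup_le : (T'.sup fun W ↦ finrank K W) ≤ T.sup fun W ↦ finrank K W := by
    refine Finset.sup_le fun W' hW' ↦ ?_
    obtain ⟨W, hW, hle⟩ := refines W' hW'
    exact (Submodule.finrank_mono hle).trans
      (Finset.le_sup (f := fun W : Submodule K V ↦ finrank K W) hW)
  refine Prod.Lex.toLex_lt_toLex.2 (sup_le.lt_or_eq.imp_right fun sup_eq ↦ ⟨sup_eq, ?_⟩)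
  simp only at sup_eq ⊢
  rw [sup_eq]
  refine Set.ncard_lt_ncard ?_ (T.finite_toSet.subset (Set.sep_subset _ _))
  refine (Set.ssubset_iff_of_subset ?_).2 ⟨W₀, ⟨hW₀, hrank⟩, fun h ↦ hW₀' h.1⟩
  exact fun W hW ↦ ⟨top_mem W hW.1 hW.2, hW.2⟩

/-- If some translate of a top-dimensional member of a cover `T` were not a member, intersecting `T`
with its translate would give a simpler cover. -/
theorem map_apply_mem_of_coverRank_minimal [FiniteDimensional K V] {ρ : Representation K G V}
    {v : V} {T : Finset (Submodule K V)} (hcov : ∀ g, ∃ W ∈ T, ρ g v ∈ W)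
    (minimal : ∀ T' : Finset (Submodule K V), (∀ g, ∃ W ∈ T', ρ g v ∈ W) →
      (∀ W' ∈ T', ∃ W ∈ T, W' ≤ W) → ¬ coverRank T' < coverRank T)
    (g : G) {W : Submodule K V} (hW : W ∈ T) (hrank : finrank K W = T.sup fun W ↦ finrank K W) :
    W.map (ρ g) ∈ T := by
  classical
  by_contra hgW
  let T' : Finset (Submodule K V) := (T ×ˢ T).image fun p ↦ p.1 ⊓ p.2.map (ρ g⁻¹)
  have mem_T' {U : Submodule K V} : U ∈ T' ↔ ∃ A ∈ T, ∃ B ∈ T, A ⊓ B.map (ρ g⁻¹) = U := by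
    simp [T', and_assoc]
  have finrank_le {A : Submodule K V} (hA : A ∈ T) : finrank K A ≤ T.sup fun W ↦ finrank K W :=
    Finset.le_sup (f := fun W : Submodule K V ↦ finrank K W) hA
  have refines : ∀ W' ∈ T', ∃ A ∈ T, W' ≤ A := by
    intro W' hW'
    obtain ⟨A, hA, B, -, rfl⟩ := mem_T'.1 hW'
    exact ⟨A, hA, inf_le_left⟩
  refine minimal T' (fun x ↦ ?_) refines (coverRank_lt_of_refines refines ?_ hW hrank ?_)
  · obtain ⟨A, hA, hxA⟩ := hcov x
    obtain ⟨B, hB, hxB⟩ := hcov (g * x)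
    exact ⟨_, mem_T'.2 ⟨A, hA, B, hB, rfl⟩, hxA, _, hxB, by simp⟩
  · intro U hU htop
    obtain ⟨A, hA, B, -, rfl⟩ := mem_T'.1 hU
    rwa [Submodule.eq_of_le_of_finrank_le inf_le_left ((finrank_le hA).trans htop.ge)]
  · intro hW'
    obtain ⟨A, -, B, hB, hAB⟩ := mem_T'.1 hW'
    have W_eq : W = B.map (ρ g⁻¹) := Submodule.eq_of_le_of_finrank_le (hAB ▸ inf_le_right) (by
      rw [finrank_map_apply, hrank]
      exact finrank_le hB)
    rw [W_eq, map_apply_map_apply, mul_inv_cancel, map_apply_one] at hgW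
    exact hgW hB

theorem exists_isInvariantUnder_of_orbit_cover [FiniteDimensional K V] (ρ : Representation K G V)
    (v : V) (T : Finset (Submodule K V)) (hcov : ∀ g, ∃ W ∈ T, ρ g v ∈ W) :
    ∃ (H : Subgroup G) (U : Submodule K V) (g : G), H.FiniteIndex ∧ IsInvariantUnder ρ H U ∧
      ρ g v ∈ U ∧ ∃ W ∈ T, U ≤ W := by
  classical
  obtain ⟨S, ⟨hS, refines⟩, hmin⟩ := exists_minimalFor_of_wellFoundedLT
    (fun S : Finset (Submodule K V) ↦ (∀ g, ∃ W ∈ S, ρ g v ∈ W) ∧ ∀ W' ∈ S, ∃ W ∈ T, W' ≤ W)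
    coverRank ⟨T, hcov, fun W hW ↦ ⟨W, hW, le_rfl⟩⟩
  have minimal (S' : Finset (Submodule K V)) (hS' : ∀ g, ∃ W ∈ S', ρ g v ∈ W)
      (refines' : ∀ W' ∈ S', ∃ W ∈ S, W' ≤ W) : ¬ coverRank S' < coverRank S := by
    refine fun hlt ↦ hlt.not_ge (hmin ⟨hS', fun W' hW' ↦ ?_⟩ hlt.le)
    obtain ⟨W, hW, hle⟩ := refines' W' hW'
    obtain ⟨W₁, hW₁, hle₁⟩ := refines W hW
    exact ⟨W₁, hW₁, hle.trans hle₁⟩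
  obtain ⟨W₁, hW₁, -⟩ := hS 1
  obtain ⟨W₀, hW₀, hrank⟩ := Finset.exists_mem_eq_sup S ⟨W₁, hW₁⟩ fun W ↦ finrank K W
  obtain ⟨g, hg⟩ : ∃ g, ρ g v ∈ W₀ := by
    by_contra! hW₀v
    refine minimal (S.erase W₀) (fun g ↦ ?_) (fun W hW ↦ ⟨W, Finset.mem_of_mem_erase hW, le_rfl⟩)
      (coverRank_lt_of_refines (fun W hW ↦ ⟨W, Finset.mem_of_mem_erase hW, le_rfl⟩)
        (fun W hW _ ↦ Finset.mem_of_mem_erase hW) hW₀ hrank.symm (Finset.notMem_erase W₀ S))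
    obtain ⟨W, hW, hgW⟩ := hS g
    exact ⟨W, Finset.mem_erase.2 ⟨fun h ↦ hW₀v g (h ▸ hgW), hW⟩, hgW⟩
  obtain ⟨H, hH, hinv⟩ := exists_finiteIndex_isInvariantUnder ρ
    (T := {W | W ∈ S ∧ finrank K W = S.sup fun W ↦ finrank K W})
    (S.finite_toSet.subset fun W hW ↦ hW.1)
    (fun h W hW ↦ ⟨map_apply_mem_of_coverRank_minimal hS minimal h hW.1 hW.2,
      (finrank_map_apply ρ h W).trans hW.2⟩) ⟨hW₀, hrank.symm⟩
  exact ⟨H, W₀, g, hH, hinv, hg, refines W₀ hW₀⟩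

theorem IsStronglyIrreducible.dual [FiniteDimensional K V] {ρ : Representation K G V}
    (hρ : IsStronglyIrreducible ρ) : IsStronglyIrreducible ρ.dual := by
  intro H hH U hU
  have coannihilator_invariant : IsInvariantUnder ρ H U.dualCoannihilator := by
    intro g hg x hx
    rw [Submodule.mem_comap, Submodule.mem_dualCoannihilator] at *
    intro χ hχ
    simpa [Representation.dual_apply, Dual.transpose_apply] using hx _ (hU g⁻¹ (H.inv_mem hg) hχ)
  rw [← Subspace.dualCoannihilator_dualAnnihilator_eq (W := U)]
  rcases hρ H hH _ coannihilator_invariant with h | h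
  · exact .inr (h ▸ Submodule.dualAnnihilator_bot)
  · exact .inl (h ▸ Submodule.dualAnnihilator_top)

theorem IsStronglyIrreducible.not_le_comap {ρ : Representation K G E} (hρ : IsStronglyIrreducible ρ)
    {σ : Representation K G V} {π : V →ₗ[K] E} (equivariant : ∀ g x, π (σ g x) = ρ g (π x))
    {H : Subgroup G} (hH : H.FiniteIndex) {U : Submodule K V} (hU : IsInvariantUnder σ H U)
    {g : G} {x : V} (hx : σ g x ∈ U) (hπx : π x ≠ 0) {W : Submodule K E} (hW : W ≠ ⊤) :
    ¬ U ≤ W.comap π := by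
  intro hUW
  have map_invariant : IsInvariantUnder ρ H (U.map π) := by
    rintro h hh _ ⟨y, hy, rfl⟩
    exact ⟨σ h y, hU h hh hy, equivariant h y⟩
  rcases hρ H hH _ map_invariant with hbot | htop
  · have : π (σ g x) ∈ U.map π := Submodule.mem_map_of_mem hx
    rw [hbot, Submodule.mem_bot, equivariant] at this
    exact apply_ne_zero ρ g hπx this
  · exact hW (top_le_iff.1 (htop ▸ Submodule.map_le_iff_le_comap.2 hUW))

/-- The diagonal action on finitely many vectors and functionals turns several conditions on `g`
into a single condition on one orbit. -/
def diagonalRep (ρ : Representation K G V) (ι κ : Type*) :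
    Representation K G ((ι → V) × (κ → Dual K V)) where
  toFun g := LinearMap.prodMap (LinearMap.pi fun i ↦ ρ g ∘ₗ LinearMap.proj i)
    (LinearMap.pi fun i ↦ ρ.dual g ∘ₗ LinearMap.proj i)
  map_one' := by ext <;> simp [Dual.transpose_apply]
  map_mul' g h := by ext <;> simp [Dual.transpose_apply]

theorem IsStronglyIrreducible.exists_apply_notMem [FiniteDimensional K V]
    {ρ : Representation K G V} (hρ : IsStronglyIrreducible ρ) {ι κ : Type*} [Finite ι] [Finite κ]
    {v : ι → V} {W : ι → Submodule K V} {v' : κ → V} {W' : κ → Submodule K V}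
    (hv : ∀ i, v i ≠ 0) (hW : ∀ i, W i ≠ ⊤) (hv' : ∀ i, v' i ≠ 0) (hW' : ∀ i, W' i ≠ ⊤) :
    ∃ g : G, (∀ i, ρ g (v i) ∉ W i) ∧ ∀ i, ρ g⁻¹ (v' i) ∉ W' i := by
  cases nonempty_fintype ι
  cases nonempty_fintype κ
  choose χ hχ hW'χ using fun i ↦
    Submodule.exists_le_ker_of_lt_top (W' i) (lt_top_iff_ne_top.2 (hW' i))
  let vec (i : ι) : (ι → V) × (κ → Dual K V) →ₗ[K] V := LinearMap.proj i ∘ₗ LinearMap.fst K _ _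
  let func (i : κ) : (ι → V) × (κ → Dual K V) →ₗ[K] Dual K V :=
    LinearMap.proj i ∘ₗ LinearMap.snd K _ _
  let ann (i : κ) : Submodule K (Dual K V) := LinearMap.ker (Dual.eval K V (v' i))
  have ann_ne_top (i : κ) : ann i ≠ ⊤ := fun h ↦ hv' i <|
    (Module.forall_dual_apply_eq_zero_iff K _).1 fun f ↦ (h ▸ Submodule.mem_top : f ∈ ann i)
  by_contra! hcon
  classical
  obtain ⟨H, U, g, hH, hU, hgU, S, hS, hUS⟩ := exists_isInvariantUnder_of_orbit_cover
    (diagonalRep ρ ι κ) (v, χ) (Finset.univ.image (fun i ↦ (W i).comap (vec i)) ∪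
      Finset.univ.image fun i ↦ (ann i).comap (func i)) (by
      intro g
      by_cases hg : ∀ i, ρ g (v i) ∉ W i
      · obtain ⟨i, hi⟩ := hcon g hg
        exact ⟨(ann i).comap (func i), by simp, hW'χ i hi⟩
      · push Not at hg
        obtain ⟨i, hi⟩ := hg
        exact ⟨(W i).comap (vec i), by simp, hi⟩)
  simp only [Finset.mem_union, Finset.mem_image, Finset.mem_univ, true_and] at hS
  rcases hS with ⟨i, rfl⟩ | ⟨i, rfl⟩
  · exact hρ.not_le_comap (fun _ _ ↦ rfl) hH hU hgU (hv i) (hW i) hUS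
  · exact hρ.dual.not_le_comap (fun _ _ ↦ rfl) hH hU hgU (hχ i) (ann_ne_top i) hUS

end Representations

/-! ### Contracting sequences and ping-pong -/

section Cones

variable {K E ι : Type*} [NormedField K] [AddCommGroup E] [Module K E] [Fintype ι]

/-- The `ℓ¹`-norm of the coordinates in the basis `b`, which is a norm on `E`. -/
noncomputable def basisSeminorm (b : Basis ι K E) : Seminorm K E :=
  .of (fun x ↦ ∑ i, ‖b.coord i x‖)
    (fun x y ↦ by
      rw [← Finset.sum_add_distrib]
      exact Finset.sum_le_sum fun i _ ↦ (map_add (b.coord i) x y).symm ▸ norm_add_le _ _)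
    fun c x ↦ by simp [Finset.mul_sum]

theorem basisSeminorm_apply (b : Basis ι K E) (x : E) :
    basisSeminorm b x = ∑ i, ‖b.coord i x‖ := rfl

theorem basisSeminorm_pos (b : Basis ι K E) {x : E} (hx : x ≠ 0) : 0 < basisSeminorm b x := by
  refine (apply_nonneg _ x).lt_of_ne fun h ↦ hx (b.ext_elem fun i ↦ ?_)
  rw [basisSeminorm_apply, eq_comm, Finset.sum_eq_zero_iff_of_nonneg fun _ _ ↦ norm_nonneg _] at h
  simpa using h i (Finset.mem_univ i)

theorem seminorm_apply_le_sum_mul_basisSeminorm {E' : Type*} [AddCommGroup E'] [Module K E']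
    (b : Basis ι K E) (q : Seminorm K E') (f : E →ₗ[K] E') (x : E) :
    q (f x) ≤ (∑ i, q (f (b i))) * basisSeminorm b x :=
  calc q (f x) = q (∑ i, b.coord i x • f (b i)) := by
        conv_lhs => rw [← b.sum_repr x, map_sum]
        simp only [map_smul, Basis.coord_apply]
    _ ≤ ∑ i, ‖b.coord i x‖ * q (f (b i)) :=
        (Finset.le_sum_of_subadditive q (map_zero q).le (map_add_le_add q) _ _).trans_eq
          (by simp only [map_smul_eq_mul])
    _ ≤ ∑ i, basisSeminorm b x * q (f (b i)) := by
        gcongr with i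
        rw [basisSeminorm_apply]
        exact Finset.single_le_sum (f := fun i ↦ ‖b.coord i x‖) (fun _ _ ↦ norm_nonneg _)
          (Finset.mem_univ i)
    _ = _ := by rw [← Finset.mul_sum, mul_comm]

theorem norm_dual_apply_le_sum_mul_basisSeminorm (b : Basis ι K E) (χ : Dual K E) (x : E) :
    ‖χ x‖ ≤ (∑ i, ‖χ (b i)‖) * basisSeminorm b x :=
  seminorm_apply_le_sum_mul_basisSeminorm b (normSeminorm K K) χ x

/-- The vectors that lie, up to a nonzero scalar, within `η` of `p`: the preimage of a small ball
of projective space. -/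
def Cone (b : Basis ι K E) (p : E) (η : ℝ) : Set E :=
  {v | ∃ s : K, s ≠ 0 ∧ basisSeminorm b (v - s • p) ≤ η * ‖s‖}

theorem self_mem_cone (b : Basis ι K E) (p : E) {η : ℝ} (hη : 0 ≤ η) : p ∈ Cone b p η :=
  ⟨1, one_ne_zero, by simpa using hη⟩

theorem eventually_notMem_cone (b : Basis ι K E) {p q : E} (hp : q ∉ Submodule.span K {p}) :
    ∀ᶠ η in 𝓝[>] (0 : ℝ), p ∉ Cone b q η := by
  obtain ⟨χ, hχq, hχp⟩ := Submodule.exists_le_ker_of_notMem hp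
  replace hχp : χ p = 0 := hχp (Submodule.mem_span_singleton_self p)
  have scaled_tendsto : Tendsto (fun η : ℝ ↦ (∑ i, ‖χ (b i)‖) * η) (𝓝[>] 0) (𝓝 0) := by
    simpa using (tendsto_id (x := 𝓝 (0 : ℝ))).const_mul (∑ i, ‖χ (b i)‖) |>.mono_left
      nhdsWithin_le_nhds
  filter_upwards [scaled_tendsto.eventually (gt_mem_nhds (norm_pos_iff.2 hχq))] with η hη
  rintro ⟨s, hs, hle⟩
  have : ‖s‖ * ‖χ q‖ ≤ ‖s‖ * ((∑ i, ‖χ (b i)‖) * η) :=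
    calc ‖s‖ * ‖χ q‖ = ‖χ (p - s • q)‖ := by simp [hχp]
      _ ≤ (∑ i, ‖χ (b i)‖) * basisSeminorm b (p - s • q) :=
        norm_dual_apply_le_sum_mul_basisSeminorm b χ _
      _ ≤ (∑ i, ‖χ (b i)‖) * (η * ‖s‖) := by gcongr
      _ = _ := by ring
  exact hη.not_ge (le_of_mul_le_mul_left this (norm_pos_iff.2 hs))

theorem mapsTo_cone (b : Basis ι K E) {T : End K E} {ψ : Dual K E} {e q : E} {C δ η : ℝ}
    (hψ : ∀ v, ‖ψ v‖ ≤ C * basisSeminorm b v)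
    (hT : ∀ v, basisSeminorm b (T v - ψ v • e) ≤ δ * basisSeminorm b v)
    (hq : ψ q ≠ 0) (hC : 0 ≤ C) (hδ : 0 ≤ δ) (hη : 0 ≤ η) (hη1 : η ≤ 1)
    (hCη : 2 * (C * η) ≤ ‖ψ q‖) (hδη : 2 * (δ * (basisSeminorm b q + 1)) ≤ η * ‖ψ q‖) :
    Set.MapsTo T (Cone b q η) (Cone b e η) := by
  rintro v ⟨s, hs, hv⟩
  have s_pos : 0 < ‖s‖ := norm_pos_iff.2 hs
  have norm_v_le : basisSeminorm b v ≤ (basisSeminorm b q + 1) * ‖s‖ :=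
    calc basisSeminorm b v = basisSeminorm b (v - s • q + s • q) := by rw [sub_add_cancel]
      _ ≤ basisSeminorm b (v - s • q) + basisSeminorm b (s • q) := map_add_le_add _ _ _
      _ ≤ η * ‖s‖ + ‖s‖ * basisSeminorm b q := by rw [map_smul_eq_mul]; gcongr
      _ ≤ 1 * ‖s‖ + ‖s‖ * basisSeminorm b q := by gcongr
      _ = _ := by ring
  have le_ψv : ‖s‖ * ‖ψ q‖ ≤ 2 * ‖ψ v‖ := by
    have : ‖s‖ * ‖ψ q‖ ≤ ‖ψ v‖ + C * (η * ‖s‖) :=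
      calc ‖s‖ * ‖ψ q‖ = ‖ψ v - ψ (v - s • q)‖ := by simp
        _ ≤ ‖ψ v‖ + ‖ψ (v - s • q)‖ := norm_sub_le _ _
        _ ≤ ‖ψ v‖ + C * (η * ‖s‖) := by
          gcongr
          exact (hψ _).trans (by gcongr)
    nlinarith
  refine ⟨ψ v, norm_pos_iff.1 ?_, ?_⟩
  · have := mul_pos s_pos (norm_pos_iff.2 hq)
    linarith
  · have : 2 * basisSeminorm b (T v - ψ v • e) ≤ 2 * (η * ‖ψ v‖) :=
      calc 2 * basisSeminorm b (T v - ψ v • e)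
          ≤ 2 * (δ * ((basisSeminorm b q + 1) * ‖s‖)) := by
            gcongr
            exact (hT v).trans (by gcongr)
        _ = 2 * (δ * (basisSeminorm b q + 1)) * ‖s‖ := by ring
        _ ≤ η * ‖ψ q‖ * ‖s‖ := by gcongr
        _ = η * (‖s‖ * ‖ψ q‖) := by ring
        _ ≤ η * (2 * ‖ψ v‖) := by gcongr
        _ = _ := by ring
    linarith

end Cones

section RankOne

variable {K E α : Type*} [NormedField K] [AddCommGroup E] [Module K E]

/-- The vectors on which the functionals `ψ k` are negligible compared with the scale `γ k`. -/
def negligibleSubspace (l : Filter α) (ψ : α → Dual K E) (γ : α → ℝ) : Submodule K E where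
  carrier := {v | (fun k ↦ ψ k v) =o[l] γ}
  zero_mem' := by simp
  add_mem' hx hy := by simpa using hx.add hy
  smul_mem' c x hx := by simpa using hx.const_mul_left c

/-- Compared with the scale `γ k`, the operators `T k` are asymptotic to the rank-one operators
`v ↦ ψ k v • e`. -/
structure IsAsymptoticallyRankOne (l : Filter α) (T : α → End K E) (ψ : α → Dual K E) (e : E)
    (γ : α → ℝ) : Prop where
  isBigO : ∀ v, (fun k ↦ ψ k v) =O[l] γ
  isLittleO : ∀ v (χ : Dual K E), (fun k ↦ χ (T k v - ψ k v • e)) =o[l] γ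

namespace IsAsymptoticallyRankOne

variable {ψ : α → Dual K E} {e : E} {γ : α → ℝ} {T : α → End K E}

theorem mono {l l' : Filter α} (h : IsAsymptoticallyRankOne l T ψ e γ) (hl : l' ≤ l) :
    IsAsymptoticallyRankOne l' T ψ e γ where
  isBigO v := (h.isBigO v).mono hl
  isLittleO v χ := (h.isLittleO v χ).mono hl

theorem comp {l : Filter α} (h : IsAsymptoticallyRankOne l T ψ e γ) (A B : End K E) :
    IsAsymptoticallyRankOne l (fun k ↦ A * T k * B) (fun k ↦ ψ k ∘ₗ B) (A e) γ where
  isBigO v := h.isBigO (B v)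
  isLittleO v χ := (h.isLittleO (B v) (χ ∘ₗ A)).congr_left fun k ↦ by simp

theorem eventually_mapsTo_cone {ι : Type*} [Fintype ι] {l : Ultrafilter α}
    (h : IsAsymptoticallyRankOne l T ψ e γ) (b : Basis ι K E) {q : E}
    (hq : q ∉ negligibleSubspace l ψ γ) :
    ∀ᶠ η in 𝓝[>] (0 : ℝ), ∀ᶠ k in (l : Filter α), Set.MapsTo (T k) (Cone b q η) (Cone b e η) := by
  obtain ⟨c, hc, large⟩ : ∃ c > 0, ∀ᶠ k in (l : Filter α), c * ‖γ k‖ < ‖ψ k q‖ := by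
    replace hq : ¬ (fun k ↦ ψ k q) =o[l] γ := hq
    rw [isLittleO_iff] at hq
    push Not at hq
    simpa only [← Ultrafilter.frequently_iff_eventually] using hq
  obtain ⟨C, hC, bounded⟩ : ∃ C > 0, ∀ᶠ k in (l : Filter α), (∑ i, ‖ψ k (b i)‖) ≤ C * ‖γ k‖ := by
    obtain ⟨C, hC, hbound⟩ := (IsBigO.fun_sum (s := Finset.univ)
      fun i _ ↦ (h.isBigO (b i)).norm_left).exists_pos
    exact ⟨C, hC, hbound.bound.mono fun k hk ↦ (le_abs_self _).trans hk⟩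
  have error_isLittleO : (fun k ↦ ∑ i, basisSeminorm b (T k (b i) - ψ k (b i) • e)) =o[l] γ := by
    simp only [basisSeminorm_apply]
    exact .fun_sum fun i _ ↦ .fun_sum fun j _ ↦ (h.isLittleO (b i) (b.coord j)).norm_left
  have η₀_pos : 0 < min 1 (c / (2 * C)) := by positivity
  filter_upwards [Ioo_mem_nhdsGT η₀_pos] with η ⟨hη, hηlt⟩
  rw [lt_min_iff, lt_div_iff₀ (by positivity)] at hηlt
  filter_upwards [large, bounded, error_isLittleO.bound
    (c := η * c / (2 * (basisSeminorm b q + 1))) (by positivity)] with k hk hCk hδk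
  rw [Real.norm_of_nonneg (Finset.sum_nonneg fun _ _ ↦ apply_nonneg _ _), div_mul_eq_mul_div,
    le_div_iff₀ (by positivity)] at hδk
  refine mapsTo_cone b (norm_dual_apply_le_sum_mul_basisSeminorm b (ψ k))
    (seminorm_apply_le_sum_mul_basisSeminorm b _ (T k - (ψ k).smulRight e))
    (norm_pos_iff.1 (hk.trans_le' (by positivity)))
    (Finset.sum_nonneg fun _ _ ↦ norm_nonneg _) (Finset.sum_nonneg fun _ _ ↦ apply_nonneg _ _)
    hη.le hηlt.1.le ?_ ?_
  · calc 2 * ((∑ i, ‖ψ k (b i)‖) * η) ≤ 2 * (C * ‖γ k‖ * η) := by gcongr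
      _ = η * (2 * C) * ‖γ k‖ := by ring
      _ ≤ c * ‖γ k‖ := by gcongr; exact hηlt.2.le
      _ ≤ ‖ψ k q‖ := hk.le
  · calc _ = (∑ i, basisSeminorm b (T k (b i) - ψ k (b i) • e)) *
          (2 * (basisSeminorm b q + 1)) := by
          simp only [LinearMap.sub_apply, LinearMap.smulRight_apply]; ring
      _ ≤ η * c * ‖γ k‖ := hδk
      _ = η * (c * ‖γ k‖) := by ring
      _ ≤ _ := by gcongr

end IsAsymptoticallyRankOne

end RankOne

theorem lift_injective_of_translates_ping_pong {G X α : Type*} [Group G] [MulAction G X]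
    (x : Option (α × Bool) → G) (C : Option (α × Bool) → Set X) {x₀ : X} (hx₀ : x₀ ∈ C none)
    (notMem : ∀ l, x₀ ∉ C (some l))
    (mapsTo : ∀ i j, i ≠ j → Set.MapsTo (x i • ·) (C j) (C i))
    (mapsTo_inv : ∀ i j, i ≠ j → Set.MapsTo ((x i)⁻¹ • ·) (C j) (C i)) :
    Function.Injective (FreeGroup.lift fun a ↦ x (some (a, true)) * x (some (a, false))) := by
  set g : α → G := fun a ↦ x (some (a, true)) * x (some (a, false)) with hg
  have letter_mapsTo (l : α × Bool) (j : Option (α × Bool)) (hj : j ≠ some (l.1, !l.2)) :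
      Set.MapsTo (FreeGroup.lift g (FreeGroup.mk [l]) • ·) (C j) (C (some l)) := by
    intro y hy
    obtain ⟨a, _ | _⟩ := l
    · simpa [hg, mul_smul] using mapsTo_inv (some (a, false)) (some (a, true)) (by simp)
        (mapsTo_inv _ j hj.symm hy)
    · simpa [hg, mul_smul] using mapsTo (some (a, true)) (some (a, false)) (by simp)
        (mapsTo _ j hj.symm hy)
  exact lift_injective_of_letter_ping_pong g (fun l ↦ C (some l)) x₀ notMem
    (fun l ↦ letter_mapsTo l none (by simp) hx₀)
    fun l l' hl ↦ letter_mapsTo l (some l') (by simpa using hl)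

theorem span_singleton_ne_top {K E : Type*} [DivisionRing K] [AddCommGroup E] [Module K E]
    (hdim : 2 ≤ finrank K E) (v : E) : Submodule.span K {v} ≠ ⊤ := fun h ↦ by
  have hle := finrank_span_le_card (R := K) ({v} : Set E)
  rw [h, finrank_top, Set.toFinset_singleton, Finset.card_singleton] at hle
  omega

section FreeSubgroups

variable {K G E : Type*} [NormedField K] [Group G] [AddCommGroup E] [Module K E]

theorem IsStronglyIrreducible.exists_pairwise_translates [FiniteDimensional K E]
    {ρ : Representation K G E} (hρ : IsStronglyIrreducible ρ) {e : E} (he : e ≠ 0) {κ : Type*}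
    [Finite κ] {W : κ → Submodule K E} (hW : ∀ i, W i ≠ ⊤) :
    ∃ τ : ℕ → G, Pairwise fun m n ↦ ∀ i, ρ ((τ m)⁻¹ * τ n) e ∉ W i := by
  let Transverse (g h : G) : Prop := ∀ i, ρ (g⁻¹ * h) e ∉ W i
  have exists_transverse (s : Finset G) : ∃ y, ∀ g ∈ s, Transverse g y ∧ Transverse y g := by
    obtain ⟨y, hy, hy'⟩ := hρ.exists_apply_notMem (ι := s × κ) (κ := s × κ)
      (v := fun _ ↦ e) (W := fun p ↦ (W p.2).comap (ρ (p.1 : G)⁻¹))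
      (v' := fun p ↦ ρ p.1 e) (W' := fun p ↦ W p.2) (fun _ ↦ he)
      (fun p ↦ comap_apply_ne_top ρ _ (hW p.2)) (fun p ↦ apply_ne_zero ρ _ he) (fun p ↦ hW p.2)
    refine ⟨y, fun g hg ↦ ⟨fun i ↦ ?_, fun i ↦ ?_⟩⟩
    · simpa using hy (⟨g, hg⟩, i)
    · simpa using hy' (⟨g, hg⟩, i)
  have : Std.Symm fun g h ↦ Transverse g h ∧ Transverse h g := ⟨fun _ _ ↦ And.symm⟩
  obtain ⟨τ, -, hτ⟩ := exists_seq_of_forall_finset_exists' (fun _ : G ↦ True)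
    (fun g h ↦ Transverse g h ∧ Transverse h g)
    fun s _ ↦ (exists_transverse s).imp fun y hy ↦ ⟨trivial, hy⟩
  exact ⟨τ, fun m n hmn ↦ (hτ hmn).1⟩

theorem IsAsymptoticallyRankOne.eventually_mapsTo_cone_translate {ρ : Representation K G E} {e : E}
    {α : Type*} {l : Ultrafilter α} {x : α → G} {ψ : α → Dual K E} {γ : α → ℝ}
    (h : IsAsymptoticallyRankOne l (fun k ↦ ρ (x k)) ψ e γ) {ι : Type*} [Fintype ι]
    (b : Basis ι K E) {g g' : G} (hg : ρ (g⁻¹ * g') e ∉ negligibleSubspace l ψ γ) :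
    ∀ᶠ η in 𝓝[>] (0 : ℝ), ∀ᶠ k in (l : Filter α),
      Set.MapsTo (ρ (g * x k * g⁻¹)) (Cone b (ρ g' e) η) (Cone b (ρ g e) η) := by
  rw [map_mul, End.mul_apply] at hg
  simpa only [map_mul] using (h.comp (ρ g) (ρ g⁻¹)).eventually_mapsTo_cone b hg

theorem eventually_notMem_cone_translate {ι : Type*} [Fintype ι] (b : Basis ι K E)
    {ρ : Representation K G E} {e : E} {g g' : G} (hg : ρ (g⁻¹ * g') e ∉ Submodule.span K {e}) :
    ∀ᶠ η in 𝓝[>] (0 : ℝ), ρ g e ∉ Cone b (ρ g' e) η := by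
  refine eventually_notMem_cone b fun hmem ↦ hg ?_
  obtain ⟨c, hc⟩ := Submodule.mem_span_singleton.1 hmem
  exact Submodule.mem_span_singleton.2 ⟨c, by simp [← hc]⟩

theorem IsStronglyIrreducible.exists_freeGroup_hom_injective_of_isAsymptoticallyRankOne
    [FiniteDimensional K E] {ρ : Representation K G E} (hρ : IsStronglyIrreducible ρ)
    (hdim : 2 ≤ finrank K E) {e : E} (he : e ≠ 0) {α : Type*} {l : Ultrafilter α} {x : α → G}
    {ψ ψ' : α → Dual K E} {γ γ' : α → ℝ}
    (h : IsAsymptoticallyRankOne l (fun k ↦ ρ (x k)) ψ e γ) (hψ : negligibleSubspace l ψ γ ≠ ⊤)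
    (h' : IsAsymptoticallyRankOne l (fun k ↦ ρ (x k)⁻¹) ψ' e γ')
    (hψ' : negligibleSubspace l ψ' γ' ≠ ⊤) :
    ∃ f : FreeGroup (Fin 2) →* G, Function.Injective f := by
  let b := Module.finBasis K E
  obtain ⟨τ', hτ'⟩ := hρ.exists_pairwise_translates he
    (W := ![negligibleSubspace l ψ γ, negligibleSubspace l ψ' γ', Submodule.span K {e}])
    (by simp [Fin.forall_fin_succ, hψ, hψ', span_singleton_ne_top hdim])
  let τ (i : Option (Fin 2 × Bool)) : G := τ' (Encodable.encode i)
  have hτ (i j : Option (Fin 2 × Bool)) (hij : i ≠ j) := hτ' (Encodable.encode_injective.ne hij)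
  simp only [Fin.forall_fin_succ] at hτ
  let y (i : Option (Fin 2 × Bool)) (k : α) : G := τ i * x k * (τ i)⁻¹
  let C (η : ℝ) (i : Option (Fin 2 × Bool)) : Set E := Cone b (ρ (τ i) e) η
  have eventually_contracts : ∀ᶠ η in 𝓝[>] (0 : ℝ), ∀ i j, i ≠ j → ρ (τ i) e ∉ C η j ∧
      ∀ᶠ k in (l : Filter α), Set.MapsTo (ρ (y i k)) (C η j) (C η i) ∧
        Set.MapsTo (ρ (y i k)⁻¹) (C η j) (C η i) := by
    refine eventually_all.2 fun i ↦ eventually_all.2 fun j ↦ eventually_imp_distrib_left.2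
      fun hij ↦ ?_
    obtain ⟨transverse, transverse', notMem_span, -⟩ := hτ i j hij
    filter_upwards [eventually_notMem_cone_translate b notMem_span,
      h.eventually_mapsTo_cone_translate b transverse,
      h'.eventually_mapsTo_cone_translate b transverse'] with η hη hη' hη''
    refine ⟨hη, hη'.and (hη''.mono fun k hk ↦ ?_)⟩
    simpa only [y, mul_inv_rev, inv_inv, mul_assoc] using hk
  obtain ⟨η, hη, η_pos⟩ := (eventually_contracts.and self_mem_nhdsWithin).exists
  obtain ⟨k, hk⟩ := (eventually_all.2 fun i ↦ eventually_all.2 fun j ↦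
    eventually_imp_distrib_left.2 fun hij ↦ (hη i j hij).2).exists
  let _ : MulAction G E := MulAction.compHom E ρ
  exact ⟨_, lift_injective_of_translates_ping_pong (x₀ := ρ (τ none) e) (fun i ↦ y i k) (C η)
    (self_mem_cone b _ (le_of_lt η_pos)) (fun i ↦ (hη none (some i) (by simp)).1)
    (fun i j hij ↦ (hk i j hij).1) fun i j hij ↦ (hk i j hij).2⟩

/-- The powers of `T`, rescaled by those of `Λ`, converge to the nonzero rank-one operator
`x ↦ φ x • e`. -/
structure HasRankOneLimit (T : End K E) (Λ : K) (φ : Dual K E) (e : E) : Prop where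
  scale_ne_zero : Λ ≠ 0
  functional_ne_zero : φ ≠ 0
  vector_ne_zero : e ≠ 0
  tendsto : ∀ x (χ : Dual K E),
    Tendsto (fun k : ℕ ↦ (Λ ^ k)⁻¹ * χ ((T ^ k) x)) atTop (𝓝 (φ x * χ e))

theorem const_mul_isLittleO_norm_mul_iff {α : Type*} {l : Filter α} {c u : α → K} {γ : α → ℝ}
    (hc : ∀ k, c k ≠ 0) :
    (fun k ↦ c k * u k) =o[l] (fun k ↦ ‖c k‖ * γ k) ↔ u =o[l] γ := by
  simp only [isLittleO_iff, norm_mul, norm_norm, mul_left_comm _ ‖c _‖,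
    mul_le_mul_iff_right₀ (norm_pos_iff.2 (hc _))]

/-- The total size of `a⁻ᵏ` on the basis `b`. -/
noncomputable def inversePowSize {ι : Type*} [Fintype ι] (ρ : Representation K G E) (a : G)
    (b : Basis ι K E) (k : ℕ) : ℝ :=
  ∑ i, basisSeminorm b (ρ (a ^ k)⁻¹ (b i))

theorem basisSeminorm_apply_inv_pow_isBigO {ι : Type*} [Fintype ι] (ρ : Representation K G E)
    (a f : G) (b : Basis ι K E) (v : E) (l : Filter ℕ) :
    (fun k ↦ basisSeminorm b (ρ f (ρ (a ^ k)⁻¹ v))) =O[l] inversePowSize ρ a b := by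
  refine .of_bound ((∑ i, basisSeminorm b (ρ f (b i))) * basisSeminorm b v) (.of_forall fun k ↦ ?_)
  rw [Real.norm_of_nonneg (apply_nonneg _ _), inversePowSize,
    Real.norm_of_nonneg (Finset.sum_nonneg fun _ _ ↦ apply_nonneg _ _), mul_assoc,
    mul_comm (basisSeminorm b v)]
  refine (seminorm_apply_le_sum_mul_basisSeminorm b _ (ρ f) _).trans ?_
  gcongr
  exact seminorm_apply_le_sum_mul_basisSeminorm b _ _ v

/-- With `u = f a⁻ᵏ v`, the error `aᵏ f a⁻ᵏ v - Λᵏ φ(u) e` is `Λᵏ (Λ⁻ᵏ aᵏ - φ ⊗ e) u`. -/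
theorem HasRankOneLimit.isAsymptoticallyRankOne {ρ : Representation K G E} {a : G} {Λ : K}
    {φ : Dual K E} {e : E} (h : HasRankOneLimit (ρ a) Λ φ e) {ι : Type*} [Fintype ι]
    (b : Basis ι K E) (f : G) :
    IsAsymptoticallyRankOne atTop (fun k ↦ ρ (a ^ k * f * (a ^ k)⁻¹))
      (fun k ↦ Λ ^ k • (φ ∘ₗ ρ f ∘ₗ ρ (a ^ k)⁻¹)) e
      (fun k ↦ ‖Λ ^ k‖ * inversePowSize ρ a b k) where
  isBigO v := by
    refine IsBigO.mul (.of_bound 1 (by simp)) (IsBigO.trans ?_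
      (basisSeminorm_apply_inv_pow_isBigO ρ a f b v atTop))
    refine .of_bound (∑ i, ‖φ (b i)‖) (.of_forall fun k ↦ ?_)
    rw [Real.norm_of_nonneg (apply_nonneg _ _)]
    exact norm_dual_apply_le_sum_mul_basisSeminorm b φ _
  isLittleO v χ := by
    have scale_ne_zero (k : ℕ) : Λ ^ k ≠ 0 := pow_ne_zero k h.scale_ne_zero
    let R (k : ℕ) : Dual K E := (Λ ^ k)⁻¹ • (χ ∘ₗ ρ a ^ k) - χ e • φ
    have error_eq (k : ℕ) : χ (ρ (a ^ k * f * (a ^ k)⁻¹) v -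
        (Λ ^ k • (φ ∘ₗ ρ f ∘ₗ ρ (a ^ k)⁻¹)) v • e) = Λ ^ k * R k (ρ f (ρ (a ^ k)⁻¹ v)) := by
      simp only [map_mul, map_pow, End.mul_apply, LinearMap.smul_apply, LinearMap.comp_apply,
        smul_eq_mul, map_sub, map_smul, LinearMap.sub_apply, mul_sub, R,
        mul_inv_cancel_left₀ (scale_ne_zero k)]
      ring
    simp only [error_eq]
    rw [const_mul_isLittleO_norm_mul_iff scale_ne_zero]
    have error_isLittleO : (fun k ↦ ∑ i, ‖R k (b i)‖) =o[atTop] fun _ ↦ (1 : ℝ) := by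
      refine .fun_sum fun i _ ↦ IsLittleO.norm_left ((isLittleO_one_iff ℝ).2 ?_)
      simpa [R, mul_comm] using (h.tendsto (b i) χ).sub_const (φ (b i) * χ e)
    refine IsBigO.trans_isLittleO (.of_bound 1 (.of_forall fun k ↦ ?_)) (by
      simpa only [one_mul] using
        error_isLittleO.mul_isBigO (basisSeminorm_apply_inv_pow_isBigO ρ a f b v atTop))
    rw [one_mul, Real.norm_of_nonneg (by positivity)]
    exact norm_dual_apply_le_sum_mul_basisSeminorm b (R k) _

/-- The functionals that are negligible on all `a⁻ᵏ bᵢ` compared with the size of `a⁻ᵏ` do not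
exhaust the dual, so they have a common zero `x`, and every other functional has to vanish at `x`
in order to be negligible. -/
theorem exists_ne_zero_forall_negligibleSubspace_ne_top [FiniteDimensional K E] [Nontrivial E]
    (ρ : Representation K G E) (a : G) {ι : Type*} [Fintype ι] (b : Basis ι K E) (l : Filter ℕ)
    [l.NeBot] :
    ∃ x : E, x ≠ 0 ∧ ∀ χ : Dual K E, χ x ≠ 0 →
      negligibleSubspace l (fun k ↦ χ ∘ₗ ρ (a ^ k)⁻¹) (inversePowSize ρ a b) ≠ ⊤ := by
  let negligible : Submodule K (Dual K E) :=
    ⨅ i, negligibleSubspace l (fun k ↦ Dual.eval K E (ρ (a ^ k)⁻¹ (b i))) (inversePowSize ρ a b)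
  have negligible_ne_top : negligible ≠ ⊤ := by
    intro htop
    have coord_negligible (i j : ι) :
        (fun k ↦ b.coord j (ρ (a ^ k)⁻¹ (b i))) =o[l] inversePowSize ρ a b :=
      (Submodule.mem_iInf _).1 (htop ▸ Submodule.mem_top : b.coord j ∈ negligible) i
    have size_isLittleO_self : inversePowSize ρ a b =o[l] inversePowSize ρ a b :=
      .fun_sum fun i _ ↦ .fun_sum fun j _ ↦ (coord_negligible i j).norm_left
    refine isLittleO_irrefl (.of_forall fun k ↦ ?_) size_isLittleO_self
    have := b.index_nonempty
    exact (Finset.sum_pos (fun i _ ↦ basisSeminorm_pos b (apply_ne_zero ρ _ (b.ne_zero i)))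
      Finset.univ_nonempty).ne'
  obtain ⟨x, hx, hx0⟩ := Submodule.exists_mem_ne_zero_of_ne_bot
    (show negligible.dualCoannihilator ≠ ⊥ from fun h ↦ negligible_ne_top <| by
      rw [← Subspace.dualCoannihilator_dualAnnihilator_eq (W := negligible), h,
        Submodule.dualAnnihilator_bot])
  refine ⟨x, hx0, fun χ hχ htop ↦ hχ ((Submodule.mem_dualCoannihilator x).1 hx χ ?_)⟩
  refine (Submodule.mem_iInf _).2 fun i ↦ ?_
  exact (htop ▸ Submodule.mem_top : b i ∈ negligibleSubspace l (fun k ↦ χ ∘ₗ ρ (a ^ k)⁻¹) _)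

theorem IsStronglyIrreducible.exists_freeGroup_hom_injective_of_hasRankOneLimit
    [FiniteDimensional K E] {ρ : Representation K G E} (hρ : IsStronglyIrreducible ρ)
    (hdim : 2 ≤ finrank K E) {a : G} {Λ : K} {φ : Dual K E} {e : E}
    (h : HasRankOneLimit (ρ a) Λ φ e) :
    ∃ f : FreeGroup (Fin 2) →* G, Function.Injective f := by
  have : Nontrivial E := nontrivial_of_finrank_pos (by omega : 0 < finrank K E)
  let b := Module.finBasis K E
  let l : Ultrafilter ℕ := hyperfilter ℕ
  obtain ⟨x, hx, exhausts⟩ := exists_ne_zero_forall_negligibleSubspace_ne_top ρ a b l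
  have ker_ne_top : LinearMap.ker φ ≠ ⊤ := mt LinearMap.ker_eq_top.1 h.functional_ne_zero
  obtain ⟨f, hf, hf'⟩ := hρ.exists_apply_notMem (ι := Unit) (κ := Unit) (v := fun _ ↦ x)
    (v' := fun _ ↦ x) (W := fun _ ↦ LinearMap.ker φ) (W' := fun _ ↦ LinearMap.ker φ)
    (fun _ ↦ hx) (fun _ ↦ ker_ne_top) (fun _ ↦ hx) (fun _ ↦ ker_ne_top)
  have contracts (f : G) : IsAsymptoticallyRankOne l (fun k ↦ ρ (a ^ k * f * (a ^ k)⁻¹))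
      (fun k ↦ Λ ^ k • (φ ∘ₗ ρ f ∘ₗ ρ (a ^ k)⁻¹)) e
      (fun k ↦ ‖Λ ^ k‖ * inversePowSize ρ a b k) :=
    (h.isAsymptoticallyRankOne b f).mono Nat.hyperfilter_le_atTop
  have not_negligible (f : G) (hf : ρ f x ∉ LinearMap.ker φ) :
      negligibleSubspace l (fun k ↦ Λ ^ k • (φ ∘ₗ ρ f ∘ₗ ρ (a ^ k)⁻¹))
        (fun k ↦ ‖Λ ^ k‖ * inversePowSize ρ a b k) ≠ ⊤ := by
    convert exhausts (φ ∘ₗ ρ f) hf using 1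
    ext v
    exact const_mul_isLittleO_norm_mul_iff fun k ↦ pow_ne_zero k h.scale_ne_zero
  refine hρ.exists_freeGroup_hom_injective_of_isAsymptoticallyRankOne hdim h.vector_ne_zero
    (contracts f) (not_negligible f (hf ())) (ψ' := _) (γ' := _) ?_ (not_negligible f⁻¹ (hf' ()))
  simpa only [mul_inv_rev, inv_inv, mul_assoc] using contracts f⁻¹

end FreeSubgroups

/-! ### Rank-one limits in exterior powers -/

section Growth

variable {K V : Type*} [NormedField K] [AddCommGroup V] [Module K V] {T : End K V}

/-- The vectors whose `T`-orbit grows at most like `r ^ k`, tested against all linear functionals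
so that no norm on `V` has to be chosen. -/
def growthSubspace (T : End K V) (r : ℝ) : Submodule K V where
  carrier := {v | ∀ χ : Dual K V, (fun k : ℕ ↦ χ ((T ^ k) v)) =O[atTop] (fun k ↦ r ^ k)}
  zero_mem' χ := by simpa only [map_zero] using isBigO_zero _ _
  add_mem' hx hy χ := by simpa only [map_add] using (hx χ).add (hy χ)
  smul_mem' c x hx χ := by simpa only [map_smul, smul_eq_mul] using (hx χ).const_mul_left c

theorem isBigO_pow_of_linear_recurrence {x y : ℕ → K} {μ : K} {r : ℝ} (hμ : ‖μ‖ < r)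
    (hy : y =O[atTop] (fun k ↦ r ^ k)) (hx : ∀ k, x (k + 1) = μ * x k + y k) :
    x =O[atTop] (fun k ↦ r ^ k) := by
  have hr : 0 < r := (norm_nonneg μ).trans_lt hμ
  obtain ⟨C, -, hC⟩ := bound_of_isBigO_nat_atTop hy
  have y_le (k : ℕ) : ‖y k‖ ≤ C * r ^ k := by
    simpa only [norm_pow, Real.norm_of_nonneg hr.le] using hC (pow_ne_zero k hr.ne')
  set D := max ‖x 0‖ (C / (r - ‖μ‖))
  have C_le : C ≤ D * (r - ‖μ‖) := by
    rw [← div_le_iff₀ (sub_pos.2 hμ)]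
    exact le_max_right _ _
  suffices x_le : ∀ k, ‖x k‖ ≤ D * r ^ k from
    IsBigO.of_bound D <| .of_forall fun k ↦ by
      simpa only [norm_pow, Real.norm_of_nonneg hr.le] using x_le k
  intro k
  induction k with
  | zero => simpa only [pow_zero, mul_one] using le_max_left _ _
  | succ k ih =>
    calc ‖x (k + 1)‖ ≤ ‖μ‖ * ‖x k‖ + ‖y k‖ := by
          rw [hx, ← norm_mul]
          exact norm_add_le _ _
      _ ≤ ‖μ‖ * (D * r ^ k) + C * r ^ k := by gcongr; exact y_le k
      _ = (‖μ‖ * D + C) * r ^ k := by ring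
      _ ≤ (D * r) * r ^ k := by gcongr; linarith
      _ = D * r ^ (k + 1) := by ring

theorem maxGenEigenspace_le_growthSubspace {μ : K} {r : ℝ} (hμ : ‖μ‖ < r) :
    T.maxGenEigenspace μ ≤ growthSubspace T r := by
  intro v hv
  obtain ⟨n, hn⟩ := End.mem_maxGenEigenspace T μ v |>.1 hv
  clear hv
  induction n generalizing v with
  | zero =>
    obtain rfl : v = 0 := hn
    exact zero_mem _
  | succ n ih =>
    have defect_mem : (T - μ • 1) v ∈ growthSubspace T r :=
      ih (by rwa [← End.mul_apply, ← pow_succ])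
    refine fun χ ↦ isBigO_pow_of_linear_recurrence hμ (defect_mem χ) fun k ↦ ?_
    rw [← smul_eq_mul, ← map_smul, ← map_add, pow_succ, End.mul_apply, ← map_smul,
      ← map_add]
    simp

theorem isBigO_multilinearMap_pow_apply [FiniteDimensional K V] {ι : Type*} [Fintype ι]
    (f : MultilinearMap K (fun _ : ι ↦ V) K) {v : ι → V} {r : ι → ℝ}
    (hv : ∀ i, v i ∈ growthSubspace T (r i)) :
    (fun k : ℕ ↦ f fun i ↦ (T ^ k) (v i)) =O[atTop] (fun k ↦ (∏ i, r i) ^ k) := by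
  classical
  let b := Module.finBasis K V
  have expansion (k : ℕ) : (f fun i ↦ (T ^ k) (v i)) =
      ∑ σ : ι → Fin (finrank K V), (∏ i, b.coord (σ i) ((T ^ k) (v i))) * f fun i ↦ b (σ i) := by
    calc (f fun i ↦ (T ^ k) (v i)) = f fun i ↦ ∑ j, b.coord j ((T ^ k) (v i)) • b j := by
          simp_rw [Basis.coord_apply, b.sum_repr]
      _ = _ := by simp_rw [f.map_sum, f.map_smul_univ, smul_eq_mul]
  simp_rw [expansion, ← Finset.prod_pow]
  refine IsBigO.fun_sum fun σ _ ↦ ?_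
  have hprod : (fun k : ℕ ↦ ∏ i, b.coord (σ i) ((T ^ k) (v i))) =O[atTop]
      (fun k ↦ ∏ i, r i ^ k) := IsBigO.finsetProd fun i _ ↦ hv i (b.coord (σ i))
  simpa only [mul_comm] using hprod.const_mul_left (f fun i ↦ b (σ i))

end Growth

section Blades

variable {K V : Type*} [Field K] [AddCommGroup V] [Module K V] {P Q : Submodule K V} {d : ℕ}

theorem exteriorPower_map_pow (T : End K V) (k : ℕ) :
    exteriorPower.map d (T ^ k) = exteriorPower.map d T ^ k := by
  induction k with
  | zero => exact exteriorPower.map_id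
  | succ k ih =>
    rw [pow_succ, pow_succ, ← ih]
    exact exteriorPower.map_comp T (T ^ k)

/-- The decomposable vector `p 0 ∧ ⋯ ∧ p (d - 1)` representing `P` inside `⋀ᵈ V`. -/
noncomputable def blade (p : Basis (Fin d) K P) : ⋀[K]^d V :=
  exteriorPower.ιMulti K d fun i ↦ (p i : V)

/-- The coordinate along `blade p` for the decomposition `V = P ⊕ Q`: project to `P` and take the
determinant in the basis `p`. -/
noncomputable def bladeFunctional (hPQ : IsCompl P Q) (p : Basis (Fin d) K P) :
    Dual K (⋀[K]^d V) :=
  exteriorPower.alternatingMapLinearEquiv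
    (p.det.compLinearMap (Submodule.projectionOnto P Q hPQ))

variable (hPQ : IsCompl P Q) (p : Basis (Fin d) K P)

theorem bladeFunctional_ιMulti (v : Fin d → V) :
    bladeFunctional hPQ p (exteriorPower.ιMulti K d v) =
      p.det fun i ↦ Submodule.projectionOnto P Q hPQ (v i) := by
  rw [bladeFunctional, exteriorPower.alternatingMapLinearEquiv_apply_ιMulti]
  rfl

theorem bladeFunctional_ιMulti_coe (v : Fin d → P) :
    bladeFunctional hPQ p (exteriorPower.ιMulti K d fun i ↦ (v i : V)) = p.det v := by
  rw [bladeFunctional_ιMulti]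
  exact congrArg p.det (funext fun i ↦ Submodule.projectionOnto_apply_left hPQ (v i))

theorem bladeFunctional_blade : bladeFunctional hPQ p (blade p) = 1 := by
  rw [blade, bladeFunctional_ιMulti_coe, Basis.det_self]

theorem bladeFunctional_ιMulti_eq_zero {v : Fin d → V} {i : Fin d} (hi : v i ∈ Q) :
    bladeFunctional hPQ p (exteriorPower.ιMulti K d v) = 0 := by
  rw [bladeFunctional_ιMulti]
  exact AlternatingMap.map_coord_zero _ i
    ((Submodule.projectionOnto_apply_eq_zero_iff hPQ).2 hi)

theorem apply_ιMulti_coe_eq_mul_blade (χ : Dual K (⋀[K]^d V)) (v : Fin d → P) :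
    χ (exteriorPower.ιMulti K d fun i ↦ (v i : V)) = p.det v * χ (blade p) := by
  have h := AlternatingMap.eq_smul_basis_det p
    ((χ.compAlternatingMap (exteriorPower.ιMulti K d)).compLinearMap P.subtype)
  rw [mul_comm]
  exact congrArg (· v) h

theorem span_ιMulti_eq_top_of_sup_eq_top (h : P ⊔ Q = ⊤) :
    Submodule.span K (exteriorPower.ιMulti K d '' {v | ∀ i, v i ∈ P ∨ v i ∈ Q}) = ⊤ := by
  have hspan : Submodule.span K ((P : Set V) ∪ Q) = ⊤ := by
    rw [Submodule.span_union, Submodule.span_eq, Submodule.span_eq, h]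
  rw [← exteriorPower.ιMulti_span_of_span K d V hspan]
  simp only [Set.range_subset_iff, Set.mem_union, SetLike.mem_coe]

end Blades

section DominantBlade

variable {K V : Type*} [NormedField K] [AddCommGroup V] [Module K V]
  {T : End K V} {P Q : Submodule K V} {d : ℕ} {r R : ℝ}

theorem tendsto_map_pow_ιMulti_of_mem_left (hT : ∀ x ∈ P, T x ∈ P)
    (hdet : LinearMap.det (T.restrict hT) ≠ 0) (hPQ : IsCompl P Q) (p : Basis (Fin d) K P)
    {v : Fin d → V} (hv : ∀ i, v i ∈ P) (χ : Dual K (⋀[K]^d V)) :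
    Tendsto (fun k : ℕ ↦ (LinearMap.det (T.restrict hT) ^ k)⁻¹ *
      χ (exteriorPower.map d (T ^ k) (exteriorPower.ιMulti K d v))) atTop
      (𝓝 (bladeFunctional hPQ p (exteriorPower.ιMulti K d v) * χ (blade p))) := by
  lift v to Fin d → P using hv
  refine tendsto_const_nhds.congr fun k ↦ ?_
  have hpow : (exteriorPower.map d (T ^ k)) (exteriorPower.ιMulti K d fun i ↦ (v i : V)) =
      exteriorPower.ιMulti K d fun i ↦ ((T.restrict hT ^ k) (v i) : V) := by
    rw [exteriorPower.map_apply_ιMulti, End.pow_restrict]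
    rfl
  have hdetpow : p.det (fun i ↦ (T.restrict hT ^ k) (v i)) =
      LinearMap.det (T.restrict hT) ^ k * p.det v := by
    rw [← map_pow]
    exact Basis.det_comp p _ v
  rw [hpow, apply_ιMulti_coe_eq_mul_blade p χ, hdetpow, bladeFunctional_ιMulti_coe, mul_assoc,
    inv_mul_cancel_left₀ (pow_ne_zero k hdet)]

variable [FiniteDimensional K V]

theorem tendsto_map_pow_ιMulti_of_mem_right {Λ : K} (hr : 0 ≤ r) (hR : 0 ≤ R)
    (hVR : growthSubspace T R = ⊤) (hQr : Q ≤ growthSubspace T r) (hΛ : R ^ (d - 1) * r < ‖Λ‖)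
    {v : Fin d → V} {i : Fin d} (hi : v i ∈ Q) (χ : Dual K (⋀[K]^d V)) :
    Tendsto (fun k : ℕ ↦ (Λ ^ k)⁻¹ *
      χ (exteriorPower.map d (T ^ k) (exteriorPower.ιMulti K d v))) atTop (𝓝 0) := by
  have hv (j : Fin d) : v j ∈ growthSubspace T (Function.update (fun _ ↦ R) i r j) := by
    rcases eq_or_ne j i with rfl | hj
    · simpa only [Function.update_self] using hQr hi
    · simp only [Function.update_of_ne hj, hVR, Submodule.mem_top]
  have hprod : ∏ j, Function.update (fun _ : Fin d ↦ R) i r j = R ^ (d - 1) * r := by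
    rw [Finset.prod_update_of_mem (Finset.mem_univ i), Finset.prod_const, mul_comm,
      Finset.card_sdiff_of_subset (Finset.subset_univ _)]
    simp
  have hgrowth := isBigO_multilinearMap_pow_apply
    (χ.compAlternatingMap (exteriorPower.ιMulti K d)).toMultilinearMap hv
  rw [hprod] at hgrowth
  have hlittle : (fun k : ℕ ↦ χ (exteriorPower.map d (T ^ k) (exteriorPower.ιMulti K d v)))
      =o[atTop] (fun k ↦ Λ ^ k) := by
    simp_rw [exteriorPower.map_apply_ιMulti]
    refine hgrowth.trans_isLittleO (IsLittleO.of_norm_right ?_)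
    simp_rw [norm_pow]
    exact isLittleO_pow_pow_of_lt_left (by positivity) hΛ
  simpa only [div_eq_inv_mul] using hlittle.tendsto_div_nhds_zero

theorem hasRankOneLimit_exteriorPower_map (hT : ∀ x ∈ P, T x ∈ P) (hPQ : IsCompl P Q)
    (p : Basis (Fin d) K P) (hr : 0 ≤ r) (hR : 0 ≤ R) (hVR : growthSubspace T R = ⊤)
    (hQr : Q ≤ growthSubspace T r)
    (hdom : R ^ (d - 1) * r < ‖LinearMap.det (T.restrict hT)‖) :
    HasRankOneLimit (exteriorPower.map d T) (LinearMap.det (T.restrict hT))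
      (bladeFunctional hPQ p) (blade p) := by
  have hdet : LinearMap.det (T.restrict hT) ≠ 0 :=
    norm_pos_iff.1 ((by positivity : 0 ≤ R ^ (d - 1) * r).trans_lt hdom)
  have hone : bladeFunctional hPQ p (blade p) ≠ 0 := by
    rw [bladeFunctional_blade]
    exact one_ne_zero
  refine ⟨hdet, fun h ↦ hone (by rw [h, LinearMap.zero_apply]),
    fun h ↦ hone (by rw [h, map_zero]), fun x χ ↦ ?_⟩
  simp_rw [← exteriorPower_map_pow]
  have hx : x ∈ Submodule.span K
      (exteriorPower.ιMulti K d '' {v | ∀ i, v i ∈ P ∨ v i ∈ Q}) := by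
    rw [span_ιMulti_eq_top_of_sup_eq_top hPQ.sup_eq_top]
    trivial
  induction hx using Submodule.span_induction with
  | zero => simpa only [map_zero, mul_zero, zero_mul] using tendsto_const_nhds
  | add x y _ _ hx hy => simpa only [map_add, mul_add, add_mul] using hx.add hy
  | smul c x _ hx =>
    simpa only [map_smul, smul_eq_mul, mul_left_comm _ c, mul_assoc] using hx.const_mul c
  | mem x hx =>
    obtain ⟨v, hv, rfl⟩ := hx
    by_cases hvP : ∀ i, v i ∈ P
    · exact tendsto_map_pow_ιMulti_of_mem_left hT hdet hPQ p hvP χ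
    · push Not at hvP
      obtain ⟨i, hi⟩ := hvP
      have hiQ : v i ∈ Q := (hv i).resolve_left hi
      rw [bladeFunctional_ιMulti_eq_zero hPQ p hiQ, zero_mul]
      exact tendsto_map_pow_ιMulti_of_mem_right hr hR hVR hQr hdom hiQ χ

end DominantBlade

section SpectralSubspace

variable {K V : Type*} [Field K] [AddCommGroup V] [Module K V] {T : End K V} {S : Set K}

/-- The sum of the generalized eigenspaces of `T` for the eigenvalues in `S`. -/
def spectralSubspace (T : End K V) (S : Set K) : Submodule K V :=
  ⨆ μ ∈ S, T.maxGenEigenspace μ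

theorem maxGenEigenspace_eq_bot {μ : K} (hμ : ¬ T.HasEigenvalue μ) :
    T.maxGenEigenspace μ = ⊥ := by
  by_contra h
  have hμtop : T.HasUnifEigenvalue μ ⊤ := h
  exact hμ (hμtop.lt zero_lt_one)

theorem spectralSubspace_le {U : Submodule K V}
    (h : ∀ μ ∈ S, T.HasEigenvalue μ → T.maxGenEigenspace μ ≤ U) : spectralSubspace T S ≤ U :=
  iSup₂_le fun μ hμ ↦ by
    by_cases hT : T.HasEigenvalue μ
    · exact h μ hμ hT
    · exact (maxGenEigenspace_eq_bot hT).trans_le bot_le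

theorem mem_spectralSubspace {μ : K} {v : V} (hμ : μ ∈ S) (hv : T v = μ • v) :
    v ∈ spectralSubspace T S := by
  have hv' : v ∈ T.maxGenEigenspace μ :=
    (End.mem_maxGenEigenspace T μ v).2 ⟨1, by simp [hv]⟩
  exact Submodule.mem_iSup_of_mem μ (Submodule.mem_iSup_of_mem hμ hv')

theorem apply_mem_spectralSubspace : ∀ x ∈ spectralSubspace T S, T x ∈ spectralSubspace T S := by
  have h : spectralSubspace T S ≤ (spectralSubspace T S).comap T := iSup₂_le fun μ hμ y hy ↦
    Submodule.mem_iSup_of_mem μ <| Submodule.mem_iSup_of_mem hμ <|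
      End.mapsTo_maxGenEigenspace_of_comm (Commute.refl T) μ hy
  exact fun x hx ↦ h hx

variable [IsAlgClosed K] [FiniteDimensional K V]

theorem isCompl_spectralSubspace_compl (T : End K V) (S : Set K) :
    IsCompl (spectralSubspace T S) (spectralSubspace T Sᶜ) := by
  refine ⟨T.independent_maxGenEigenspace.disjoint_biSup_biSup disjoint_compl_right,
    codisjoint_iff.2 ?_⟩
  rw [spectralSubspace, spectralSubspace, ← iSup_union, Set.union_compl_self]
  simpa only [Set.mem_univ, iSup_pos] using T.iSup_maxGenEigenspace_eq_top

theorem mem_of_hasEigenvalue_restrict_spectralSubspace {μ : K}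
    (hμ : End.HasEigenvalue (T.restrict (apply_mem_spectralSubspace (S := S))) μ) :
    μ ∈ S := by
  obtain ⟨⟨x, hxS⟩, hx⟩ := hμ.exists_hasEigenvector
  by_contra hμS
  have hxSc : x ∈ spectralSubspace T Sᶜ :=
    mem_spectralSubspace hμS (congrArg Subtype.val hx.apply_eq_smul)
  have hdisj := (isCompl_spectralSubspace_compl T S).disjoint
  exact hx.2 (Subtype.ext (Submodule.disjoint_def.1 hdisj x hxS hxSc))

end SpectralSubspace

section DominantExteriorPower

variable {K V : Type*} [NormedField K] [AddCommGroup V] [Module K V] [FiniteDimensional K V]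

theorem exists_spectral_gap (T : End K V) {R : ℝ} (hR : 0 < R)
    (h : ∀ μ, T.HasEigenvalue μ → ‖μ‖ ≤ R) :
    ∃ r, 0 ≤ r ∧ r < R ∧ spectralSubspace T {μ : K | ‖μ‖ = R}ᶜ ≤ growthSubspace T r := by
  have hgap : ∀ᶠ r in 𝓝[<] R, ∀ μ ∈ {μ | T.HasEigenvalue μ}, ‖μ‖ ≠ R → ‖μ‖ < r :=
    (eventually_all_finite T.finite_hasEigenvalue).2 fun μ hμ ↦
      eventually_imp_distrib_left.2 fun hne ↦
        mem_of_superset (Ioo_mem_nhdsLT ((h μ hμ).lt_of_ne hne)) fun r hr ↦ hr.1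
  obtain ⟨r, hr, hr0, hrR⟩ := (hgap.and (Ioo_mem_nhdsLT hR)).exists
  exact ⟨r, hr0.le, hrR, spectralSubspace_le fun μ hμS hμ ↦
    maxGenEigenspace_le_growthSubspace (hr μ hμ hμS)⟩

theorem growthSubspace_eq_top [IsAlgClosed K] {T : End K V} {R : ℝ}
    (h : ∀ μ, T.HasEigenvalue μ → ‖μ‖ < R) : growthSubspace T R = ⊤ := by
  rw [eq_top_iff, ← T.iSup_maxGenEigenspace_eq_top]
  refine iSup_le fun μ ↦ ?_
  by_cases hμ : T.HasEigenvalue μ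
  · exact maxGenEigenspace_le_growthSubspace (h μ hμ)
  · exact (maxGenEigenspace_eq_bot hμ).trans_le bot_le

variable [IsAlgClosed K]

theorem norm_det_eq_pow_finrank {T : End K V} {R : ℝ}
    (h : ∀ μ, T.HasEigenvalue μ → ‖μ‖ = R) : ‖LinearMap.det T‖ = R ^ finrank K V := by
  have hroots : ∀ μ ∈ T.charpoly.roots, ‖μ‖ = R := fun μ hμ ↦
    h μ ((End.hasEigenvalue_iff_isRoot_charpoly T μ).2 (Polynomial.mem_roots'.1 hμ).2)
  calc ‖LinearMap.det T‖ = (T.charpoly.roots.map norm).prod := by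
        rw [End.det_eq_prod_roots_charpoly_of_splits (IsAlgClosed.splits _)]
        exact map_multiset_prod (normHom (α := K)) _
    _ = R ^ Multiset.card T.charpoly.roots := by
        rw [Multiset.map_congr rfl hroots, Multiset.map_const', Multiset.prod_replicate]
    _ = R ^ finrank K V := by
        rw [IsAlgClosed.card_roots_eq_natDegree, LinearMap.charpoly_natDegree]

theorem exists_exteriorPower_hasRankOneLimit {T : End K V} {t : K}
    (ht : T.HasEigenvalue t) (h1 : 1 < ‖t‖) :
    ∃ d ≤ finrank K V, ∃ (Λ : K) (φ : Dual K (⋀[K]^d V)) (e : ⋀[K]^d V), 1 < ‖Λ‖ ∧ φ e = 1 ∧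
      HasRankOneLimit (exteriorPower.map d T) Λ φ e := by
  obtain ⟨m, hm, hmax⟩ := Set.exists_max_image _ (fun μ : K ↦ ‖μ‖) T.finite_hasEigenvalue ⟨t, ht⟩
  set R := ‖m‖
  have hR1 : 1 < R := h1.trans_le (hmax t ht)
  have hR0 : 0 < R := one_pos.trans hR1
  set P := spectralSubspace T {μ : K | ‖μ‖ = R}
  set d := finrank K P
  have hnorm : ‖LinearMap.det (T.restrict (apply_mem_spectralSubspace (S := {μ : K | ‖μ‖ = R})))‖
      = R ^ d :=
    norm_det_eq_pow_finrank fun _ ↦ mem_of_hasEigenvalue_restrict_spectralSubspace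
  have hd0 : d ≠ 0 := by
    obtain ⟨x, hx⟩ := End.HasEigenvalue.exists_hasEigenvector hm
    have hxP : x ∈ P := mem_spectralSubspace rfl hx.apply_eq_smul
    intro hd
    rw [Submodule.finrank_eq_zero.1 hd] at hxP
    exact hx.2 hxP
  obtain ⟨r, hr0, hrR, hr⟩ := exists_spectral_gap T hR0 hmax
  have hlt : R ^ (d - 1) * r < R ^ d := by
    rw [← pow_sub_one_mul hd0]
    gcongr
  have hlarge : ∀ᶠ R' in 𝓝[>] R, R' ^ (d - 1) * r < R ^ d :=
    (((continuous_pow (d - 1)).mul continuous_const).tendsto' R _ rfl).mono_left nhdsWithin_le_nhds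
      |>.eventually (gt_mem_nhds hlt)
  obtain ⟨R', hdom, hRR'⟩ := (hlarge.and self_mem_nhdsWithin).exists
  have hVR' : growthSubspace T R' = ⊤ :=
    growthSubspace_eq_top fun μ hμ ↦ (hmax μ hμ).trans_lt hRR'
  exact ⟨d, Submodule.finrank_le P, _, _, _, hnorm ▸ one_lt_pow₀ hR1 hd0,
    bladeFunctional_blade _ _,
    hasRankOneLimit_exteriorPower_map apply_mem_spectralSubspace
      (isCompl_spectralSubspace_compl T _) (Module.finBasis K P) hr0 (hR0.trans hRR').le hVR' hr
      (hnorm ▸ hdom)⟩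

end DominantExteriorPower

/-! ### Strongly irreducible layers -/

section Layers

variable {K G V : Type*} [Field K] [Group G] [AddCommGroup V] [Module K V]
  {ρ : Representation K G V} {H H' : Subgroup G} {U U₀ U₁ : Submodule K V}

/-- The pair `U₀ ≤ U₁` of `H`-invariant subspaces has a strongly irreducible quotient. -/
structure IsStronglyIrreducibleLayer (ρ : Representation K G V) (H : Subgroup G)
    (U₀ U₁ : Submodule K V) : Prop where
  le : U₀ ≤ U₁
  isInvariantUnder_left : IsInvariantUnder ρ H U₀
  isInvariantUnder_right : IsInvariantUnder ρ H U₁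
  eq_or_eq : ∀ H' ≤ H, H'.FiniteIndex → ∀ U, IsInvariantUnder ρ H' U → U₀ ≤ U → U ≤ U₁ →
    U = U₀ ∨ U = U₁

/-- Every vector of `U₁` outside `U₀` is nonzero in some strongly irreducible layer. For `U₀ = ⊥`
and `U₁ = ⊤` this is what we need to know about a flag with strongly irreducible layers. -/
def HasStronglyIrreducibleLayers (ρ : Representation K G V) (H : Subgroup G)
    (U₀ U₁ : Submodule K V) : Prop :=
  ∀ e ∈ U₁, e ∉ U₀ → ∃ W₀ W₁, IsStronglyIrreducibleLayer ρ H W₀ W₁ ∧ e ∈ W₁ ∧ e ∉ W₀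

theorem IsInvariantUnder.mono (h : IsInvariantUnder ρ H U) (hle : H' ≤ H) :
    IsInvariantUnder ρ H' U := fun g hg ↦ h g (hle hg)

theorem HasStronglyIrreducibleLayers.mono (h : HasStronglyIrreducibleLayers ρ H U₀ U₁)
    (hle : H' ≤ H) : HasStronglyIrreducibleLayers ρ H' U₀ U₁ := by
  intro e he₁ he₀
  obtain ⟨W₀, W₁, hW, heW⟩ := h e he₁ he₀
  exact ⟨W₀, W₁, ⟨hW.le, hW.isInvariantUnder_left.mono hle, hW.isInvariantUnder_right.mono hle,
    fun L hL ↦ hW.eq_or_eq L (hL.trans hle)⟩, heW⟩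

theorem HasStronglyIrreducibleLayers.trans (h₀ : HasStronglyIrreducibleLayers ρ H U₀ U)
    (h₁ : HasStronglyIrreducibleLayers ρ H U U₁) : HasStronglyIrreducibleLayers ρ H U₀ U₁ := by
  intro e he₁ he₀
  by_cases he : e ∈ U
  · exact h₀ e he he₀
  · exact h₁ e he₁ he

theorem exists_hasStronglyIrreducibleLayers_between [FiniteDimensional K V]
    (hH : H.FiniteIndex) (h₀ : IsInvariantUnder ρ H U₀) (h₁ : IsInvariantUnder ρ H U₁)
    (hle : U₀ ≤ U₁) :
    ∃ H' ≤ H, H'.FiniteIndex ∧ HasStronglyIrreducibleLayers ρ H' U₀ U₁ := by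
  induction hn : finrank K U₁ - finrank K U₀ using Nat.strong_induction_on
    generalizing H U₀ U₁ with
  | _ n ih =>
  by_cases! hirr : ∀ H' ≤ H, H'.FiniteIndex → ∀ U, IsInvariantUnder ρ H' U → U₀ ≤ U → U ≤ U₁ →
    U = U₀ ∨ U = U₁
  · exact ⟨H, le_rfl, hH, fun e he₁ he₀ ↦ ⟨U₀, U₁, ⟨hle, h₀, h₁, hirr⟩, he₁, he₀⟩⟩
  · obtain ⟨H', hH'H, hH', U, hU, hU₀, hU₁, hne₀, hne₁⟩ := hirr
    have rank_lt₀ := Submodule.finrank_lt_finrank_of_lt (hU₀.lt_of_ne hne₀.symm)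
    have rank_lt₁ := Submodule.finrank_lt_finrank_of_lt (hU₁.lt_of_ne hne₁)
    obtain ⟨L₀, hL₀, _, layers₀⟩ := ih _ (by omega) hH' (h₀.mono hH'H) hU hU₀ rfl
    obtain ⟨L₁, -, _, layers₁⟩ := ih _ (by omega) hH' hU (h₁.mono hH'H) hU₁ rfl
    exact ⟨L₀ ⊓ L₁, inf_le_left.trans (hL₀.trans hH'H), inferInstance,
      (layers₀.mono inf_le_left).trans (layers₁.mono inf_le_right)⟩

theorem exists_hasStronglyIrreducibleLayers [FiniteDimensional K V] (ρ : Representation K G V) :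
    ∃ H : Subgroup G, H.FiniteIndex ∧ HasStronglyIrreducibleLayers ρ H ⊥ ⊤ := by
  obtain ⟨H, -, hH⟩ := exists_hasStronglyIrreducibleLayers_between (ρ := ρ) (H := ⊤) (U₀ := ⊥)
    (U₁ := ⊤) inferInstance (fun _ _ ↦ bot_le) (fun _ _ ↦ le_top) bot_le
  exact ⟨H, hH⟩

/-- The action of `G` on the `d`-th exterior power of a representation. -/
noncomputable def exteriorPowerRep (ρ : Representation K G V) (d : ℕ) :
    Representation K G (⋀[K]^d V) where
  toFun g := exteriorPower.map d (ρ g)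
  map_one' := by rw [map_one, End.one_eq_id, exteriorPower.map_id, End.one_eq_id]
  map_mul' g h := by
    rw [map_mul, End.mul_eq_comp, exteriorPower.map_comp, End.mul_eq_comp]

theorem exists_forall_hasStronglyIrreducibleLayers_exteriorPowerRep [FiniteDimensional K V]
    (ρ : Representation K G V) : ∃ H : Subgroup G, H.FiniteIndex ∧
      ∀ d ≤ finrank K V, HasStronglyIrreducibleLayers (exteriorPowerRep ρ d) H ⊥ ⊤ := by
  choose L hL layers using fun d ↦ exists_hasStronglyIrreducibleLayers (exteriorPowerRep ρ d)
  refine ⟨⨅ d : Fin (finrank K V + 1), L d, Subgroup.finiteIndex_iInf fun d ↦ hL d,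
    fun d hd ↦ (layers d).mono ?_⟩
  exact iInf_le (fun d : Fin (finrank K V + 1) ↦ L d) ⟨d, Nat.lt_succ_of_le hd⟩

namespace IsStronglyIrreducibleLayer

/-- The representation of `H` on `U₁ ⧸ U₀`. -/
def rep (h : IsStronglyIrreducibleLayer ρ H U₀ U₁) :
    Representation K H (U₁ ⧸ U₀.submoduleOf U₁) :=
  (Representation.subrepresentation (ρ.comp H.subtype) U₁
    fun g ↦ h.isInvariantUnder_right g g.2).quotient (U₀.submoduleOf U₁)
    fun g _ hx ↦ h.isInvariantUnder_left g g.2 hx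

theorem isStronglyIrreducible_rep [H.FiniteIndex] (h : IsStronglyIrreducibleLayer ρ H U₀ U₁) :
    IsStronglyIrreducible h.rep := by
  intro L hL W hW
  let U : Submodule K V := (W.comap (U₀.submoduleOf U₁).mkQ).map U₁.subtype
  have coe_mem_U (x : U₁) : (x : V) ∈ U ↔ (U₀.submoduleOf U₁).mkQ x ∈ W :=
    U₁.subtype_injective.mem_set_image
  have finiteIndex_map : (L.map H.subtype).FiniteIndex := ⟨by
    rw [Subgroup.index_map_subtype]
    exact mul_ne_zero hL.index_ne_zero Subgroup.FiniteIndex.index_ne_zero⟩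
  have invariant_U : IsInvariantUnder ρ (L.map H.subtype) U := by
    rintro _ ⟨g, hg, rfl⟩ _ ⟨y, hy, rfl⟩
    exact (coe_mem_U ⟨ρ g y, h.isInvariantUnder_right g g.2 y.2⟩).2 (hW g hg hy)
  have U₀_le : U₀ ≤ U := fun x hx ↦ (coe_mem_U ⟨x, h.le hx⟩).2 <| by
    have hzero : (U₀.submoduleOf U₁).mkQ ⟨x, h.le hx⟩ = 0 :=
      (Submodule.Quotient.mk_eq_zero _).2 hx
    exact hzero ▸ W.zero_mem
  rcases h.eq_or_eq _ (Subgroup.map_subtype_le L) finiteIndex_map U invariant_U U₀_le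
    (Submodule.map_subtype_le _ _) with hU | hU
  · refine .inl ((Submodule.eq_bot_iff _).2 fun y hy ↦ ?_)
    obtain ⟨x, rfl⟩ := Submodule.mkQ_surjective _ y
    have hx := (coe_mem_U x).2 hy
    rw [hU] at hx
    exact (Submodule.Quotient.mk_eq_zero _).2 hx
  · refine .inr ((Submodule.eq_top_iff').2 fun y ↦ ?_)
    obtain ⟨x, rfl⟩ := Submodule.mkQ_surjective _ y
    refine (coe_mem_U x).1 ?_
    rw [hU]
    exact x.2

end IsStronglyIrreducibleLayer

theorem apply_eq_one_of_mem_commutator (σ : Representation K G V) (hV : finrank K V = 1) {a : G}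
    (ha : a ∈ commutator G) : σ a = 1 := by
  obtain ⟨v, -, hspan⟩ := finrank_eq_one_iff'.1 hV
  have hcomm (S T : End K V) : Commute S T := LinearMap.ext fun w ↦ by
    obtain ⟨c, rfl⟩ := hspan w
    obtain ⟨s, hs⟩ := hspan (S v)
    obtain ⟨t, ht⟩ := hspan (T v)
    simp only [End.mul_apply, map_smul, ← hs, ← ht, smul_comm t s v]
  have hle : commutator G ≤ σ.toHomUnits.ker := by
    rw [commutator_def, Subgroup.commutator_le]
    intro g _ h _
    rw [MonoidHom.mem_ker, map_commutatorElement, commutatorElement_eq_one_iff_mul_comm]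
    exact Units.ext (hcomm (σ g) (σ h))
  exact congrArg Units.val (MonoidHom.mem_ker.1 (hle ha))

end Layers

section RankOneLimitInLayers

variable {K V : Type*} [NormedField K] [AddCommGroup V] [Module K V] {T : End K V} {Λ : K}
  {φ : Dual K V} {e : V} {U : Submodule K V}

namespace HasRankOneLimit

theorem restrict (h : HasRankOneLimit T Λ φ e) (hU : ∀ x ∈ U, T x ∈ U) (he : e ∈ U)
    (hφe : φ e ≠ 0) : HasRankOneLimit (T.restrict hU) Λ (φ.domRestrict U) ⟨e, he⟩ where
  scale_ne_zero := h.scale_ne_zero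
  functional_ne_zero hφ := hφe (LinearMap.congr_fun hφ ⟨e, he⟩)
  vector_ne_zero he0 := h.vector_ne_zero (congrArg Subtype.val he0)
  tendsto x χ := by
    obtain ⟨χ', rfl⟩ := LinearMap.exists_extend χ
    have hpow (k : ℕ) : ((T.restrict hU ^ k) x : V) = (T ^ k) x := by
      rw [End.pow_restrict]
      rfl
    simpa only [LinearMap.comp_apply, Submodule.subtype_apply, hpow] using! h.tendsto x χ'

theorem le_ker (h : HasRankOneLimit T Λ φ e) (hU : U ≤ U.comap T) (he : e ∉ U) :
    U ≤ LinearMap.ker φ := by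
  intro x hx
  obtain ⟨χ, hχe, hχU⟩ := Submodule.exists_le_ker_of_notMem he
  have hzero (k : ℕ) : (Λ ^ k)⁻¹ * χ ((T ^ k) x) = 0 := by
    have hTx : (T ^ k) x ∈ U := End.pow_apply_mem_of_forall_mem k hU x hx
    rw [LinearMap.mem_ker.1 (hχU hTx), mul_zero]
  have hlim := h.tendsto x χ
  simp_rw [hzero] at hlim
  exact (mul_eq_zero.1 (tendsto_nhds_unique hlim tendsto_const_nhds)).resolve_right hχe

theorem mapQ (h : HasRankOneLimit T Λ φ e) (hU : U ≤ U.comap T) (he : e ∉ U) :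
    HasRankOneLimit (U.mapQ U T hU) Λ (U.liftQ φ (h.le_ker hU he)) (U.mkQ e) where
  scale_ne_zero := h.scale_ne_zero
  functional_ne_zero hφ := h.functional_ne_zero <| by
    rw [← U.liftQ_mkQ φ (h.le_ker hU he), hφ, LinearMap.zero_comp]
  vector_ne_zero he0 := he ((Submodule.Quotient.mk_eq_zero U).1 he0)
  tendsto x χ := by
    obtain ⟨x, rfl⟩ := U.mkQ_surjective x
    have hpow (k : ℕ) : (U.mapQ U T hU ^ k) (U.mkQ x) = U.mkQ ((T ^ k) x) := by
      rw [← Submodule.mapQ_pow]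
      rfl
    simpa only [hpow] using! h.tendsto x (χ ∘ₗ U.mkQ)

theorem ne_one (h : HasRankOneLimit T Λ φ e) (hΛ : 1 < ‖Λ‖) (hφe : φ e ≠ 0) : T ≠ 1 := by
  rintro rfl
  obtain ⟨χ, hχ⟩ : ∃ χ : Dual K V, χ e ≠ 0 := by
    by_contra! hcon
    exact h.vector_ne_zero ((Module.forall_dual_apply_eq_zero_iff K e).1 hcon)
  have hzero : Tendsto (fun k : ℕ ↦ (Λ ^ k)⁻¹ * χ ((1 ^ k : End K V) e)) atTop (𝓝 0) := by
    have hΛk : Tendsto (fun k : ℕ ↦ Λ⁻¹ ^ k) atTop (𝓝 0) :=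
      tendsto_pow_atTop_nhds_zero_of_norm_lt_one (by
        rw [norm_inv]
        exact inv_lt_one_of_one_lt₀ hΛ)
    simpa only [one_pow, End.one_apply, inv_pow, zero_mul] using hΛk.mul_const (χ e)
  exact mul_ne_zero hφe hχ (tendsto_nhds_unique (h.tendsto e χ) hzero)

end HasRankOneLimit

variable {G : Type*} [Group G] {ρ : Representation K G V} {H : Subgroup G}
  {U₀ U₁ : Submodule K V}

theorem IsStronglyIrreducibleLayer.exists_freeGroup_hom_injective [FiniteDimensional K V]
    [H.FiniteIndex] (hU : IsStronglyIrreducibleLayer ρ H U₀ U₁) {a : H} (ha : a ∈ commutator H)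
    (hΛ : 1 < ‖Λ‖) (hφe : φ e ≠ 0) (h : HasRankOneLimit (ρ a) Λ φ e) (he₁ : e ∈ U₁)
    (he₀ : e ∉ U₀) : ∃ f : FreeGroup (Fin 2) →* H, Function.Injective f := by
  have hlayer : HasRankOneLimit (hU.rep a) Λ _ _ :=
    (h.restrict (hU.isInvariantUnder_right a a.2) he₁ hφe).mapQ (U := U₀.submoduleOf U₁)
      (fun x hx ↦ hU.isInvariantUnder_left a a.2 hx) he₀
  have : Nontrivial (U₁ ⧸ U₀.submoduleOf U₁) := ⟨_, 0, hlayer.vector_ne_zero⟩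
  have hpos : 0 < finrank K (U₁ ⧸ U₀.submoduleOf U₁) := finrank_pos
  have hne_one : finrank K (U₁ ⧸ U₀.submoduleOf U₁) ≠ 1 := fun hone ↦
    hlayer.ne_one hΛ hφe (apply_eq_one_of_mem_commutator hU.rep hone ha)
  exact hU.isStronglyIrreducible_rep.exists_freeGroup_hom_injective_of_hasRankOneLimit
    (by omega) hlayer

theorem exists_freeGroup_hom_injective_of_one_lt_norm_eigenvalue [IsAlgClosed K]
    [FiniteDimensional K V] [H.FiniteIndex]
    (layers : ∀ d ≤ finrank K V, HasStronglyIrreducibleLayers (exteriorPowerRep ρ d) H ⊥ ⊤)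
    {a : H} (ha : a ∈ commutator H) {t : K} (ht : End.HasEigenvalue (ρ a) t)
    (ht1 : 1 < ‖t‖) :
    ∃ f : FreeGroup (Fin 2) →* H, Function.Injective f := by
  obtain ⟨d, hd, Λ, φ, e, hΛ, hφe, hlim⟩ := exists_exteriorPower_hasRankOneLimit ht ht1
  obtain ⟨U₀, U₁, hU, he₁, he₀⟩ := layers d hd e Submodule.mem_top
    (mt (Submodule.mem_bot K).1 hlim.vector_ne_zero)
  exact hU.exists_freeGroup_hom_injective ha hΛ (hφe ▸ one_ne_zero) hlim he₁ he₀

end RankOneLimitInLayers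

theorem hasEigenvalue_apply_inv {K G V : Type*} [Field K] [Group G] [AddCommGroup V] [Module K V]
    (ρ : Representation K G V) {g : G} {t : K} (h : End.HasEigenvalue (ρ g) t) :
    t ≠ 0 ∧ End.HasEigenvalue (ρ g⁻¹) t⁻¹ := by
  obtain ⟨x, hx⟩ := h.exists_hasEigenvector
  have ht : t ≠ 0 := by
    rintro rfl
    exact apply_ne_zero ρ g hx.2 (by rw [hx.apply_eq_smul, zero_smul])
  refine ⟨ht, End.hasEigenvalue_of_hasEigenvector
    ⟨End.mem_eigenspace_iff.2 ?_, hx.2⟩⟩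
  rw [eq_inv_smul_iff₀ ht, ← map_smul, ← hx.apply_eq_smul, ρ.inv_self_apply]

theorem exists_freeGroup_hom_injective_of_absoluteValue_eigenvalue_ne_one {K G V : Type*}
    [Field K] [IsAlgClosed K] [Group G] [AddCommGroup V] [Module K V] [FiniteDimensional K V]
    {ρ : Representation K G V} {H : Subgroup G} [H.FiniteIndex]
    (layers : ∀ d ≤ finrank K V, HasStronglyIrreducibleLayers (exteriorPowerRep ρ d) H ⊥ ⊤)
    {a : H} (ha : a ∈ commutator H) {t : K} (ht : End.HasEigenvalue (ρ a) t)
    (v : AbsoluteValue K ℝ) (hvt : v t ≠ 1) :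
    ∃ f : FreeGroup (Fin 2) →* H, Function.Injective f := by
  let _ : NormedField K := v.toNormedField
  obtain ⟨ht0, ht_inv⟩ := hasEigenvalue_apply_inv ρ ht
  rcases hvt.lt_or_gt with hlt | hgt
  · refine exists_freeGroup_hom_injective_of_one_lt_norm_eigenvalue layers
      (Subgroup.inv_mem _ ha) ht_inv ?_
    rw [norm_inv]
    exact (one_lt_inv₀ (norm_pos_iff.2 ht0)).2 hlt
  · exact exists_freeGroup_hom_injective_of_one_lt_norm_eigenvalue layers ha ht hgt

/-! ### Absolute values on countable fields -/

theorem nonempty_algHom_of_isTranscendenceBasis {ι A K L : Type*} [CommRing A] [Nontrivial A]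
    [Field K] [Field L] [IsAlgClosed L] [Algebra A K] [Algebra A L] {x : ι → K} {y : ι → L}
    (hx : IsTranscendenceBasis A x) (hy : AlgebraicIndependent A y) : Nonempty (K →ₐ[A] L) := by
  let B := Algebra.adjoin A (Set.range x)
  let f : B →ₐ[A] L := (MvPolynomial.aeval y).comp hx.1.aevalEquiv.symm.toAlgHom
  have f_injective : Function.Injective f := by
    simpa [f] using Function.Injective.comp hy hx.1.aevalEquiv.symm.injective
  let _ : Algebra B L := f.toAlgebra
  have : IsScalarTower A B L := .of_algebraMap_eq' f.comp_algebraMap.symm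
  have : FaithfulSMul B L := (faithfulSMul_iff_algebraMap_injective B L).2 f_injective
  have : Algebra.IsAlgebraic B K := hx.isAlgebraic
  exact ⟨(IsAlgClosed.lift (R := B) (S := K) (M := L)).restrictScalars A⟩

theorem infinite_of_isTranscendenceBasis_of_uncountable {ι A L : Type*} [CommRing A] [IsDomain A]
    [Countable A] [Field L] [IsAlgClosed L] [Uncountable L] [Algebra A L] {y : ι → L}
    (hy : IsTranscendenceBasis A y) : Infinite ι := by
  have card_eq := IsAlgClosed.cardinal_eq_cardinal_transcendence_basis_of_aleph0_lt y hy
    (Cardinal.mk_le_aleph0_iff.2 inferInstance) (Cardinal.aleph0_lt_mk_iff.2 inferInstance)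
  rw [Cardinal.infinite_iff, ← Cardinal.aleph0_le_lift, ← card_eq, Cardinal.aleph0_le_lift]
  exact Cardinal.aleph0_le_mk L

theorem nonempty_algHom_of_countable_of_uncountable {A K L : Type*} [CommRing A] [IsDomain A]
    [Countable A] [Field K] [Countable K] [Field L] [IsAlgClosed L] [Uncountable L]
    [Algebra A K] [Algebra A L] [FaithfulSMul A K] [FaithfulSMul A L] :
    Nonempty (K →ₐ[A] L) := by
  obtain ⟨s, hs⟩ := exists_isTranscendenceBasis A K
  obtain ⟨u, hu⟩ := exists_isTranscendenceBasis A L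
  have : Infinite u := infinite_of_isTranscendenceBasis_of_uncountable hu
  obtain ⟨e, he⟩ := exists_injective_nat s
  exact nonempty_algHom_of_isTranscendenceBasis hs
    (hu.1.comp (Infinite.natEmbedding u ∘ e) ((Infinite.natEmbedding u).injective.comp he))

theorem exists_absoluteValue_of_ringHom {A K L : Type*} [CommRing A]
    [IsDomain A] [Countable A] [Field K] [Countable K] [Algebra A K] [FaithfulSMul A K]
    [NormedField L] [IsAlgClosed L] [Uncountable L] {f : A →+* L} (hf : Function.Injective f) :
    ∃ v : AbsoluteValue K ℝ, ∀ a, v (algebraMap A K a) = ‖f a‖ := by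
  let _ : Algebra A L := f.toAlgebra
  have : FaithfulSMul A L := (faithfulSMul_iff_algebraMap_injective A L).2 hf
  obtain ⟨g⟩ : Nonempty (K →ₐ[A] L) := nonempty_algHom_of_countable_of_uncountable
  refine ⟨(IsAbsoluteValue.toAbsoluteValue (norm : L → ℝ)).comp
    (f := (g : K →+* L)) (g : K →+* L).injective, fun a ↦ ?_⟩
  exact congrArg norm (g.commutes a)

theorem uncountable_of_completeSpace (E : Type*) [NontriviallyNormedField E] [CompleteSpace E] :
    Uncountable E :=
  Cardinal.aleph0_lt_mk_iff.1
    (Cardinal.aleph0_lt_continuum.trans_le (continuum_le_cardinal_of_nontriviallyNormedField E))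

theorem exists_absoluteValue_ne_one_of_valued {A K E : Type*} [CommRing A] [IsDomain A]
    [Countable A] [Field K] [Countable K] [Algebra A K] [FaithfulSMul A K] [Field E]
    [Valued E (WithZero (Multiplicative ℤ))] [CompleteSpace E] {f : A →+* E}
    (hf : Function.Injective f) {a : A} (ha : a ≠ 0)
    (ha' : (Valued.v (f a) : WithZero (Multiplicative ℤ)) ≠ 1) :
    ∃ v : AbsoluteValue K ℝ, v (algebraMap A K a) ≠ 1 := by
  let v : Valuation E (WithZero (Multiplicative ℤ)) := Valued.v
  have v_isNontrivial : v.IsNontrivial :=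
    ⟨f a, v.ne_zero_iff.2 ((map_ne_zero_iff f hf).2 ha), ha'⟩
  have : MulArchimedean (MonoidWithZeroHom.ValueGroup₀ (.ofClass v)) :=
    MulArchimedean.comap MonoidWithZeroHom.ValueGroup₀.embedding.toMonoidHom
      MonoidWithZeroHom.ValueGroup₀.embedding_strictMono
  obtain ⟨_⟩ : Nonempty v.RankOne := Valuation.nonempty_rankOne_iff_mulArchimedean.2 this
  let _ : NontriviallyNormedField E := Valued.toNontriviallyNormedField E _
  have : IsUltrametricDist E := Valued.instIsUltrametricDist E _
  let L := AlgebraicClosure E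
  let _ : NormedField L := spectralNorm.normedField E L
  have : Uncountable E := uncountable_of_completeSpace E
  have : Uncountable L := (algebraMap E L).injective.uncountable
  obtain ⟨w, hw⟩ := exists_absoluteValue_of_ringHom (K := K) (f := (algebraMap E L).comp f)
    ((algebraMap E L).injective.comp hf)
  refine ⟨w, ?_⟩
  have norm_eq : ‖algebraMap E L (f a)‖ = ‖f a‖ := spectralNorm_extends (f a)
  rw [hw, RingHom.comp_apply, norm_eq]
  exact fun h ↦ ha' (le_antisymm (Valued.toNormedField.norm_le_one_iff.1 h.le)
    (Valued.toNormedField.one_le_norm_iff.1 h.ge))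

theorem exists_absoluteValue_ne_one_of_transcendental {P K : Type*} [Field P] [Countable P]
    [Field K] [Countable K] [Algebra P K] {t : K} (ht : Transcendental P t) :
    ∃ v : AbsoluteValue K ℝ, v t ≠ 1 := by
  let _ : Algebra P[X] K := (aeval (R := P) t).toAlgebra
  have : FaithfulSMul P[X] K :=
    (faithfulSMul_iff_algebraMap_injective _ _).2 (transcendental_iff_injective.1 ht)
  have : Countable P[X] := Cardinal.mk_le_aleph0_iff.1
    (cardinalMk_le_max.trans (max_le (Cardinal.mk_le_aleph0_iff.2 inferInstance) le_rfl))
  let f : P[X] →+* LaurentSeries P :=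
    (HahnSeries.ofPowerSeries ℤ P).comp coeToPowerSeries.ringHom
  have f_injective : Function.Injective f :=
    HahnSeries.ofPowerSeries_injective.comp (coe_injective P)
  have valuation_X : Valued.v (f X) = WithZero.exp (-1 : ℤ) := by
    simpa [f] using LaurentSeries.valuation_X_pow P 1
  obtain ⟨v, hv⟩ := exists_absoluteValue_ne_one_of_valued (K := K) f_injective X_ne_zero
    (valuation_X ▸ by simp [-WithZero.exp_neg])
  exact ⟨v, by rwa [← aeval_X (R := P) t]⟩

theorem isOfFinOrder_of_isAlgebraic_of_finite {P K : Type*} [Field P] [Finite P] [Field K]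
    [Algebra P K] {t : K} (ht : t ≠ 0) (halg : IsAlgebraic P t) : IsOfFinOrder t := by
  have : FiniteDimensional P (IntermediateField.adjoin P {t}) :=
    IntermediateField.adjoin.finiteDimensional halg.isIntegral
  have : Finite (IntermediateField.adjoin P {t}) := Module.finite_of_finite P
  let x := IntermediateField.AdjoinSimple.gen P t
  have hx : x ≠ 0 := fun h ↦ ht (congrArg Subtype.val h)
  have x_finite : IsOfFinOrder x :=
    Units.isOfFinOrder_val.2 (isOfFinOrder_of_finite (Units.mk0 x hx))
  exact (IntermediateField.adjoin P {t}).val.toMonoidHom.isOfFinOrder x_finite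

theorem exists_absoluteValue_ne_one_of_numberField {E K : Type*} [Field E] [NumberField E]
    [Field K] [Countable K] [Algebra E K] {x : E} (hx : x ≠ 0) (hx' : ¬ IsOfFinOrder x) :
    ∃ v : AbsoluteValue K ℝ, v (algebraMap E K x) ≠ 1 := by
  have : Countable E := (algebraMap E K).injective.countable
  by_cases x_integral : IsIntegral ℤ x
  · have : Uncountable ℂ := uncountable_of_completeSpace ℂ
    obtain ⟨φ, hφ⟩ : ∃ φ : E →+* ℂ, 1 < ‖φ x‖ := by
      by_contra! norm_le_one
      obtain ⟨n, hn, hxn⟩ :=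
        NumberField.Embeddings.pow_eq_one_of_norm_le_one E ℂ hx x_integral norm_le_one
      exact hx' (isOfFinOrder_iff_pow_eq_one.2 ⟨n, hn, hxn⟩)
    obtain ⟨v, hv⟩ := exists_absoluteValue_of_ringHom (K := K) φ.injective
    exact ⟨v, by rw [hv]; exact hφ.ne'⟩
  · obtain ⟨p, hp⟩ : ∃ p : IsDedekindDomain.HeightOneSpectrum (NumberField.RingOfIntegers E),
        1 < p.valuation E x := by
      by_contra! valuation_le_one
      obtain ⟨y, rfl⟩ :=
        IsDedekindDomain.HeightOneSpectrum.mem_integers_of_valuation_le_one E x valuation_le_one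
      exact x_integral y.isIntegral_coe
    refine exists_absoluteValue_ne_one_of_valued
      (f := NumberField.FinitePlace.embedding (K := E) p) (RingHom.injective _) hx ?_
    rw [NumberField.FinitePlace.embedding_apply,
      IsDedekindDomain.HeightOneSpectrum.valuedAdicCompletion_eq_valuation']
    exact hp.ne'

theorem exists_absoluteValue_ne_one {K : Type*} [Field K] [Countable K] {t : K} (ht : t ≠ 0)
    (ht' : ¬ IsOfFinOrder t) : ∃ v : AbsoluteValue K ℝ, v t ≠ 1 := by
  obtain ⟨p, _⟩ := CharP.exists K
  rcases CharP.char_is_prime_or_zero K p with hp | rfl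
  · have : Fact p.Prime := ⟨hp⟩
    let _ : Algebra (ZMod p) K := ZMod.algebra K p
    exact exists_absoluteValue_ne_one_of_transcendental
      (mt (isOfFinOrder_of_isAlgebraic_of_finite (P := ZMod p) ht) ht')
  · have : CharZero K := CharP.charP_to_charZero K
    by_cases halg : IsAlgebraic ℚ t
    · let E := IntermediateField.adjoin ℚ {t}
      have : FiniteDimensional ℚ E := IntermediateField.adjoin.finiteDimensional halg.isIntegral
      have : NumberField E := { to_charZero := inferInstance, to_finiteDimensional := this }
      let x : E := IntermediateField.AdjoinSimple.gen ℚ t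
      exact exists_absoluteValue_ne_one_of_numberField (x := x)
        (fun h ↦ ht (congrArg Subtype.val h)) (fun h ↦ ht' (E.val.toMonoidHom.isOfFinOrder h))
    · exact exists_absoluteValue_ne_one_of_transcendental halg

/-! ### Eigenvalues of finite order -/

section FiniteOrder

variable {K V : Type*} [Field K] [AddCommGroup V] [Module K V] [FiniteDimensional K V]

theorem isNilpotent_aeval_of_forall_hasEigenvalue [IsAlgClosed K] {T : End K V} {q : K[X]}
    (h : ∀ t, T.HasEigenvalue t → q.IsRoot t) : IsNilpotent (aeval T q) := by
  classical
  rcases eq_or_ne q 0 with rfl | q_ne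
  · simp
  obtain ⟨n, hn⟩ := (minpoly K T).roots.le_smul_dedup
  have dedup_le : (minpoly K T).roots.dedup ≤ q.roots :=
    (Multiset.le_iff_subset (Multiset.nodup_dedup _)).2 fun t ht ↦ (mem_roots q_ne).2 <|
      h t <| End.hasEigenvalue_of_isRoot (isRoot_of_mem_roots (Multiset.mem_dedup.1 ht))
  have minpoly_dvd : minpoly K T ∣ q ^ n :=
    (IsAlgClosed.splits _).dvd_of_roots_le_roots
      (minpoly.ne_zero (Algebra.IsIntegral.isIntegral T)) <| by
        rw [roots_pow]
        exact hn.trans (nsmul_le_nsmul_right dedup_le n)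
  exact ⟨n, by rw [← map_pow, minpoly.dvd_iff.1 minpoly_dvd]⟩

theorem exists_isNilpotent_pow_sub_one [IsAlgClosed K] {T : End K V}
    (h : ∀ t, T.HasEigenvalue t → IsOfFinOrder t) : ∃ m > 0, IsNilpotent (T ^ m - 1) := by
  have := Fintype.ofFinite T.Eigenvalues
  let m := ∏ t : T.Eigenvalues, orderOf t.1
  have pow_eq_one (t : K) (ht : T.HasEigenvalue t) : t ^ m = 1 :=
    orderOf_dvd_iff_pow_eq_one.1 <|
      Finset.dvd_prod_of_mem (fun t : T.Eigenvalues ↦ orderOf t.1) (Finset.mem_univ ⟨t, ht⟩)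
  refine ⟨m, Finset.prod_pos fun t _ ↦ (h t t.2).orderOf_pos, ?_⟩
  have nilpotent : IsNilpotent (aeval T (X ^ m - 1 : K[X])) :=
    isNilpotent_aeval_of_forall_hasEigenvalue fun t ht ↦ by simp [pow_eq_one t ht]
  rwa [map_sub, map_pow, aeval_X, map_one] at nilpotent

theorem isOfFinOrder_of_isNilpotent_sub_one {A : Type*} [Ring A] (p : ℕ) [Fact p.Prime] [CharP A p]
    {x : A} (h : IsNilpotent (x - 1)) : IsOfFinOrder x := by
  obtain ⟨k, hk⟩ := h
  have pow_eq_zero : (x - 1) ^ p ^ k = 0 :=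
    pow_eq_zero_of_le (Nat.lt_pow_self (Fact.out : p.Prime).one_lt).le hk
  rw [sub_pow_char_pow_of_commute p k (Commute.one_right x), one_pow, sub_eq_zero] at pow_eq_zero
  exact isOfFinOrder_iff_pow_eq_one.2 ⟨p ^ k, pow_pos (Fact.out : p.Prime).pos k, pow_eq_zero⟩

theorem isOfFinOrder_of_forall_hasEigenvalue [IsAlgClosed K] (p : ℕ) [Fact p.Prime] [CharP K p]
    {T : End K V} (h : ∀ t, T.HasEigenvalue t → IsOfFinOrder t) : IsOfFinOrder T := by
  rcases subsingleton_or_nontrivial V with _ | _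
  · exact isOfFinOrder_iff_pow_eq_one.2 ⟨1, one_pos, Subsingleton.elim _ _⟩
  have : CharP (End K V) p :=
    charP_of_injective_algebraMap (algebraMap K (End K V)).injective p
  obtain ⟨m, hm, unipotent⟩ := exists_isNilpotent_pow_sub_one h
  exact (isOfFinOrder_of_isNilpotent_sub_one p unipotent).of_pow hm.ne'

end FiniteOrder

/-! ### Unipotent groups in characteristic zero -/

section Unipotent

theorem exists_isIdempotentElem_aeval_X_mul {K A : Type*} [Field K] [Ring A] [Algebra K A] {x : A}
    (integral : IsIntegral K x) (h : ¬ IsNilpotent x) :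
    ∃ q : K[X], IsIdempotentElem (aeval x (X * q)) ∧ aeval x (X * q) ≠ 0 := by
  obtain ⟨r, minpoly_eq, not_dvd⟩ :=
    exists_eq_pow_rootMultiplicity_mul_and_not_dvd (minpoly K x) (minpoly.ne_zero integral) 0
  set n := (minpoly K x).rootMultiplicity 0
  rw [C_0, sub_zero] at minpoly_eq not_dvd
  have X_pow_mul_r : aeval x (X ^ n * r) = 0 := minpoly_eq ▸ minpoly.aeval K x
  obtain ⟨a, b, bezout⟩ : IsCoprime (X ^ (n + 1)) r :=
    ((irreducible_X.coprime_iff_not_dvd).2 not_dvd).pow_left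
  refine ⟨a * X ^ n, ?_, fun idempotent_eq_zero ↦ h ⟨n, ?_⟩⟩
  · have : X * (a * X ^ n) * (X * (a * X ^ n)) =
        X * (a * X ^ n) - a * X * b * (X ^ n * r) := by linear_combination a * X ^ (n + 1) * bezout
    rw [IsIdempotentElem, ← map_mul, this, map_sub, map_mul _ (a * X * b), X_pow_mul_r, mul_zero,
      sub_zero]
  · have : (X : K[X]) ^ n = X ^ n * (X * (a * X ^ n)) + b * (X ^ n * r) := by
      linear_combination -X ^ n * bezout
    rw [← aeval_X_pow (R := K), this, map_add, map_mul, idempotent_eq_zero, map_mul, X_pow_mul_r,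
      mul_zero, mul_zero, add_zero]

theorem aeval_X_mul_mem {K A : Type*} [CommRing K] [Ring A] [Algebra K A]
    (S : NonUnitalSubalgebra K A) {x : A} (hx : x ∈ S) (q : K[X]) : aeval x (X * q) ∈ S := by
  have pow_mem (n : ℕ) : x ^ (n + 1) ∈ S := by
    induction n with
    | zero => simpa using hx
    | succ n ih => exact pow_succ x (n + 1) ▸ mul_mem ih hx
  induction q using Polynomial.induction_on' with
  | add p q hp hq => simpa [mul_add] using add_mem hp hq
  | monomial n c =>
    rw [X_mul_monomial, aeval_monomial, ← Algebra.smul_def]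
    exact SMulMemClass.smul_mem c (pow_mem n)

variable {K V : Type*} [Field K] [AddCommGroup V] [Module K V] [FiniteDimensional K V]

theorem isNilpotent_of_forall_trace_eq_zero [CharZero K] {S : NonUnitalSubalgebra K (End K V)}
    (trace_eq_zero : ∀ x ∈ S, LinearMap.trace K V x = 0) {x : End K V} (hx : x ∈ S) :
    IsNilpotent x := by
  by_contra h
  obtain ⟨q, idempotent, ne_zero⟩ :=
    exists_isIdempotentElem_aeval_X_mul (Algebra.IsIntegral.isIntegral (R := K) x) h
  exact ne_zero <| LinearMap.IsIdempotentElem.eq_zero_of_trace_eq_zero idempotent <|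
    trace_eq_zero _ (aeval_X_mul_mem S hx q)

theorem exists_antitone_submodule_apply_mem_succ {S : NonUnitalSubalgebra K (End K V)}
    (nilpotent : ∀ x ∈ S, IsNilpotent x) :
    ∃ W : ℕ → Submodule K V, Antitone W ∧ W 0 = ⊤ ∧ (∃ k, W k = ⊥) ∧
      ∀ x ∈ S, ∀ i, ∀ v ∈ W i, x v ∈ W (i + 1) := by
  let _ : LieRing (End K V) := LieRing.ofAssociativeRing
  let _ : LieAlgebra K (End K V) := LieAlgebra.ofAssociativeAlgebra
  let L : LieSubalgebra K (End K V) :=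
    { S.toSubmodule with
      lie_mem' := fun {x y} hx hy ↦ S.sub_mem (S.mul_mem hx hy) (S.mul_mem hy hx) }
  have : LieModule.IsNilpotent L V :=
    (LieModule.isNilpotent_iff_forall (R := K)).2 fun x ↦ nilpotent x x.2
  obtain ⟨k, hk⟩ := (LieModule.isNilpotent_iff K L V).1 this
  refine ⟨fun i ↦ (LieModule.lowerCentralSeries K L V i).toSubmodule,
    fun i j hij ↦ LieModule.antitone_lowerCentralSeries K L V hij, rfl, ⟨k, by simp [hk]⟩,
    fun x hx i v hv ↦ ?_⟩
  rw [LieSubmodule.mem_toSubmodule, LieModule.lowerCentralSeries_succ]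
  exact LieSubmodule.lie_mem_lie (x := (⟨x, hx⟩ : L)) (LieSubmodule.mem_top _) hv

variable {U : Type*} [Group U]

theorem exists_nonUnitalSubalgebra_sub_one_mem [CharZero K] {σ : Representation K U V}
    (unipotent : ∀ u, IsNilpotent (σ u - 1)) :
    ∃ S : NonUnitalSubalgebra K (End K V), (∀ u, σ u - 1 ∈ S) ∧ ∀ x ∈ S, IsNilpotent x := by
  let I := Submodule.span K (Set.range fun u ↦ σ u - 1)
  have sub_one_mem (u : U) : σ u - 1 ∈ I := Submodule.subset_span ⟨u, rfl⟩
  have mul_le : I * I ≤ I := by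
    rw [Submodule.span_mul_span, Submodule.span_le]
    rintro _ ⟨_, ⟨u, rfl⟩, _, ⟨w, rfl⟩, rfl⟩
    have mul_eq : (σ u - 1) * (σ w - 1) = (σ (u * w) - 1) - (σ u - 1) - (σ w - 1) := by
      rw [map_mul]
      noncomm_ring
    change (σ u - 1) * (σ w - 1) ∈ I
    rw [mul_eq]
    exact I.sub_mem (I.sub_mem (sub_one_mem _) (sub_one_mem _)) (sub_one_mem _)
  have le_ker_trace : I ≤ (LinearMap.trace K V).ker := by
    rw [Submodule.span_le]
    rintro _ ⟨u, rfl⟩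
    exact (LinearMap.isNilpotent_trace_of_isNilpotent (unipotent u)).eq_zero
  exact ⟨I.toNonUnitalSubalgebra fun x y hx hy ↦ mul_le (Submodule.mul_mem_mul hx hy), sub_one_mem,
    fun x hx ↦ isNilpotent_of_forall_trace_eq_zero (fun y hy ↦ le_ker_trace hy) hx⟩

/-- The elements acting trivially on all quotients `W i / W (i + n)` of a filtration `W` by
subrepresentations. For a unipotent action these form a descending central series. -/
def filtrationSubgroup {K V U : Type*} [CommRing K] [AddCommGroup V] [Module K V] [Group U]
    (σ : Representation K U V) {W : ℕ → Submodule K V}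
    (invariant : ∀ u i, ∀ v ∈ W i, σ u v ∈ W i) (n : ℕ) : Subgroup U where
  carrier := {u | ∀ i, ∀ v ∈ W i, σ u v - v ∈ W (i + n)}
  one_mem' := by simp
  mul_mem' {a b} ha hb i v hv := by
    simpa using add_mem (ha i (σ b v) (invariant b i v hv)) (hb i v hv)
  inv_mem' {a} ha i v hv := by
    simpa using neg_mem (ha i (σ a⁻¹ v) (invariant a⁻¹ i v hv))

theorem commutatorElement_mem_filtrationSubgroup {K V : Type*} [CommRing K] [AddCommGroup V]
    [Module K V] {σ : Representation K U V} {W : ℕ → Submodule K V}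
    (invariant : ∀ u i, ∀ v ∈ W i, σ u v ∈ W i) {a b : U} {m n : ℕ}
    (ha : a ∈ filtrationSubgroup σ invariant m) (hb : b ∈ filtrationSubgroup σ invariant n) :
    ⁅a, b⁆ ∈ filtrationSubgroup σ invariant (m + n) := by
  intro i v hv
  let w := σ (b * a)⁻¹ v
  have hw : w ∈ W i := invariant _ i v hv
  have commutator_apply : σ ⁅a, b⁆ v = σ a (σ b w) := by
    simp [w, commutatorElement_def, mul_assoc]
  have v_eq : v = σ b (σ a w) := by simp [w]
  have sub_eq : σ ⁅a, b⁆ v - v =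
      (σ a (σ b w - w) - (σ b w - w)) - (σ b (σ a w - w) - (σ a w - w)) := by
    rw [commutator_apply, v_eq, map_sub, map_sub]
    abel
  rw [sub_eq]
  refine sub_mem ?_ ?_
  · rw [add_comm m, ← add_assoc]
    exact ha _ _ (hb i w hw)
  · rw [← add_assoc]
    exact hb _ _ (ha i w hw)

/-- Kolchin's theorem. In characteristic zero the span of the `σ u - 1` is a nil algebra by the
trace criterion, so Engel's theorem applies to it. -/
theorem isNilpotent_of_forall_isNilpotent_sub_one [CharZero K] {σ : Representation K U V}
    (faithful : Function.Injective σ) (unipotent : ∀ u, IsNilpotent (σ u - 1)) :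
    Group.IsNilpotent U := by
  obtain ⟨S, sub_one_mem, nilpotent⟩ := exists_nonUnitalSubalgebra_sub_one_mem unipotent
  obtain ⟨W, W_antitone, W_zero, ⟨k, W_k⟩, apply_mem⟩ :=
    exists_antitone_submodule_apply_mem_succ nilpotent
  have sub_mem (u i v) (hv : v ∈ W i) : σ u v - v ∈ W (i + 1) :=
    apply_mem _ (sub_one_mem u) i v hv
  have invariant (u i v) (hv : v ∈ W i) : σ u v ∈ W i := by
    simpa using add_mem (W_antitone i.le_succ (sub_mem u i v hv)) hv
  let D (n : ℕ) := filtrationSubgroup σ invariant (n + 1)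
  refine (Subgroup.nilpotent_iff_finite_descending_central_series U).2
    ⟨k, D, ⟨(Subgroup.eq_top_iff' _).2 sub_mem, fun x n hx g ↦ ?_⟩, ?_⟩
  · exact commutatorElement_mem_filtrationSubgroup invariant hx (sub_mem g)
  · refine (Subgroup.eq_bot_iff_forall _).2 fun u hu ↦ faithful ?_
    ext v
    have : σ u v - v ∈ W k :=
      W_antitone (by lia) (hu 0 v (W_zero ▸ Submodule.mem_top))
    simpa [W_k, sub_eq_zero] using this

end Unipotent

/-! ### Congruence subgroups and Selberg's lemma -/

section Selberg

theorem isJacobsonRing_int : IsJacobsonRing ℤ := by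
  refine isJacobsonRing_iff_prime_eq.2 fun P _ ↦ ?_
  rcases eq_or_ne P ⊥ with rfl | P_ne_bot
  · refine (Submodule.eq_bot_iff _).2 fun x hx ↦ ?_
    have : IsUnit (x * x + 1) := Ideal.mem_jacobson_bot.1 hx x
    rcases Int.isUnit_iff.1 this with h | h <;> nlinarith
  · have : P.IsMaximal := Ideal.IsPrime.isMaximal ‹_› P_ne_bot
    exact Ideal.jacobson_eq_self_of_isMaximal

theorem finite_quotient_of_isMaximal {A : Type*} [CommRing A] [Algebra.FiniteType ℤ A]
    (m : Ideal A) [m.IsMaximal] : Finite (A ⧸ m) := by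
  let _ : Field (A ⧸ m) := Ideal.Quotient.field m
  have := isJacobsonRing_int
  have : Algebra.FiniteType ℤ (A ⧸ m) :=
    .of_surjective (Ideal.Quotient.mkₐ ℤ m) (Ideal.Quotient.mkₐ_surjective ℤ m)
  have : Module.Finite ℤ (A ⧸ m) := finite_of_finite_type_of_isJacobsonRing ℤ (A ⧸ m)
  obtain ⟨p, _⟩ := CharP.exists (A ⧸ m)
  rcases eq_zero_or_neZero p with rfl | _
  · have := CharP.charP_to_charZero (A ⧸ m)
    exact absurd (isField_of_isIntegral_of_isField
      (FaithfulSMul.algebraMap_injective ℤ (A ⧸ m)) (Field.toIsField _)) Int.not_isField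
  · let _ := ZMod.algebra (A ⧸ m) p
    have : Module.Finite (ZMod p) (A ⧸ m) := Module.Finite.of_restrictScalars_finite ℤ _ _
    exact Module.finite_of_finite (ZMod p)

theorem exists_isMaximal_natCast_notMem {A : Type*} [CommRing A] [IsDomain A] [CharZero A]
    [Algebra.FiniteType ℤ A] {p : ℕ} (hp : p ≠ 0) : ∃ m : Ideal A, m.IsMaximal ∧ (p : A) ∉ m := by
  have := isJacobsonRing_int
  have : IsJacobsonRing A := isJacobsonRing_of_finiteType (A := ℤ)
  have jacobson_bot : (⊥ : Ideal A).jacobson = ⊥ :=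
    IsJacobsonRing.out this Ideal.isPrime_bot.isRadical
  have : (p : A) ∉ (⊥ : Ideal A).jacobson := by simpa [jacobson_bot] using hp
  simpa [Ideal.jacobson, Ideal.mem_sInf] using this

theorem exists_isMaximal_pair_prime_notMem {A : Type*} [CommRing A] [IsDomain A] [CharZero A]
    [Algebra.FiniteType ℤ A] : ∃ m₁ m₂ : Ideal A, m₁.IsMaximal ∧ m₂.IsMaximal ∧
      ∀ l : ℕ, l.Prime → (l : A) ∈ m₁ → (l : A) ∉ m₂ := by
  obtain ⟨m₁, _⟩ := Ideal.exists_maximal A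
  have := finite_quotient_of_isMaximal m₁
  obtain ⟨p, _⟩ := CharP.exists (A ⧸ m₁)
  have p_ne_zero : p ≠ 0 := CharP.char_ne_zero_of_finite (A ⧸ m₁) p
  obtain ⟨m₂, hm₂, hp⟩ := exists_isMaximal_natCast_notMem (A := A) p_ne_zero
  refine ⟨m₁, m₂, ‹_›, hm₂, fun l hl hlm ↦ ?_⟩
  have p_dvd : p ∣ l := (CharP.cast_eq_zero_iff (A ⧸ m₁) p l).1 <| by
    simpa using Ideal.Quotient.eq_zero_iff_mem.2 hlm
  have : p = l := (hl.eq_one_or_self_of_dvd p p_dvd).resolve_left (CharP.char_ne_one (A ⧸ m₁) p)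
  exact this ▸ hp

/-- Modulo a prime above `m` the root becomes `1`, whereas `1 + z + ⋯ + z ^ (l - 1) = 0`. -/
theorem natCast_mem_of_aeval_eq_zero {A K : Type*} [CommRing A] [Field K] [Algebra A K]
    [FaithfulSMul A K] (m : Ideal A) [m.IsMaximal] {q : A[X]} {d : ℕ}
    (hq : q.map (Ideal.Quotient.mk m) = (X - 1) ^ d) {z : K} (hz : aeval z q = 0) {l : ℕ}
    (hl : 0 < l) (z_pow : z ^ l = 1) (z_ne_one : z ≠ 1) : (l : A) ∈ m := by
  let B := integralClosure A K
  have : FaithfulSMul A B := .tower_bot A B K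
  obtain ⟨Q, _, _⟩ := Ideal.exists_maximal_ideal_liesOver_of_isIntegral (S := B) m
  let y : B := ⟨z, .of_pow hl (z_pow ▸ isIntegral_one)⟩
  have aeval_y : aeval y q = 0 := 
    Subtype.val_injective ((Subalgebra.aeval_coe B y q).symm.trans hz)
  have mk_y : Ideal.Quotient.mk Q y = 1 := by
    have : aeval (Ideal.Quotient.mk Q y) (q.map (Ideal.Quotient.mk m)) = 0 := by
      rw [← Ideal.Quotient.algebraMap_eq, ← Ideal.Quotient.algebraMap_eq, aeval_map_algebraMap,
        aeval_algebraMap_apply, aeval_y, map_zero]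
    rw [hq] at this
    exact sub_eq_zero.1 (eq_zero_of_pow_eq_zero (by simpa using this))
  have geom_sum_y : ∑ i ∈ Finset.range l, y ^ i = 0 := by
    have : (∑ i ∈ Finset.range l, z ^ i) * (z - 1) = 0 := by rw [geom_sum_mul, z_pow, sub_self]
    refine Subtype.val_injective ?_
    simpa [y] using (mul_eq_zero.1 this).resolve_right (sub_ne_zero.2 z_ne_one)
  have : Ideal.Quotient.mk Q (l : B) = 0 := by
    simpa [mk_y] using congrArg (Ideal.Quotient.mk Q) geom_sum_y
  rw [Q.over_def m, Ideal.mem_comap, map_natCast]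
  exact Ideal.Quotient.eq_zero_iff_mem.1 this

variable {A K n G : Type*} [CommRing A] [Field K] [Algebra A K] [Fintype n] [DecidableEq n]
  [Group G]

/-- The elements represented by matrices congruent to `1` modulo the ideal `m`. -/
def congruenceSubgroup (m : Ideal A) (μ : G →* Matrix n n A) : Subgroup G :=
  ((Ideal.Quotient.mk m).mapMatrix.toMonoidHom.comp μ).ker

theorem finiteIndex_congruenceSubgroup [Algebra.FiniteType ℤ A] (m : Ideal A) [m.IsMaximal]
    (μ : G →* Matrix n n A) : (congruenceSubgroup m μ).FiniteIndex := by
  have := finite_quotient_of_isMaximal m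
  let f : G →* Matrix n n (A ⧸ m) := (Ideal.Quotient.mk m).mapMatrix.toMonoidHom.comp μ
  have : f.ker = f.toHomUnits.ker := by
    ext g
    simp [MonoidHom.mem_ker]
  change f.ker.FiniteIndex
  rw [this]
  infer_instance

/-- The representation on `K ^ n` attached to a matrix representation over a ring `A` mapping to
`K`. -/
def matrixRepresentation (K : Type*) [Field K] [Algebra A K] (μ : G →* Matrix n n A) :
    Representation K G (n → K) :=
  Matrix.toLinAlgEquiv'.toMonoidHom.comp ((algebraMap A K).mapMatrix.toMonoidHom.comp μ)

theorem matrixRepresentation_injective [FaithfulSMul A K] {μ : G →* Matrix n n A}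
    (hμ : Function.Injective μ) : Function.Injective (matrixRepresentation K μ) :=
  Matrix.toLinAlgEquiv'.injective.comp
    ((Matrix.map_injective (FaithfulSMul.algebraMap_injective A K)).comp hμ)

theorem aeval_charpoly_eq_zero_of_hasEigenvalue {μ : G →* Matrix n n A} {g : G} {t : K}
    (ht : End.HasEigenvalue (matrixRepresentation K μ g) t) : aeval t (μ g).charpoly = 0 := by
  have : ((μ g).map (algebraMap A K)).charpoly.IsRoot t := by
    rw [← Matrix.charpoly_toLin']
    exact (End.hasEigenvalue_iff_isRoot_charpoly _ t).1 ht
  rwa [Matrix.charpoly_map, IsRoot, eval_map_algebraMap] at this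

theorem natCast_mem_of_hasEigenvalue [FaithfulSMul A K] {m : Ideal A} [m.IsMaximal]
    {μ : G →* Matrix n n A} {g : G} (hg : g ∈ congruenceSubgroup m μ) {t : K}
    (ht : End.HasEigenvalue (matrixRepresentation K μ g) t) {l : ℕ} (hl : 0 < l)
    (t_pow : t ^ l = 1) (t_ne_one : t ≠ 1) : (l : A) ∈ m := by
  have map_eq_one : (μ g).map (Ideal.Quotient.mk m) = 1 := hg
  refine natCast_mem_of_aeval_eq_zero m (d := Fintype.card n) ?_
    (aeval_charpoly_eq_zero_of_hasEigenvalue ht) hl t_pow t_ne_one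
  rw [← Matrix.charpoly_map, map_eq_one, Matrix.charpoly_one]

theorem hasEigenvalue_pow {V : Type*} [AddCommGroup V] [Module K V] {T : End K V} {t : K}
    (h : T.HasEigenvalue t) (k : ℕ) : (T ^ k).HasEigenvalue (t ^ k) := by
  obtain ⟨v, hv⟩ := h.exists_hasEigenvector
  exact End.hasEigenvalue_of_hasEigenvector (x := v)
    ⟨End.mem_eigenspace_iff.2 (hv.pow_apply k), hv.2⟩

theorem eq_one_of_hasEigenvalue_of_isOfFinOrder [FaithfulSMul A K] {m₁ m₂ : Ideal A}
    [m₁.IsMaximal] [m₂.IsMaximal] (coprime : ∀ l : ℕ, l.Prime → (l : A) ∈ m₁ → (l : A) ∉ m₂)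
    {μ : G →* Matrix n n A} {g : G} (hg : g ∈ congruenceSubgroup m₁ μ ⊓ congruenceSubgroup m₂ μ)
    {t : K} (ht : End.HasEigenvalue (matrixRepresentation K μ g) t) (h : IsOfFinOrder t) :
    t = 1 := by
  by_contra t_ne_one
  obtain ⟨l, hl, hlt⟩ := Nat.exists_prime_and_dvd (mt orderOf_eq_one_iff.1 t_ne_one)
  let q := orderOf t / l
  have order_pow : orderOf (t ^ q) = l := orderOf_pow_orderOf_div h.orderOf_pos.ne' hlt
  have pow_eq_one : (t ^ q) ^ l = 1 := order_pow ▸ pow_orderOf_eq_one (t ^ q)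
  have pow_ne_one : t ^ q ≠ 1 := fun h ↦ hl.ne_one (order_pow ▸ orderOf_eq_one_iff.2 h)
  have eigenvalue_pow : End.HasEigenvalue (matrixRepresentation K μ (g ^ q)) (t ^ q) :=
    map_pow (matrixRepresentation K μ) g q ▸ hasEigenvalue_pow ht q
  have mem (m : Ideal A) [m.IsMaximal] (hgm : g ∈ congruenceSubgroup m μ) : (l : A) ∈ m :=
    natCast_mem_of_hasEigenvalue (pow_mem hgm q) eigenvalue_pow hl.pos pow_eq_one pow_ne_one
  exact coprime l hl (mem m₁ hg.1) (mem m₂ hg.2)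

/-- A form of Selberg's lemma: in the congruence subgroup of two maximal ideals with different
residue characteristics, no prime is left to divide the order of an eigenvalue. -/
theorem exists_finiteIndex_isNilpotent_sub_one [IsDomain A] [CharZero A] [Algebra.FiniteType ℤ A]
    [FaithfulSMul A K] [IsAlgClosed K] (μ : G →* Matrix n n A) :
    ∃ L : Subgroup G, L.FiniteIndex ∧ ∀ g ∈ L,
      (∀ t, End.HasEigenvalue (matrixRepresentation K μ g) t → IsOfFinOrder t) →
        IsNilpotent (matrixRepresentation K μ g - 1) := by
  obtain ⟨m₁, m₂, _, _, coprime⟩ := exists_isMaximal_pair_prime_notMem (A := A)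
  have := finiteIndex_congruenceSubgroup m₁ μ
  have := finiteIndex_congruenceSubgroup m₂ μ
  refine ⟨congruenceSubgroup m₁ μ ⊓ congruenceSubgroup m₂ μ, inferInstance, fun g hg h ↦ ?_⟩
  have nilpotent : IsNilpotent (aeval (matrixRepresentation K μ g) (X - 1 : K[X])) :=
    isNilpotent_aeval_of_forall_hasEigenvalue fun t ht ↦ by
      simp [eq_one_of_hasEigenvalue_of_isOfFinOrder coprime hg ht (h t ht)]
  rwa [map_sub, aeval_X, map_one] at nilpotent

end Selberg

/-! ### Groups whose commutators have eigenvalues of finite order -/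

section Endgame

variable {G : Type*} [Group G]

theorem map_mem_commutator {G' : Type*} [Group G'] (f : G →* G') {a : G}
    (ha : a ∈ commutator G) : f a ∈ commutator G' := by
  have : (commutator G).map f ≤ commutator G' := by
    rw [commutator_def, Subgroup.map_commutator, commutator_def]
    exact Subgroup.commutator_mono le_top le_top
  exact this (Subgroup.mem_map_of_mem f ha)

theorem isSolvable_of_isNilpotent_sub_one {K V : Type*} [Field K] [CharZero K] [AddCommGroup V]
    [Module K V] [FiniteDimensional K V] {ρ : Representation K G V}
    (faithful : Function.Injective ρ) (unipotent : ∀ a ∈ commutator G, IsNilpotent (ρ a - 1)) :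
    Group.IsSolvable G := by
  have : Group.IsNilpotent (commutator G) :=
    isNilpotent_of_forall_isNilpotent_sub_one (σ := ρ.comp (commutator G).subtype)
      (faithful.comp (commutator G).subtype_injective) fun a ↦ unipotent a a.2
  exact Group.isSolvable_of_ker_le_range (commutator G).subtype Abelianization.of
    (by rw [Abelianization.ker_of, Subgroup.range_subtype])

theorem hasTorsionIdentity_of_charP {K V : Type*} [Field K] [IsAlgClosed K] [AddCommGroup V]
    [Module K V] [FiniteDimensional K V] (p : ℕ) [Fact p.Prime] [CharP K p]
    {ρ : Representation K G V} (faithful : Function.Injective ρ) {H : Subgroup G} [H.FiniteIndex]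
    (finite_order : ∀ a ∈ commutator H, ∀ t, End.HasEigenvalue (ρ a) t → IsOfFinOrder t) :
    HasTorsionIdentity G := by
  suffices HasTorsionIdentity H from this.of_finiteIndex
  refine .of_isOfFinOrder_commutator fun x y ↦ ?_
  have commutator_mem : ⁅x, y⁆ ∈ commutator H :=
    Subgroup.commutator_mem_commutator (Subgroup.mem_top x) (Subgroup.mem_top y)
  exact Submonoid.isOfFinOrder_coe.1 <| faithful.isOfFinOrder_iff.1 <|
    isOfFinOrder_of_forall_hasEigenvalue p (finite_order _ commutator_mem)

variable {A n : Type*} [CommRing A] [IsDomain A] [Algebra.FiniteType ℤ A] [Fintype n]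
  [DecidableEq n]

theorem hasTorsionIdentity_of_charZero {K : Type*} [Field K] [IsAlgClosed K] [CharZero K]
    [Algebra A K] [FaithfulSMul A K] {μ : G →* Matrix n n A} (hμ : Function.Injective μ)
    {H : Subgroup G} [H.FiniteIndex] (finite_order : ∀ a ∈ commutator H, ∀ t,
      End.HasEigenvalue (matrixRepresentation K μ a) t → IsOfFinOrder t) :
    HasTorsionIdentity G := by
  have : CharZero A := (algebraMap A K).charZero
  obtain ⟨L, _, unipotent⟩ := exists_finiteIndex_isNilpotent_sub_one (K := K) μ
  suffices Group.IsSolvable ↥(H ⊓ L) from (HasTorsionIdentity.of_isSolvable this).of_finiteIndex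
  refine isSolvable_of_isNilpotent_sub_one
    (ρ := (matrixRepresentation K μ).comp (H ⊓ L).subtype)
    ((matrixRepresentation_injective hμ).comp (H ⊓ L).subtype_injective) fun a ha ↦ ?_
  have mem_commutator : ⟨a, a.2.1⟩ ∈ commutator H :=
    map_mem_commutator (Subgroup.inclusion inf_le_left) ha
  exact unipotent a a.2.2 (finite_order ⟨a, a.2.1⟩ mem_commutator)

end Endgame

/-! ### Linear groups without free subgroups -/

theorem exists_finiteIndex_isOfFinOrder_of_hasEigenvalue {K V G : Type*} [Field K] [Countable K]
    [IsAlgClosed K] [AddCommGroup V] [Module K V] [FiniteDimensional K V] [Group G]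
    (ρ : Representation K G V)
    (not_free : ¬ ∃ f : FreeGroup (Fin 2) →* G, Function.Injective f) :
    ∃ H : Subgroup G, H.FiniteIndex ∧
      ∀ a ∈ commutator H, ∀ t, End.HasEigenvalue (ρ a) t → IsOfFinOrder t := by
  obtain ⟨H, hH, layers⟩ := exists_forall_hasStronglyIrreducibleLayers_exteriorPowerRep ρ
  refine ⟨H, hH, fun a ha t ht ↦ by_contra fun infinite_order ↦ not_free ?_⟩
  obtain ⟨v, hv⟩ := exists_absoluteValue_ne_one (hasEigenvalue_apply_inv ρ ht).1 infinite_order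
  obtain ⟨f, hf⟩ :=
    exists_freeGroup_hom_injective_of_absoluteValue_eigenvalue_ne_one layers ha ht v hv
  exact ⟨H.subtype.comp f, H.subtype_injective.comp hf⟩

theorem countable_of_finiteType_int (A : Type*) [CommRing A] [Algebra.FiniteType ℤ A] :
    Countable A := by
  obtain ⟨k, f, hf⟩ := Algebra.FiniteType.iff_quotient_mvPolynomial''.1 ‹Algebra.FiniteType ℤ A›
  have : Countable (MvPolynomial (Fin k) ℤ) :=
    Cardinal.mk_le_aleph0_iff.1 (MvPolynomial.cardinalMk_le_max.trans (by simp))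
  exact hf.countable

theorem countable_algebraicClosure_fractionRing (A : Type*) [CommRing A] [IsDomain A]
    [Countable A] : Countable (AlgebraicClosure (FractionRing A)) := by
  have : Countable (FractionRing A) :=
    (IsLocalization.mk'_surjective (S := FractionRing A) (nonZeroDivisors A)).countable
  exact Set.countable_univ_iff.1 <|
    (Algebraic.countable (FractionRing A) (AlgebraicClosure (FractionRing A))).mono
      fun x _ ↦ Algebra.IsAlgebraic.isAlgebraic x

theorem exists_finiteType_matrix_hom {F n G : Type*} [CommRing F] [Fintype n] [DecidableEq n]
    [Monoid G] [Monoid.FG G] (ν : G →* Matrix n n F) :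
    ∃ A : Subalgebra ℤ F, Algebra.FiniteType ℤ A ∧
      ∃ μ : G →* Matrix n n A, ∀ g, (μ g).map (algebraMap A F) = ν g := by
  obtain ⟨S, closure_S, S_finite⟩ := Monoid.fg_iff.1 ‹Monoid.FG G›
  let entries : Set F := ⋃ g ∈ S, Set.range fun ij : n × n ↦ ν g ij.1 ij.2
  have entries_finite : entries.Finite := S_finite.biUnion fun g _ ↦ Set.finite_range _
  let A := Algebra.adjoin ℤ entries
  have entry_mem (g : G) : ν g ∈ A.matrix := by
    have : Submonoid.closure S ≤ A.matrix.toSubmonoid.comap ν :=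
      Submonoid.closure_le.2 fun s hs i j ↦
        Algebra.subset_adjoin (Set.mem_biUnion hs ⟨(i, j), rfl⟩)
    exact this (closure_S ▸ Submonoid.mem_top g)
  have map_injective : Function.Injective fun M : Matrix n n A ↦ M.map (algebraMap A F) :=
    Matrix.map_injective Subtype.val_injective
  let lift (g : G) : Matrix n n A := .of fun i j ↦ ⟨ν g i j, entry_mem g i j⟩
  have map_lift (g : G) : (lift g).map (algebraMap A F) = ν g := rfl
  refine ⟨A, .adjoin_of_finite entries_finite, ⟨⟨lift, ?_⟩, ?_⟩, map_lift⟩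
  · exact map_injective ((map_one ν).trans (Matrix.map_one _ (map_zero _) (map_one _)).symm)
  · exact fun g h ↦ map_injective (by simp [map_lift, Matrix.map_mul])

variable {n G : Type*} [Fintype n] [DecidableEq n] [Group G]

theorem hasTorsionIdentity_of_finiteType {A : Type*} [CommRing A] [IsDomain A]
    [Algebra.FiniteType ℤ A] {μ : G →* Matrix n n A} (hμ : Function.Injective μ)
    (not_free : ¬ ∃ f : FreeGroup (Fin 2) →* G, Function.Injective f) : HasTorsionIdentity G := by
  let K := AlgebraicClosure (FractionRing A)
  have := countable_of_finiteType_int A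
  have : Countable K := countable_algebraicClosure_fractionRing A
  have : FaithfulSMul A K := FaithfulSMul.trans A (FractionRing A) K
  obtain ⟨H, _, finite_order⟩ :=
    exists_finiteIndex_isOfFinOrder_of_hasEigenvalue (matrixRepresentation K μ) not_free
  rcases CharP.exists' K with _ | ⟨p, _, _⟩
  · exact hasTorsionIdentity_of_charZero hμ finite_order
  · exact hasTorsionIdentity_of_charP p (matrixRepresentation_injective hμ) finite_order

theorem hasTorsionIdentity_of_matrix {F : Type*} [Field F] [Group.FG G] {ν : G →* Matrix n n F}
    (hν : Function.Injective ν)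
    (not_free : ¬ ∃ f : FreeGroup (Fin 2) →* G, Function.Injective f) : HasTorsionIdentity G := by
  obtain ⟨A, _, μ, map_μ⟩ := exists_finiteType_matrix_hom ν
  have hμ : Function.Injective μ := fun g h hgh ↦ hν (by rw [← map_μ, ← map_μ, hgh])
  exact hasTorsionIdentity_of_finiteType hμ not_free

theorem hasTorsionIdentity_of_units {F R : Type*} [Field F] [Ring R] [Algebra F R]
    [FiniteDimensional F R] [Group.FG G] {f : G →* Rˣ} (hf : Function.Injective f)
    (not_free : ¬ ∃ f : FreeGroup (Fin 2) →* G, Function.Injective f) : HasTorsionIdentity G := by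
  let b := Module.finBasis F R
  let ν := (Algebra.leftMulMatrix b).toMonoidHom.comp ((Units.coeHom R).comp f)
  have hν : Function.Injective ν :=
    (Algebra.leftMulMatrix_injective b).comp (Units.val_injective.comp hf)
  exact hasTorsionIdentity_of_matrix hν not_free

end TitsAlternative

/-- Let `R` be a finite-dimensional algebra over a field `F` and `N` a finitely generated
subgroup of `Rˣ`. Then `N` contains no non-cyclic free subgroup if and only if `N` satisfies
a power central group identity: there is a nonidentity word `w` in a free group on `m`
generators such that every evaluation of `w` at elements of `N` has some positive power
lying in the center of `R`. -/
theorem no_free_subgroup_iff_power_central_group_identity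
    {F R : Type*} [Field F] [Ring R] [Algebra F R] [FiniteDimensional F R]
    (N : Subgroup Rˣ) (hfg : N.FG) :
    (¬ ∃ f : FreeGroup (Fin 2) →* N, Function.Injective f) ↔
      ∃ (m : ℕ) (w : FreeGroup (Fin m)), 1 ≤ m ∧ w ≠ 1 ∧
        ∀ c : Fin m → N, ∃ p : ℕ, 0 < p ∧
          ((FreeGroup.lift (fun i => (c i : Rˣ)) w : Rˣ) : R) ^ p ∈ Subring.center R := by
  constructor
  · intro not_free
    have : Group.FG N := (Group.fg_iff_subgroup_fg N).2 hfg
    obtain ⟨m, w, w_ne_one, torsion⟩ :=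
      TitsAlternative.hasTorsionIdentity_of_units (F := F) N.subtype_injective not_free
    have m_ne_zero : m ≠ 0 := by
      rintro rfl
      exact w_ne_one (Subsingleton.elim w 1)
    refine ⟨m, w, Nat.one_le_iff_ne_zero.2 m_ne_zero, w_ne_one, fun c ↦ ?_⟩
    obtain ⟨p, hp, pow_eq_one⟩ := isOfFinOrder_iff_pow_eq_one.1 (torsion c)
    refine ⟨p, hp, ?_⟩
    have lift_eq : FreeGroup.lift (fun i ↦ (c i : Rˣ)) w = FreeGroup.lift c w :=
      (TitsAlternative.map_lift N.subtype c w).symm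
    rw [lift_eq, ← Units.val_pow_eq_pow_val, ← Subgroup.coe_pow, pow_eq_one]
    exact one_mem _
  · rintro ⟨m, w, -, w_ne_one, power_central⟩
    exact TitsAlternative.not_exists_freeGroup_hom_injective_of_powerCentral N w_ne_one
      power_central
end

section
/- Let R be a ring of characteristic p > 0 whose Jacobson radical J(R) is a nil ideal. Then the unit group Rˣ contains a non-cyclic free subgroup if and only if the unit group of the quotient ring R/J(R) contains a non-cyclic free subgroup. -/
/-!
The units of `R` mapping to `1` in `R / J(R)` are the `1 + x` with `x` nilpotent. In positive
characteristic they have finite order, so the kernel of `Rˣ → (R / J(R))ˣ` is torsion and meets a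
free subgroup trivially: free subgroups map isomorphically onto their images. Conversely, a
nil ideal lets units be lifted along the quotient map, and the free group is projective.
-/

theorem injective_comp_of_isOfFinOrder_of_map_eq_one {F G H : Type*} [Group F]
    [IsMulTorsionFree F] [Monoid G] [Monoid H] {π : G →* H} (hπ : ∀ g, π g = 1 → IsOfFinOrder g)
    {f : F →* G} (hf : Function.Injective f) : Function.Injective (π.comp f) := by
  rw [injective_iff_map_eq_one]
  intro x hx
  have hfx : IsOfFinOrder (f x) := hπ (f x) hx
  exact (hf.isOfFinOrder_iff.mp hfx).eq_one'

section FreeGroup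

variable {α G H : Type*} [Group G] [Group H]

theorem exists_freeGroup_hom_comp_eq_of_surjective {π : G →* H}
    (hπ : Function.Surjective π) (f : FreeGroup α →* H) :
    ∃ f' : FreeGroup α →* G, π.comp f' = f := by
  choose s hs using hπ
  refine ⟨FreeGroup.lift fun a => s (f (FreeGroup.of a)), ?_⟩
  ext a
  simp [hs]

theorem exists_injective_freeGroup_hom_iff {π : G →* H} (hsurj : Function.Surjective π)
    (htors : ∀ g, π g = 1 → IsOfFinOrder g) :
    (∃ f : FreeGroup α →* G, Function.Injective f) ↔
      ∃ f : FreeGroup α →* H, Function.Injective f := by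
  constructor
  · rintro ⟨f, hf⟩
    exact ⟨π.comp f, injective_comp_of_isOfFinOrder_of_map_eq_one htors hf⟩
  · rintro ⟨f, hf⟩
    obtain ⟨f', rfl⟩ := exists_freeGroup_hom_comp_eq_of_surjective hsurj f
    exact ⟨f', Function.Injective.of_comp hf⟩

end FreeGroup

theorem isUnit_of_isUnit_mul_of_isUnit_mul_swap {M : Type*} [Monoid M] {a b : M}
    (hab : IsUnit (a * b)) (hba : IsUnit (b * a)) : IsUnit a := by
  obtain ⟨c, hc⟩ := hab.exists_right_inv
  obtain ⟨d, hd⟩ := hba.exists_left_inv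
  exact isUnit_iff_exists_and_exists.mpr
    ⟨⟨b * c, by rw [← mul_assoc, hc]⟩, ⟨d * b, by rw [mul_assoc, hd]⟩⟩

theorem isLocalHom_of_surjective_of_isUnit_of_map_eq_one {M N : Type*} [Monoid M] [Monoid N]
    {F : Type*} [FunLike F M N] [MonoidHomClass F M N] {f : F}
    (hf : Function.Surjective f) (hone : ∀ a, f a = 1 → IsUnit a) : IsLocalHom f where
  map_nonunit a ha := by
    obtain ⟨c, hac, hca⟩ := isUnit_iff_exists.mp ha
    obtain ⟨b, rfl⟩ := hf c
    exact isUnit_of_isUnit_mul_of_isUnit_mul_swap (hone (a * b) (by rw [map_mul, hac]))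
      (hone (b * a) (by rw [map_mul, hca]))

theorem surjective_unitsMap_of_isNilpotent_of_map_eq_zero {R S : Type*} [Ring R] [Ring S]
    {φ : R →+* S} (hφ : Function.Surjective φ) (hnil : ∀ x, φ x = 0 → IsNilpotent x) :
    Function.Surjective (Units.map (φ : R →* S)) := by
  have hone (a : R) (ha : φ a = 1) : IsUnit a := by
    simpa using (hnil (a - 1) (by simp [ha])).isUnit_one_add
  exact IsLocalRing.surjective_units_map_of_local_ringHom φ hφ
    (isLocalHom_of_surjective_of_isUnit_of_map_eq_one hφ hone)

theorem pow_succ_dvd_pow_pow_sub_pow_pow {R : Type*} [CommRing R] {d a b : R} {n : ℕ}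
    (hn : d ∣ n) (hab : d ∣ a - b) (k : ℕ) : d ^ (k + 1) ∣ a ^ n ^ k - b ^ n ^ k := by
  induction k with
  | zero => simpa using hab
  | succ k ih =>
    -- Modulo `d` all the terms of the sum agree, so it is a multiple of `n`.
    have hsum : d ∣ ∑ i ∈ Finset.range n, (a ^ n ^ k) ^ i * (b ^ n ^ k) ^ (n - 1 - i) := by
      have hpow : d ∣ a ^ n ^ k - b ^ n ^ k := hab.trans (sub_dvd_pow_sub_pow a b _)
      exact (dvd_geom_sum₂_iff_of_dvd_sub hpow).mpr (hn.mul_right _)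
    rw [pow_succ n k, pow_mul, pow_mul, ← geom_sum₂_mul, pow_succ']
    exact mul_dvd_mul hsum ih

open scoped IsMulCommutative in
theorem pow_pow_eq_pow_pow_of_sub_pow_eq_zero {R : Type*} [Ring R] {n : ℕ}
    (hn : (n : R) = 0) {a b : R} (hab : Commute a b) {k : ℕ} (hk : (a - b) ^ (k + 1) = 0) :
    a ^ n ^ k = b ^ n ^ k := by
  have hcomm : ∀ x ∈ ({a, b} : Set R), ∀ y ∈ ({a, b} : Set R), x * y = y * x := by
    rintro x (rfl | rfl) y (rfl | rfl)
    exacts [rfl, hab, hab.symm, rfl]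
  let A := Subring.closure ({a, b} : Set R)
  have : IsMulCommutative A := Subring.isMulCommutative_closure hcomm
  let a' : A := ⟨a, Subring.subset_closure (by simp)⟩
  let b' : A := ⟨b, Subring.subset_closure (by simp)⟩
  have hnA : (n : A) = 0 := Subtype.ext hn
  have hkA : (a' - b') ^ (k + 1) = 0 := Subtype.ext hk
  have hdvd := pow_succ_dvd_pow_pow_sub_pow_pow (hnA ▸ dvd_zero (a' - b')) dvd_rfl k
  rw [hkA, zero_dvd_iff, sub_eq_zero] at hdvd
  exact congrArg Subtype.val hdvd

theorem isOfFinOrder_of_isNilpotent_sub_one {R : Type*} [Ring R] {n : ℕ} (hn₀ : n ≠ 0)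
    (hn : (n : R) = 0) {a : R} (ha : IsNilpotent (a - 1)) : IsOfFinOrder a := by
  obtain ⟨k, hk⟩ := ha
  have hpow : a ^ n ^ k = 1 := by
    simpa using pow_pow_eq_pow_pow_of_sub_pow_eq_zero hn (Commute.one_right a)
      (pow_eq_zero_of_le k.le_succ hk)
  exact isOfFinOrder_iff_pow_eq_one.mpr ⟨n ^ k, pow_pos (Nat.pos_of_ne_zero hn₀) k, hpow⟩

theorem units_free_subgroup_iff_quotient_jacobson_general
    {α R S : Type*} [Ring R] [Ring S] {n : ℕ} (hn₀ : n ≠ 0) (hn : (n : R) = 0)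
    {φ : R →+* S} (hφ : Function.Surjective φ) (hnil : ∀ x, φ x = 0 → IsNilpotent x) :
    (∃ f : FreeGroup α →* Rˣ, Function.Injective f) ↔
      ∃ f : FreeGroup α →* Sˣ, Function.Injective f := by
  refine exists_injective_freeGroup_hom_iff
    (surjective_unitsMap_of_isNilpotent_of_map_eq_zero hφ hnil) fun u hu => ?_
  have hφu : φ u = 1 := congrArg Units.val hu
  have hnilu : IsNilpotent ((u : R) - 1) := hnil _ (by rw [map_sub, hφu, map_one, sub_self])
  exact Units.isOfFinOrder_val.mp (isOfFinOrder_of_isNilpotent_sub_one hn₀ hn hnilu)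

/-- Let `R` be a ring of characteristic `p > 0` whose Jacobson radical is a nil ideal.
Then `Rˣ` contains a non-cyclic free subgroup (a subgroup isomorphic to the free group on
two generators) if and only if the unit group of `R / J(R)` does. -/
theorem units_free_subgroup_iff_quotient_jacobson
    {R : Type*} [Ring R] (p : ℕ) (hp : 0 < p) [CharP R p]
    (hnil : ∀ x ∈ TwoSidedIdeal.jacobson (⊥ : TwoSidedIdeal R), IsNilpotent x) :
    (∃ f : FreeGroup (Fin 2) →* Rˣ, Function.Injective f) ↔
      ∃ f : FreeGroup (Fin 2) →*
          ((TwoSidedIdeal.jacobson (⊥ : TwoSidedIdeal R)).ringCon.Quotient)ˣ,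
        Function.Injective f :=
  units_free_subgroup_iff_quotient_jacobson_general hp.ne' (CharP.cast_eq_zero R p)
    (RingCon.mk'_surjective _) fun x hx =>
      hnil x <| by rwa [← TwoSidedIdeal.ker_ringCon_mk' (.jacobson ⊥), TwoSidedIdeal.mem_ker]
end

section
/- Let R be a ring of characteristic p > 0 whose Jacobson radical J(R) is a nil ideal, and let N be a subgroup of the unit group Rˣ which is a non-cyclic free group. Then the natural group homomorphism Rˣ → (R/J(R))ˣ induced by the quotient map is injective on N, and the image of N is a non-cyclic free subgroup of (R/J(R))ˣ. -/
/-- The group homomorphism `Rˣ → (R / J(R))ˣ` on unit groups induced by the quotient map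
`R → R / J(R)` modulo the Jacobson radical. -/
noncomputable def unitsToJacobsonQuotient (R : Type*) [Ring R] :
    Rˣ →* ((TwoSidedIdeal.jacobson (⊥ : TwoSidedIdeal R)).ringCon.Quotient)ˣ :=
  Units.map (RingCon.mk' (TwoSidedIdeal.jacobson (⊥ : TwoSidedIdeal R)).ringCon).toMonoidHom

/-!
A unit in the kernel of `Rˣ → (R / J(R))ˣ` has the form `1 + x` with `x` nilpotent, so it is
integral over the finite ring `ℤ / p`. The subring it generates is then a finite
`ℤ / p`-module, hence a finite set, and the unit has finite order. A free group is torsion-free,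
so it meets the kernel trivially.
-/

section FiniteOrder

variable {R : Type*} [Ring R]

theorem isOfFinOrder_of_isIntegral_of_finite {k : Type*} [CommRing k] [Finite k] [Algebra k R]
    {u : Rˣ} (hu : IsIntegral k (u : R)) : IsOfFinOrder u := by
  have : Module.Finite k (Algebra.adjoin k {(u : R)}) :=
    Algebra.finite_adjoin_simple_of_isIntegral hu
  have : Finite (Algebra.adjoin k {(u : R)}) := Module.finite_of_finite k
  rw [← finite_powers]
  refine Set.Finite.of_finite_image (f := Units.val) ?_ Units.val_injective.injOn
  refine Set.Finite.subset (Set.toFinite (Algebra.adjoin k {(u : R)} : Set R)) ?_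
  rintro _ ⟨_, ⟨n, rfl⟩, rfl⟩
  exact pow_mem (Algebra.self_mem_adjoin_singleton k _) n

theorem isIntegral_of_isNilpotent_sub_one (k : Type*) [CommRing k] [Algebra k R] {r : R}
    (hr : IsNilpotent (r - 1)) : IsIntegral k r := by
  obtain ⟨n, hn⟩ := hr
  exact ⟨(Polynomial.X - Polynomial.C 1) ^ n, (Polynomial.monic_X_sub_C 1).pow n, by simp [hn]⟩

theorem isOfFinOrder_of_isNilpotent_sub_one_s8 (p : ℕ) [NeZero p] [CharP R p] {u : Rˣ}
    (hu : IsNilpotent ((u : R) - 1)) : IsOfFinOrder u :=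
  letI := ZMod.algebra R p
  isOfFinOrder_of_isIntegral_of_finite (isIntegral_of_isNilpotent_sub_one (ZMod p) hu)

theorem isOfFinOrder_of_mem_ker_unitsMap (p : ℕ) [NeZero p] [CharP R p] {S : Type*} [Ring S]
    (f : R →+* S) (hnil : ∀ x ∈ TwoSidedIdeal.ker f, IsNilpotent x) {u : Rˣ}
    (hu : u ∈ (Units.map (f : R →* S)).ker) : IsOfFinOrder u := by
  have map_val_eq_one : f u = 1 := congrArg Units.val hu
  have sub_one_mem_ker : (u : R) - 1 ∈ TwoSidedIdeal.ker f := by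
    rw [TwoSidedIdeal.mem_ker, map_sub, map_one, map_val_eq_one, sub_self]
  exact isOfFinOrder_of_isNilpotent_sub_one_s8 p (hnil _ sub_one_mem_ker)

end FiniteOrder

section TorsionFree

variable {G H : Type*} [Group G] [Group H] {f : G →* H} {N : Subgroup G}

theorem injOn_of_isOfFinOrder_of_mem_ker [IsMulTorsionFree N]
    (hker : ∀ g ∈ f.ker, IsOfFinOrder g) : Set.InjOn f N := by
  rw [Set.injOn_iff_map_eq_one f N]
  intro g hg hfg
  have : IsOfFinOrder (⟨g, hg⟩ : N) := Submonoid.isOfFinOrder_coe.1 (hker g hfg)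
  exact congrArg Subtype.val this.eq_one'

theorem nonempty_mulEquiv_map_of_injOn (hf : Set.InjOn f N) : Nonempty (N ≃* N.map f) :=
  ⟨.ofBijective (f.subgroupMap N)
    ⟨fun x y hxy => Subtype.ext (hf x.2 y.2 (congrArg Subtype.val hxy)),
      f.subgroupMap_surjective N⟩⟩

end TorsionFree

theorem image_of_free_subgroup_in_quotient_jacobson_general {R S : Type*} [Ring R] [Ring S]
    (p : ℕ) (hp : 0 < p) [CharP R p] (f : R →+* S) (hnil : ∀ x ∈ TwoSidedIdeal.ker f, IsNilpotent x)
    (N : Subgroup Rˣ) [IsMulTorsionFree N] :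
    Set.InjOn (Units.map (f : R →* S)) N ∧ Nonempty (N ≃* N.map (Units.map (f : R →* S))) := by
  have : NeZero p := .of_pos hp
  have injOn : Set.InjOn (Units.map (f : R →* S)) N :=
    injOn_of_isOfFinOrder_of_mem_ker fun _ => isOfFinOrder_of_mem_ker_unitsMap p f hnil
  exact ⟨injOn, nonempty_mulEquiv_map_of_injOn injOn⟩

/-- Let `R` be a ring of characteristic `p > 0` whose Jacobson radical is a nil ideal, and
let `N ≤ Rˣ` be a subgroup which is a non-cyclic free group (free of rank at least 2). Then
the natural map `Rˣ → (R / J(R))ˣ` is injective on `N` and maps `N` onto a non-cyclic free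
subgroup of `(R / J(R))ˣ`. -/
theorem image_of_free_subgroup_in_quotient_jacobson
    {R : Type*} [Ring R] (p : ℕ) (hp : 0 < p) [CharP R p]
    (hnil : ∀ x ∈ TwoSidedIdeal.jacobson (⊥ : TwoSidedIdeal R), IsNilpotent x)
    (N : Subgroup Rˣ)
    (hfree : ∃ (ι : Type) (_ : Nontrivial ι), Nonempty (FreeGroup ι ≃* N)) :
    Set.InjOn (unitsToJacobsonQuotient R) (N : Set Rˣ) ∧
      ∃ (ι : Type) (_ : Nontrivial ι),
        Nonempty (FreeGroup ι ≃* (N.map (unitsToJacobsonQuotient R))) := by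
  obtain ⟨ι, hι, ⟨e⟩⟩ := hfree
  have : IsMulTorsionFree N :=
    Function.Injective.isMulTorsionFree e.symm.toMonoidHom e.symm.injective
  obtain ⟨injOn, ⟨equivMap⟩⟩ := image_of_free_subgroup_in_quotient_jacobson_general p hp
    (TwoSidedIdeal.jacobson (⊥ : TwoSidedIdeal R)).ringCon.mk'
    (by rwa [TwoSidedIdeal.ker_ringCon_mk']) N
  exact ⟨injOn, ι, hι, ⟨e.trans equivMap⟩⟩
end

section
/- Let F be a non-absolute field of characteristic p > 0 and G a locally finite group, and let FG denote the group algebra of G over F. Then the unit group (FG)ˣ contains no non-cyclic free subgroup if and only if the derived subgroup G' = [G,G] is a p-group. -/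
/-- A field is *absolute* (or *locally finite*) if its prime subfield is finite and the
field is algebraic over it. -/
def IsAbsoluteField (F : Type*) [Field F] : Prop :=
  Finite (⊥ : Subfield F) ∧ Algebra.IsAlgebraic (⊥ : Subfield F) F

/-- A group is *locally finite* if every finitely generated subgroup is finite. -/
def IsLocallyFiniteGroup (G : Type*) [Group G] : Prop :=
  ∀ H : Subgroup G, H.FG → Finite H

/-!
Both properties can be tested on finitely generated, hence finite, subgroups `H` of `G`. For finite
`H`, the derived subgroup is a `p`-group exactly when `k[H]` is commutative modulo its Jacobson
radical, `k` being any field of characteristic `p`.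

If `F[H]` is commutative modulo its radical, every element of the derived subgroup of `F[H]ˣ` is
`1 + x` with `x` nilpotent, so this derived subgroup is a `p`-group, unlike that of a free group.

Otherwise some Wedderburn component of `𝔽_p[H]` is a matrix ring over a finite field, of size at
least two, and the matrix units `e_ij` and `e_ji` lift to nilpotent elements `a` and `b` of
`𝔽_p[H]`. Since `F` is not absolute, it has an element `t` of value greater than one for some
valuation, and the units `(1 + t ^ m a)(1 + t ^ m b)` of `F[H]` play ping-pong on the vectors of the
component.
-/

open Function
open scoped MonoidAlgebra commutatorElement Pointwise

universe u

section Groups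

variable {Γ Δ : Type*} [Group Γ] [Group Δ]

/-- The group `Γ` contains a non-cyclic free subgroup, presented as an embedding of the free group
of rank two. -/
def ContainsFreeSubgroup (Γ : Type*) [Group Γ] : Prop :=
  ∃ f : FreeGroup (Fin 2) →* Γ, Injective f

theorem ContainsFreeSubgroup.of_injective (h : ContainsFreeSubgroup Γ) (φ : Γ →* Δ)
    (hφ : Injective φ) : ContainsFreeSubgroup Δ :=
  let ⟨f, hf⟩ := h
  ⟨φ.comp f, hφ.comp hf⟩

theorem containsFreeSubgroup_of_injective_lift {ι : Type*} [Nontrivial ι] {x : ι → Γ}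
    (hx : Injective (FreeGroup.lift x)) : ContainsFreeSubgroup Γ := by
  obtain ⟨i, j, hij⟩ := exists_pair_ne ι
  have hinj : Injective ![i, j] := by simpa [Injective, Fin.forall_fin_two] using ⟨hij, hij.symm⟩
  exact ⟨(FreeGroup.lift x).comp (FreeGroup.map ![i, j]), hx.comp (FreeGroup.map_injective hinj)⟩

theorem isPGroup_commutator_of_injective {p : ℕ} (φ : Γ →* Δ) (hφ : Injective φ)
    (h : IsPGroup p (commutator Δ)) : IsPGroup p (commutator Γ) := by
  have hle : (commutator Γ).map φ ≤ commutator Δ := by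
    rw [map_commutator_eq, commutator_def]
    exact Subgroup.commutator_mono le_top le_top
  exact ((h.to_le hle).of_equiv ((commutator Γ).equivMapOfInjective φ hφ).symm)

theorem not_isPGroup_commutator_freeGroup {p : ℕ} (hp : p ≠ 0) :
    ¬ IsPGroup p (commutator (FreeGroup (Fin 2))) := by
  intro h
  let c : FreeGroup (Fin 2) := ⁅(FreeGroup.of 0 : FreeGroup (Fin 2)), FreeGroup.of 1⁆
  have hc : c ∈ commutator _ :=
    Subgroup.commutator_mem_commutator (Subgroup.mem_top _) (Subgroup.mem_top _)
  obtain ⟨k, hk⟩ := h ⟨c, hc⟩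
  have hc1 : c = 1 :=
    (pow_eq_one_iff_left (pow_ne_zero k hp)).1 (congrArg Subtype.val hk)
  exact absurd hc1 (by decide)

theorem ContainsFreeSubgroup.not_isPGroup_commutator {p : ℕ} (hp : p ≠ 0)
    (h : ContainsFreeSubgroup Γ) : ¬ IsPGroup p (commutator Γ) :=
  let ⟨f, hf⟩ := h
  fun hΓ ↦ not_isPGroup_commutator_freeGroup hp (isPGroup_commutator_of_injective f hf hΓ)

theorem exists_fg_mem_commutator {g : Γ} (hg : g ∈ commutator Γ) :
    ∃ H : Subgroup Γ, H.FG ∧ g ∈ ⁅H, H⁆ := by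
  rw [commutator_eq_closure] at hg
  induction hg using Subgroup.closure_induction with
  | mem x hx =>
    obtain ⟨a, b, rfl⟩ := hx
    exact ⟨Subgroup.closure {a, b}, (Subgroup.fg_iff _).2 ⟨{a, b}, rfl, by simp⟩,
      Subgroup.commutator_mem_commutator (Subgroup.subset_closure (by simp))
        (Subgroup.subset_closure (by simp))⟩
  | one => exact ⟨⊥, Subgroup.FG.bot, one_mem _⟩
  | mul x y _ _ hx hy =>
    obtain ⟨A, hA, hxA⟩ := hx
    obtain ⟨B, hB, hyB⟩ := hy
    exact ⟨A ⊔ B, hA.sup hB, mul_mem (Subgroup.commutator_mono le_sup_left le_sup_left hxA)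
      (Subgroup.commutator_mono le_sup_right le_sup_right hyB)⟩
  | inv x _ hx =>
    obtain ⟨A, hA, hxA⟩ := hx
    exact ⟨A, hA, inv_mem hxA⟩

theorem isPGroup_commutator_iff_forall_fg {p : ℕ} :
    IsPGroup p (commutator Γ) ↔ ∀ H : Subgroup Γ, H.FG → IsPGroup p (commutator H) := by
  refine ⟨fun h H _ ↦ isPGroup_commutator_of_injective H.subtype H.subtype_injective h, ?_⟩
  rintro h ⟨g, hg⟩
  obtain ⟨H, hH, hgH⟩ := exists_fg_mem_commutator hg
  rw [← H.map_subtype_commutator] at hgH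
  obtain ⟨g', hg', rfl⟩ := hgH
  obtain ⟨k, hk⟩ := h H hH ⟨g', hg'⟩
  exact ⟨k, by simpa [Subtype.ext_iff] using hk⟩

end Groups

section FinitelyGeneratedSupport

variable {F G : Type*} [CommRing F] [Group G]

theorem mem_range_unitsMap_of_injective {M N : Type*} [Monoid M] [Monoid N] {φ : M →* N}
    (hφ : Injective φ) {u : Nˣ} (hu : (u : N) ∈ Set.range φ)
    (hu' : ((u⁻¹ : Nˣ) : N) ∈ Set.range φ) : u ∈ (Units.map φ).range := by
  obtain ⟨x, hx⟩ := hu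
  obtain ⟨y, hy⟩ := hu'
  exact ⟨⟨x, y, hφ (by simp [hx, hy]), hφ (by simp [hx, hy])⟩, Units.ext hx⟩

theorem mapDomainRingHom_subtype_injective (H : Subgroup G) :
    Injective (MonoidAlgebra.mapDomainRingHom F H.subtype) :=
  MonoidAlgebra.mapDomain_injective H.subtype_injective

theorem mem_range_mapDomainRingHom_subtype {H : Subgroup G} {x : F[G]}
    (hx : (x.coeff.support : Set G) ⊆ H) :
    x ∈ Set.range (MonoidAlgebra.mapDomainRingHom F H.subtype) :=
  ⟨_, MonoidAlgebra.mapDomain_comapDomain (by simpa using hx) H.subtype_injective⟩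

theorem exists_fg_forall_mem_range_unitsMap {ι : Type*} [Finite ι] (u : ι → F[G]ˣ) :
    ∃ H : Subgroup G, H.FG ∧
      ∀ i, u i ∈ (Units.map (MonoidAlgebra.mapDomainRingHom F H.subtype : F[H] →* F[G])).range := by
  let s : Set G := ⋃ i, (↑(u i : F[G]).coeff.support ∪ ↑((u i)⁻¹ : F[G]ˣ).val.coeff.support)
  have hs : s.Finite :=
    Set.finite_iUnion fun i ↦ (Finset.finite_toSet _).union (Finset.finite_toSet _)
  have hsub (i : ι) := (Set.subset_iUnion _ i).trans (Subgroup.subset_closure (k := s))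
  exact ⟨Subgroup.closure s, (Subgroup.fg_iff _).2 ⟨s, rfl, hs⟩, fun i ↦
    mem_range_unitsMap_of_injective (mapDomainRingHom_subtype_injective _)
      (mem_range_mapDomainRingHom_subtype (Set.subset_union_left.trans (hsub i)))
      (mem_range_mapDomainRingHom_subtype (Set.subset_union_right.trans (hsub i)))⟩

theorem containsFreeSubgroup_units_iff_exists_fg :
    ContainsFreeSubgroup F[G]ˣ ↔ ∃ H : Subgroup G, H.FG ∧ ContainsFreeSubgroup F[H]ˣ := by
  constructor
  · rintro ⟨f, hf⟩
    obtain ⟨H, hH, hmem⟩ := exists_fg_forall_mem_range_unitsMap fun m ↦ f (FreeGroup.of m)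
    choose v hv using hmem
    let ι : F[H]ˣ →* F[G]ˣ := Units.map (MonoidAlgebra.mapDomainRingHom F H.subtype)
    have hcomp : ι.comp (FreeGroup.lift v) = f := by
      ext1 m
      simpa using hv m
    refine ⟨H, hH, FreeGroup.lift v, Injective.of_comp (f := ι) ?_⟩
    rwa [← MonoidHom.coe_comp, hcomp]
  · rintro ⟨H, -, h⟩
    exact h.of_injective _ (Units.map_injective (mapDomainRingHom_subtype_injective H))

end FinitelyGeneratedSupport

section JacobsonRadical

variable {R : Type*} [Ring R] {p : ℕ} [Fact p.Prime]

/-- The ring `R` is commutative modulo its Jacobson radical; for group algebras of finite groups in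
characteristic `p`, this detects whether the derived subgroup is a `p`-group. -/
def IsCommModJacobson (R : Type*) [Ring R] : Prop :=
  ∀ x y : R, x * y - y * x ∈ Ring.jacobson R

theorem isNilpotent_of_mem_jacobson [IsSemiprimaryRing R] {x : R} (hx : x ∈ Ring.jacobson R) :
    IsNilpotent x := by
  obtain ⟨n, hn⟩ := IsSemiprimaryRing.isNilpotent (R := R)
  exact ⟨n, by simpa [hn] using Ideal.pow_mem_pow hx n⟩

theorem exists_pow_prime_pow_eq_one_of_isNilpotent_sub_one [CharP R p] {x : R}
    (hx : IsNilpotent (x - 1)) : ∃ k, x ^ p ^ k = 1 := by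
  obtain ⟨n, hn⟩ := hx
  have hzero : (x - 1) ^ p ^ n = 0 :=
    pow_eq_zero_of_le (Nat.lt_pow_self (Fact.out : p.Prime).one_lt).le hn
  rw [sub_pow_char_pow_of_commute p n (Commute.one_right x), one_pow, sub_eq_zero] at hzero
  exact ⟨n, hzero⟩

theorem IsCommModJacobson.isPGroup_commutator_units [IsSemiprimaryRing R] [CharP R p]
    (h : IsCommModJacobson R) : IsPGroup p (commutator Rˣ) := by
  let π : Rˣ →* (R ⧸ Ring.jacobson R)ˣ := Units.map (Ideal.Quotient.mk (Ring.jacobson R))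
  have hker : commutator Rˣ ≤ π.ker := by
    rw [commutator_def, Subgroup.commutator_le]
    intro u _ v _
    rw [MonoidHom.mem_ker, map_commutatorElement, commutatorElement_eq_one_iff_mul_comm]
    exact Units.ext (Ideal.Quotient.eq.2 (h u v))
  rintro ⟨u, hu⟩
  have hmem : (u : R) - 1 ∈ Ring.jacobson R :=
    Ideal.Quotient.eq.1 (congrArg Units.val (MonoidHom.mem_ker.1 (hker hu)))
  obtain ⟨k, hk⟩ :=
    exists_pow_prime_pow_eq_one_of_isNilpotent_sub_one (p := p) (isNilpotent_of_mem_jacobson hmem)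
  exact ⟨k, Subtype.ext (Units.ext hk)⟩

end JacobsonRadical

section NormalPSubgroup

open MonoidAlgebra (of)

variable {k H V : Type*} [CommRing k] [Group H] [AddCommGroup V] {p : ℕ} [Fact p.Prime]

theorem isCommModJacobson_of_forall_of {M : Type*} [Monoid M]
    (h : ∀ a b : M, of k M a * of k M b - of k M b * of k M a ∈ Ring.jacobson k[M]) :
    IsCommModJacobson k[M] := by
  intro x y
  rw [← Ideal.Quotient.eq]
  induction x using MonoidAlgebra.induction_on with
  | of a =>
    induction y using MonoidAlgebra.induction_on with
    | of b => exact Ideal.Quotient.eq.2 (h a b)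
    | add y z hy hz => rw [mul_add, add_mul, map_add, map_add, hy, hz]
    | smul r y hy =>
      rw [mul_smul_comm, smul_mul_assoc, Algebra.smul_def, Algebra.smul_def, map_mul, hy, ← map_mul]
  | add x z hx hz => rw [mul_add, add_mul, map_add, map_add, hx, hz]
  | smul r x hx =>
    rw [mul_smul_comm, smul_mul_assoc, Algebra.smul_def, Algebra.smul_def, map_mul, hx, ← map_mul]

theorem exists_ne_zero_forall_of_smul_eq_self [Finite H] (hH : IsPGroup p H) (V : Type*)
    [AddCommGroup V] [Module (ZMod p)[H] V] [Nontrivial V] :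
    ∃ v : V, v ≠ 0 ∧ ∀ h : H, of (ZMod p) H h • v = v := by
  obtain ⟨x, hx⟩ := exists_ne (0 : V)
  let S := Submodule.span (ZMod p)[H] {x}
  have : Finite (ZMod p)[H] := Module.finite_of_finite (ZMod p)
  have : Finite S := Module.finite_of_finite (ZMod p)[H]
  let y : S := ⟨x, Submodule.mem_span_singleton_self x⟩
  have hy : p • y = 0 := by
    rw [← Nat.cast_smul_eq_nsmul (ZMod p)[H], ← map_natCast (algebraMap (ZMod p) (ZMod p)[H]),
      CharP.cast_eq_zero, map_zero, zero_smul]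
  have hcard : p ∣ Nat.card S :=
    (addOrderOf_eq_prime hy fun h ↦ hx (congrArg Subtype.val h)).symm.dvd.trans
      (addOrderOf_dvd_natCard y)
  let _ : MulAction H S := MulAction.compHom S (of (ZMod p) H)
  obtain ⟨v, hv, hv0⟩ := hH.exists_fixed_point_of_prime_dvd_card_of_fixed_point S hcard
    (a := 0) fun h ↦ smul_zero (of (ZMod p) H h)
  exact ⟨v, fun h ↦ hv0 (Subtype.ext h.symm), fun h ↦ congrArg Subtype.val (hv h)⟩

theorem of_smul_smul_eq_smul_of_normal [Module k[H] V] {N : Subgroup H} [hN : N.Normal] {v : V}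
    (hv : ∀ g ∈ N, of k H g • v = v) (c : k[H]) : ∀ g ∈ N, of k H g • c • v = c • v := by
  intro g hg
  induction c using MonoidAlgebra.induction_on with
  | of h =>
    have hconj : g * h = h * (h⁻¹ * g * h⁻¹⁻¹) := by group
    rw [smul_smul, ← map_mul, hconj, map_mul, mul_smul, hv _ (hN.conj_mem g hg h⁻¹)]
  | add a b ha hb => rw [add_smul, smul_add, ha, hb]
  | smul r a ha =>
    rw [smul_smul, mul_smul_comm, Algebra.smul_def, Algebra.smul_def, mul_smul, mul_smul, mul_smul,
      ha]

variable [CharP k p] {N : Subgroup H} [N.Normal] [Finite N]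

theorem of_smul_eq_self_of_isSimpleModule [Module k[H] V] [IsSimpleModule k[H] V]
    (hN : IsPGroup p N) {g : H} (hg : g ∈ N) (v : V) : of k H g • v = v := by
  have := IsSimpleModule.nontrivial k[H] V
  let _ : Module (ZMod p)[N] V := Module.compHom V
    ((MonoidAlgebra.mapDomainRingHom k N.subtype).comp
      (MonoidAlgebra.mapRingHom N (ZMod.castHom dvd_rfl k)))
  obtain ⟨x, hx0, hx⟩ := exists_ne_zero_forall_of_smul_eq_self hN V
  have hxN : ∀ g ∈ N, of k H g • x = x := by
    intro g hg
    have hgx : MonoidAlgebra.mapDomainRingHom k N.subtype (MonoidAlgebra.mapRingHom N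
      (ZMod.castHom dvd_rfl k) (of (ZMod p) N ⟨g, hg⟩)) • x = x := hx ⟨g, hg⟩
    simpa using hgx
  obtain ⟨c, rfl⟩ := IsSimpleModule.toSpanSingleton_surjective k[H] hx0 v
  exact of_smul_smul_eq_smul_of_normal hxN c g hg

theorem of_sub_one_mem_jacobson (hN : IsPGroup p N) {g : H} (hg : g ∈ N) :
    of k H g - 1 ∈ Ring.jacobson k[H] := by
  rw [Ring.jacobson_eq_sInf_isMaximal, Submodule.mem_sInf]
  intro m hm
  have : IsSimpleModule k[H] (k[H] ⧸ m) :=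
    isSimpleModule_iff_isCoatom.2 (Ideal.isMaximal_def.1 hm)
  have hfix : of k H g • (Submodule.Quotient.mk 1 : k[H] ⧸ m) = Submodule.Quotient.mk 1 :=
    of_smul_eq_self_of_isSimpleModule hN hg _
  rwa [← Submodule.Quotient.mk_smul, Submodule.Quotient.eq, smul_eq_mul, mul_one] at hfix

theorem isCommModJacobson_of_isPGroup_commutator [Finite (commutator H)]
    (hH : IsPGroup p (commutator H)) : IsCommModJacobson k[H] := by
  refine isCommModJacobson_of_forall_of fun a b ↦ ?_
  have hab : a * b = b * a * ⁅a⁻¹, b⁻¹⁆ := by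
    rw [commutatorElement_def]
    group
  have hmem : of k H ⁅a⁻¹, b⁻¹⁆ - 1 ∈ Ring.jacobson k[H] := of_sub_one_mem_jacobson hH
    (Subgroup.commutator_mem_commutator (Subgroup.mem_top _) (Subgroup.mem_top _))
  have := Ideal.mul_mem_left _ (of k H (b * a)) hmem
  rwa [mul_sub, mul_one, ← map_mul, ← hab, map_mul, map_mul] at this

end NormalPSubgroup

section FiniteRings

theorem exists_pow_mul_pow_eq_self {M : Type*} [Monoid M] [Finite M] (a : M) :
    ∃ m d : ℕ, 0 < d ∧ a ^ m * a ^ d = a ^ m := by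
  obtain ⟨m, n, hne, heq⟩ := Finite.exists_ne_map_eq_of_infinite fun k : ℕ ↦ a ^ k
  wlog hlt : m < n generalizing m n
  · exact this n m hne.symm heq.symm (by omega)
  exact ⟨m, n - m, by omega, by rw [← pow_add, Nat.add_sub_cancel' hlt.le]; exact heq.symm⟩

theorem exists_isNilpotent_map_eq {A B : Type*} [Ring A] [Finite A] [Ring B] (f : A →+* B) {a : A}
    (ha : IsNilpotent (f a)) : ∃ a', IsNilpotent a' ∧ f a' = f a := by
  obtain ⟨r, hr⟩ := ha
  obtain ⟨m, d, hd, hper⟩ := exists_pow_mul_pow_eq_self a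
  have hper' (r : ℕ) : a ^ m * (a ^ d) ^ r = a ^ m := by
    induction r with
    | zero => simp
    | succ r ih => rw [pow_succ, ← mul_assoc, ih, hper]
  -- The factor `1 - (a ^ d) ^ r` kills the periodic tail of the powers of `a` and maps to `1`.
  refine ⟨a * (1 - (a ^ d) ^ r), ⟨m + 1, ?_⟩, ?_⟩
  · have hcomm : Commute a (1 - (a ^ d) ^ r) :=
      (Commute.one_right a).sub_right (((Commute.refl a).pow_right d).pow_right r)
    have hz : a ^ m * (1 - (a ^ d) ^ r) = 0 := by rw [mul_sub, mul_one, hper', sub_self]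
    rw [hcomm.mul_pow, pow_succ' a, mul_assoc, pow_succ' (1 - _), ← mul_assoc (a ^ m), hz]
    simp
  · have : (f a ^ d) ^ r = 0 := by rw [← pow_mul, mul_comm, pow_mul, hr, zero_pow hd.ne']
    simp [this]

theorem matrix_mul_comm_of_subsingleton {n R : Type*} [Fintype n] [Subsingleton n]
    [NonUnitalNonAssocCommSemiring R] (x y : Matrix n n R) : x * y = y * x := by
  ext i j
  simp only [Matrix.mul_apply]
  refine Finset.sum_congr rfl fun l _ ↦ ?_
  rw [Subsingleton.elim l i, Subsingleton.elim j i, mul_comm]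

theorem exists_surjective_matrix_of_not_isCommModJacobson {A : Type u} [Ring A] [Finite A]
    (h : ¬ IsCommModJacobson A) :
    ∃ (k : Type u) (_ : Field k) (_ : Finite k) (n : ℕ) (_ : Nontrivial (Fin n))
      (ψ : A →+* Matrix (Fin n) (Fin n) k), Surjective ψ := by
  obtain ⟨m, D, d, _, hd, ⟨e⟩⟩ :=
    IsSemisimpleRing.exists_ringEquiv_pi_matrix_divisionRing (A ⧸ Ring.jacobson A)
  let ψ (l : Fin m) : A →+* Matrix (Fin (d l)) (Fin (d l)) (D l) :=
    ((Pi.evalRingHom (fun l ↦ Matrix (Fin (d l)) (Fin (d l)) (D l)) l).comp e.toRingHom).comp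
      (Ideal.Quotient.mk (Ring.jacobson A))
  have hψ (l : Fin m) : Surjective (ψ l) :=
    ((surjective_eval l).comp e.surjective).comp Ideal.Quotient.mk_surjective
  have hD (l : Fin m) : Finite (D l) := by
    have : Finite (Matrix (Fin (d l)) (Fin (d l)) (D l)) := Finite.of_surjective _ (hψ l)
    exact Finite.of_injective _ fun _ _ ↦ (Matrix.scalar_inj (n := Fin (d l))).1
  by_contra! hsmall
  refine h fun x y ↦ ?_
  rw [← Ideal.Quotient.eq]
  refine e.injective (funext fun l ↦ ?_)
  let _ : Field (D l) := littleWedderburn (D l)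
  have : Subsingleton (Fin (d l)) := by
    by_contra hnt
    exact hsmall (D l) (littleWedderburn (D l)) (hD l) (d l)
      (not_subsingleton_iff_nontrivial.1 hnt) (ψ l) (hψ l)
  rw [map_mul, map_mul, map_mul, map_mul]
  exact matrix_mul_comm_of_subsingleton _ _

theorem exists_isNilpotent_map_eq_single {A n k : Type*} [Ring A] [Finite A] [Fintype n]
    [DecidableEq n] [Ring k] {ψ : A →+* Matrix n n k} (hψ : Surjective ψ) {i j : n} (hij : i ≠ j) :
    ∃ a, IsNilpotent a ∧ ψ a = Matrix.single i j 1 := by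
  obtain ⟨a, ha⟩ := hψ (Matrix.single i j 1)
  have hsq : ψ a ^ 2 = 0 := by rw [ha, sq, Matrix.single_mul_single_of_ne _ _ _ _ hij.symm]
  rw [← ha]
  exact exists_isNilpotent_map_eq ψ ⟨2, hsq⟩

end FiniteRings

section PingPong

variable {K Γ₀ : Type*} [Field K] [LinearOrderedCommGroupWithZero Γ₀] {w : Valuation K Γ₀}
  {c d : K} {q : K × K}

/-- The action on `K²` of the product of elementary matrices `!![1, c; 0, 1] * !![1, 0; c, 1]`. -/
def doubleShear (c : K) (q : K × K) : K × K :=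
  (q.1 + c * (q.2 + c * q.1), q.2 + c * q.1)

/-- The vectors of `K²` whose slope `q.1 / q.2` is at `w`-distance less than `1` from `c`: the
attracting set of `doubleShear c` in the ping-pong argument. -/
def attractingSet (w : Valuation K Γ₀) (c : K) : Set (K × K) :=
  {q | w (q.1 - c * q.2) < w q.2}

/-- The nonzero vectors of `K²` whose slope `q.2 / q.1` is at `w`-distance at most `1` from `-c`:
the repelling set of `doubleShear c` in the ping-pong argument. -/
def repellingSet (w : Valuation K Γ₀) (c : K) : Set (K × K) :=
  {q | q.1 ≠ 0 ∧ w (q.2 + c * q.1) ≤ w q.1}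

theorem doubleShear_eq_zero_iff : doubleShear c q = 0 ↔ q = 0 := by
  constructor
  · intro h
    obtain ⟨h₁, h₂⟩ := Prod.ext_iff.1 h
    simp only [doubleShear, Prod.fst_zero, Prod.snd_zero] at h₁ h₂
    rw [h₂, mul_zero, add_zero] at h₁
    rw [h₁, mul_zero, add_zero] at h₂
    exact Prod.ext h₁ h₂
  · rintro rfl
    simp [doubleShear]

theorem mulVec_transvection_mul_transvection {n : Type*} [Fintype n] [DecidableEq n] {i j : n}
    (hij : i ≠ j) (c : K) (v : n → K) :
    let g := Matrix.transvection i j c * Matrix.transvection j i c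
    (g.mulVec v i, g.mulVec v j) = doubleShear c (v i, v j) := by
  simp [← Matrix.mulVec_mulVec, Matrix.transvection, Matrix.add_mulVec, Matrix.single_mulVec, hij,
    hij.symm, doubleShear]

theorem doubleShear_mem_attractingSet (hq : q ≠ 0) (hqc : q ∉ repellingSet w c) :
    doubleShear c q ∈ attractingSet w c := by
  have hlt : w q.1 < w (q.2 + c * q.1) := by
    by_contra! hle
    refine hqc ⟨fun h₁ ↦ hq (Prod.ext h₁ ?_), hle⟩
    simpa [h₁] using hle
  simpa [doubleShear, attractingSet] using hlt

theorem valuation_lt_valuation_mul {x : K} (hc : 1 < w c) (hx : x ≠ 0) : w x < w (c * x) := by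
  rw [map_mul]
  exact lt_mul_of_one_lt_left (w.pos_iff.2 hx) hc

theorem snd_ne_zero_of_mem_attractingSet (hq : q ∈ attractingSet w c) : q.2 ≠ 0 :=
  w.ne_zero_iff.1 (zero_le.trans_lt hq).ne'

theorem valuation_snd_lt_of_mem_attractingSet (hc : 1 < w c) (hq : q ∈ attractingSet w c) :
    w q.2 < w q.1 := by
  have hlt := valuation_lt_valuation_mul hc (snd_ne_zero_of_mem_attractingSet hq)
  have heq := w.map_add_eq_of_lt_left (hq.trans hlt)
  rw [add_sub_cancel] at heq
  rwa [heq]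

theorem valuation_fst_lt_of_mem_repellingSet (hc : 1 < w c) (hq : q ∈ repellingSet w c) :
    w q.1 < w q.2 := by
  have hlt := valuation_lt_valuation_mul hc hq.1
  have heq := w.map_sub_eq_of_lt_right (hq.2.trans_lt hlt)
  rw [add_sub_cancel_right] at heq
  rwa [heq]

theorem disjoint_attractingSet_repellingSet (hc : 1 < w c) (hd : 1 < w d) :
    Disjoint (attractingSet w c) (repellingSet w d) :=
  Set.disjoint_left.2 fun _ hqc hqd ↦ (valuation_snd_lt_of_mem_attractingSet hc hqc).asymm
    (valuation_fst_lt_of_mem_repellingSet hd hqd)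

theorem disjoint_attractingSet (hcd : 1 < w (c - d)) :
    Disjoint (attractingSet w c) (attractingSet w d) := by
  refine Set.disjoint_left.2 fun q hqc hqd ↦ ?_
  have hlt := valuation_lt_valuation_mul hcd (snd_ne_zero_of_mem_attractingSet hqc)
  have hgt : w ((c - d) * q.2) < w q.2 := by
    convert w.map_sub_lt hqd hqc using 2
    ring
  exact hlt.asymm hgt

theorem disjoint_repellingSet (hcd : 1 < w (c - d)) :
    Disjoint (repellingSet w c) (repellingSet w d) := by
  refine Set.disjoint_left.2 fun q hqc hqd ↦ ?_
  have hlt := valuation_lt_valuation_mul hcd hqc.1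
  have hle : w ((c - d) * q.1) ≤ w q.1 := by
    convert w.map_sub_le hqc.2 hqd.2 using 2
    ring
  exact hlt.not_ge hle

theorem one_lt_valuation_pow_sub_pow {t : K} (ht : 1 < w t) {m n : ℕ} (hm : m ≠ 0) (hn : n ≠ 0)
    (hmn : m ≠ n) : 1 < w (t ^ m - t ^ n) := by
  wlog hlt : n < m generalizing m n
  · rw [w.map_sub_swap]
    exact this hn hm hmn.symm (by omega)
  have hval : w (t ^ n) < w (t ^ m) := by
    rw [map_pow, map_pow]
    exact pow_lt_pow_right₀ ht hlt
  rw [w.map_sub_eq_of_lt_left hval, map_pow]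
  exact one_lt_pow₀ ht hm

theorem injective_lift_of_doubleShear {Γ ι : Type u} {X : Type*} [Group Γ] [MulAction Γ X]
    [Nontrivial ι] {x : ι → Γ} {f : ι → K} {coord : X → K × K} (hf : ∀ m, 1 < w (f m))
    (hff : Pairwise fun m n ↦ 1 < w (f m - f n)) (hcoord : ∀ v, coord v ≠ 0)
    (hrange : ∀ q ≠ 0, q ∈ Set.range coord)
    (hx : ∀ m v, coord (x m • v) = doubleShear (f m) (coord v)) :
    Injective (FreeGroup.lift x) := by
  have hattract (m : ι) (v : X) (hv : coord v ∉ repellingSet w (f m)) :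
      coord (x m • v) ∈ attractingSet w (f m) :=
    hx m v ▸ doubleShear_mem_attractingSet (hcoord v) hv
  refine FreeGroup.injective_lift_of_ping_pong x (fun m ↦ coord ⁻¹' attractingSet w (f m))
    (fun m ↦ coord ⁻¹' repellingSet w (f m)) (fun m ↦ ?_)
    (fun m n hmn ↦ (disjoint_attractingSet (hff hmn)).preimage _)
    (fun m n hmn ↦ (disjoint_repellingSet (hff hmn)).preimage _)
    (fun m n ↦ (disjoint_attractingSet_repellingSet (hf m) (hf n)).preimage _) ?_ ?_
  · obtain ⟨v, hv⟩ := hrange (f m, 1) (by simp)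
    exact ⟨v, by simp [attractingSet, hv]⟩
  · rintro m _ ⟨v, hv, rfl⟩
    exact hattract m v hv
  · rintro m _ ⟨v, hv, rfl⟩
    by_contra h
    exact hv (by simpa using hattract m _ h)

theorem containsFreeSubgroup_of_doubleShear {Γ X : Type*} [Group Γ] [MulAction Γ X] {t : K}
    (ht : 1 < w t) {coord : X → K × K} (hcoord : Surjective coord) {x : ℕ → Γ}
    (hx : ∀ m v, coord (x m • v) = doubleShear (t ^ (m + 1)) (coord v)) :
    ContainsFreeSubgroup Γ := by
  let S := MulAction.stabilizer Γ {v | coord v ≠ 0}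
  have hxS (m : ℕ) : x m ∈ S := by
    rw [MulAction.mem_stabilizer_set]
    intro v
    simp only [Set.mem_ofPred_eq, hx, ne_eq, doubleShear_eq_zero_iff]
  -- `ULift` because the ping-pong lemma wants the index type in the universe of the group.
  let y : ULift ℕ → S := fun m ↦ ⟨x m.down, hxS m.down⟩
  have hy : Injective (FreeGroup.lift y) := by
    refine injective_lift_of_doubleShear (w := w) (f := fun m ↦ t ^ (m.down + 1))
      (coord := fun v : {v | coord v ≠ 0} ↦ coord v) (fun m ↦ ?_) (fun m n hmn ↦ ?_)
      Subtype.prop (fun q hq ↦ ?_) fun m v ↦ hx m.down v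
    · rw [map_pow]
      exact one_lt_pow₀ ht m.down.succ_ne_zero
    · exact one_lt_valuation_pow_sub_pow ht m.down.succ_ne_zero n.down.succ_ne_zero
        fun h ↦ hmn (ULift.ext _ _ (Nat.succ_injective h))
    · obtain ⟨v, rfl⟩ := hcoord q
      exact ⟨⟨v, hq⟩, rfl⟩
  exact (containsFreeSubgroup_of_injective_lift hy).of_injective S.subtype S.subtype_injective

end PingPong

section Fields

theorem exists_not_isIntegral_int_of_not_isAbsoluteField {F : Type*} [Field F] (p : ℕ)
    [Fact p.Prime] [CharP F p] (hF : ¬ IsAbsoluteField F) : ∃ t : F, ¬ IsIntegral ℤ t := by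
  have hprime : Finite (⊥ : Subfield F) :=
    let P := (ZMod.castHom (dvd_refl p) F).fieldRange
    have : Finite P := Set.finite_range (ZMod.castHom (dvd_refl p) F)
    Finite.of_injective _ (Subfield.inclusion (bot_le : ⊥ ≤ P)).injective
  by_contra! hint
  exact hF ⟨hprime, ⟨fun t ↦ ((hint t).tower_top (A := (⊥ : Subfield F))).isAlgebraic⟩⟩

theorem exists_one_lt_valuation_of_not_isIntegral_int {K : Type*} [Field K] {t : K}
    (ht : ¬ IsIntegral ℤ t) : ∃ A : ValuationSubring K, 1 < A.valuation t := by
  by_contra! hle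
  have hprime : Algebra.IsIntegral ℤ (Subring.closure (∅ : Set K)) := by
    refine ⟨fun ⟨a, ha⟩ ↦ ?_⟩
    rw [Subring.closure_empty, Subring.mem_bot] at ha
    obtain ⟨n, rfl⟩ := ha
    exact isIntegral_algebraMap (R := ℤ) (A := Subring.closure (∅ : Set K)) (x := n)
  -- The valuation subrings of `K` intersect in the integral closure of the prime ring.
  have htint : IsIntegral (Subring.closure (∅ : Set K)) t := by
    have hmem : t ∈ ⨅ V : {V : ValuationSubring K // (∅ : Set K) ⊆ V.toSubring}, V.1.toSubring :=
      Subring.mem_iInf.2 fun V ↦ (V.1.valuation_le_one_iff t).1 (hle V.1)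
    rwa [iInf_valuationSubring_superset] at hmem
  exact ht (isIntegral_trans t htint)

theorem nonempty_ringHom_of_finite_of_isAlgClosed (p : ℕ) [Fact p.Prime] (k K : Type*) [Field k]
    [Finite k] [CharP k p] [Field K] [IsAlgClosed K] [CharP K p] : Nonempty (k →+* K) :=
  let _ : Algebra (ZMod p) k := ZMod.algebra k p
  let _ : Algebra (ZMod p) K := ZMod.algebra K p
  ⟨(IsAlgClosed.lift : k →ₐ[ZMod p] K).toRingHom⟩

theorem charP_of_ringHom_matrix {p : ℕ} [Fact p.Prime] {A n k : Type*} [Ring A] [CharP A p]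
    [Fintype n] [DecidableEq n] [Nonempty n] [Field k] (ψ : A →+* Matrix n n k) : CharP k p := by
  rw [CharP.charP_iff_prime_eq_zero Fact.out]
  refine (Matrix.scalar_inj (n := n)).1 ?_
  rw [map_natCast, ← map_natCast ψ, CharP.cast_eq_zero, map_zero, map_zero]

end Fields

section GroupAlgebra

theorem exists_algHom_map_mapRingHom_eq {p : ℕ} {F H S : Type*} [CommRing F] [CharP F p] [Monoid H]
    [Ring S] [Algebra F S] (Θ : (ZMod p)[H] →+* S) :
    ∃ Φ : F[H] →ₐ[F] S, ∀ x, Φ (MonoidAlgebra.mapRingHom H (ZMod.castHom dvd_rfl F) x) = Θ x := by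
  let Φ : F[H] →ₐ[F] S :=
    MonoidAlgebra.lift F S H (Θ.toMonoidHom.comp (MonoidAlgebra.of (ZMod p) H))
  have hcomp : Φ.toRingHom.comp (MonoidAlgebra.mapRingHom H (ZMod.castHom dvd_rfl F)) = Θ := by
    refine MonoidAlgebra.ringHom_ext' (Subsingleton.elim _ _) ?_
    ext1 g
    simp [Φ]
  exact ⟨Φ, fun x ↦ congrArg (· x) hcomp⟩

theorem containsFreeSubgroup_units_of_map_eq_single {F S K n : Type*} [Field F] [Ring S]
    [Algebra F S] [Field K] [Algebra F K] [Fintype n] [DecidableEq n]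
    (Φ : S →ₐ[F] Matrix n n K) {i j : n} (hij : i ≠ j) {a b : S}
    (ha : IsNilpotent a) (hΦa : Φ a = Matrix.single i j 1)
    (hb : IsNilpotent b) (hΦb : Φ b = Matrix.single j i 1) {t : F} (ht : ¬ IsIntegral ℤ t) :
    ContainsFreeSubgroup Sˣ := by
  have htK : ¬ IsIntegral ℤ (algebraMap F K t) := by
    rwa [isIntegral_algebraMap_iff (algebraMap F K).injective]
  obtain ⟨A, hA⟩ := exists_one_lt_valuation_of_not_isIntegral_int htK
  let x (m : ℕ) : Sˣ := (ha.smul (t ^ (m + 1))).isUnit_one_add.unit *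
    (hb.smul (t ^ (m + 1))).isUnit_one_add.unit
  let _ : Module S (n → K) :=
    Module.compHom (n → K) ((Matrix.toLinAlgEquiv' (R := K) (n := n)).toRingHom.comp Φ.toRingHom)
  have hx (m : ℕ) (v : n → K) : ((x m • v) i, (x m • v) j) =
      doubleShear (algebraMap F K t ^ (m + 1)) (v i, v j) := by
    have hΦx : Φ (x m) = Matrix.transvection i j (algebraMap F K t ^ (m + 1)) *
        Matrix.transvection j i (algebraMap F K t ^ (m + 1)) := by
      rw [← map_pow, Algebra.algebraMap_eq_smul_one]
      simp [x, hΦa, hΦb, Matrix.transvection]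
    change ((Φ (x m)).mulVec v i, (Φ (x m)).mulVec v j) = _
    rw [hΦx, mulVec_transvection_mul_transvection hij]
  refine containsFreeSubgroup_of_doubleShear hA (coord := fun v : n → K ↦ (v i, v j))
    (fun q ↦ ⟨update (fun _ ↦ q.2) i q.1, ?_⟩) hx
  simp [hij.symm]

variable {p : ℕ} [Fact p.Prime] {F H : Type*} [Field F] [CharP F p] [Group H] [Finite H]

theorem containsFreeSubgroup_units_of_not_isCommModJacobson (hF : ¬ IsAbsoluteField F)
    (hH : ¬ IsCommModJacobson (ZMod p)[H]) : ContainsFreeSubgroup F[H]ˣ := by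
  have : Finite (ZMod p)[H] := Module.finite_of_finite (ZMod p)
  have : CharP (ZMod p)[H] p := charP_of_injective_algebraMap (algebraMap (ZMod p) _).injective p
  obtain ⟨k, _, _, n, _, ψ, hψ⟩ := exists_surjective_matrix_of_not_isCommModJacobson hH
  have : CharP k p := charP_of_ringHom_matrix ψ
  let K := AlgebraicClosure F
  have : CharP K p := charP_of_injective_algebraMap (algebraMap F K).injective p
  obtain ⟨σ⟩ := nonempty_ringHom_of_finite_of_isAlgClosed p k K
  obtain ⟨Φ, hΦ⟩ := exists_algHom_map_mapRingHom_eq (F := F) (σ.mapMatrix.comp ψ)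
  have hlift (i j : Fin n) (hij : i ≠ j) :
      ∃ a : F[H], IsNilpotent a ∧ Φ a = Matrix.single i j 1 := by
    obtain ⟨a, ha, hψa⟩ := exists_isNilpotent_map_eq_single hψ hij
    exact ⟨_, ha.map (MonoidAlgebra.mapRingHom H (ZMod.castHom dvd_rfl F)), by simp [hΦ, hψa]⟩
  obtain ⟨i, j, hij⟩ := exists_pair_ne (Fin n)
  obtain ⟨a, ha, hΦa⟩ := hlift i j hij
  obtain ⟨b, hb, hΦb⟩ := hlift j i hij.symm
  obtain ⟨t, ht⟩ := exists_not_isIntegral_int_of_not_isAbsoluteField p hF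
  exact containsFreeSubgroup_units_of_map_eq_single Φ hij ha hΦa hb hΦb ht

theorem isPGroup_commutator_of_isCommModJacobson (hH : IsCommModJacobson (ZMod p)[H]) :
    IsPGroup p (commutator H) := by
  have : Finite (ZMod p)[H] := Module.finite_of_finite (ZMod p)
  have : CharP (ZMod p)[H] p := charP_of_injective_algebraMap (algebraMap (ZMod p) _).injective p
  exact isPGroup_commutator_of_injective (MonoidAlgebra.of (ZMod p) H).toHomUnits
    (fun g h hgh ↦ MonoidAlgebra.of_injective (congrArg Units.val hgh))
    hH.isPGroup_commutator_units

theorem not_containsFreeSubgroup_units_iff_of_finite (hF : ¬ IsAbsoluteField F) :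
    ¬ ContainsFreeSubgroup F[H]ˣ ↔ IsPGroup p (commutator H) := by
  constructor
  · intro hfree
    by_contra hH
    exact hfree (containsFreeSubgroup_units_of_not_isCommModJacobson (p := p) hF
      (mt isPGroup_commutator_of_isCommModJacobson hH))
  · intro hH hfree
    have : IsArtinianRing F[H] := IsArtinianRing.of_finite F _
    have : CharP F[H] p := charP_of_injective_algebraMap (algebraMap F _).injective p
    exact hfree.not_isPGroup_commutator (NeZero.ne p)
      (isCommModJacobson_of_isPGroup_commutator hH).isPGroup_commutator_units

end GroupAlgebra

/-- Let `F` be a non-absolute field of characteristic `p > 0` and `G` a locally finite group.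
Then the unit group of the group algebra `F[G]` contains no non-cyclic free subgroup if and
only if the derived subgroup `[G, G]` is a `p`-group. -/
theorem no_free_subgroup_iff_commutator_isPGroup
    {F G : Type*} [Field F] [Group G] (p : ℕ) (hp : 0 < p) [CharP F p]
    (hF : ¬ IsAbsoluteField F) (hG : IsLocallyFiniteGroup G) :
    (¬ ∃ f : FreeGroup (Fin 2) →* (MonoidAlgebra F G)ˣ, Function.Injective f) ↔
      IsPGroup p (commutator G) := by
  have : NeZero p := ⟨hp.ne'⟩
  have : Fact p.Prime := CharP.char_is_prime_of_pos F p
  have hfinite (H : Subgroup G) (hH : H.FG) :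
      ¬ ContainsFreeSubgroup F[H]ˣ ↔ IsPGroup p (commutator H) :=
    have := hG H hH
    not_containsFreeSubgroup_units_iff_of_finite hF
  calc
    ¬ ContainsFreeSubgroup F[G]ˣ ↔ ∀ H : Subgroup G, H.FG → ¬ ContainsFreeSubgroup F[H]ˣ := by
      rw [containsFreeSubgroup_units_iff_exists_fg]
      simp only [not_exists, not_and]
    _ ↔ ∀ H : Subgroup G, H.FG → IsPGroup p (commutator H) := forall₂_congr hfinite
    _ ↔ IsPGroup p (commutator G) := isPGroup_commutator_iff_forall_fg.symm
end
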